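/- Let G ⊆ ℝ^n be a connected definable group in an o-minimal expansion of the real ordered field, regarded as a topological group with the subspace topology. Then every continuous path σ : [0,1] → G is homotopic relative to its endpoints to a continuous path σ' : [0,1] → G whose graph is a definable subset of ℝ^{1+n}. -/

import Mathlib

open FirstOrder

/-- A set of reals is a finite union of singletons and open intervals (possibly unbounded). -/
def IsFiniteUnionOfPointsAndIntervals (s : Set ℝ) : Prop :=
  ∃ (k : ℕ) (f : Fin k → Set ℝ),
    (∀ i, (∃ a, f i = {a}) ∨ (∃ a b, f i = Set.Ioo a b) ∨
      (∃ a, f i = Set.Iio a) ∨ (∃ a, f i = Set.Ioi a) ∨ f i = Set.univ) ∧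
    s = ⋃ i, f i

/-- An o-minimal expansion of the real ordered field: a first-order language together with
an interpretation on `ℝ` in which the graphs of addition and multiplication and the order
relation are definable without parameters, and every subset of `ℝ` definable with parameters
is a finite union of singletons and open intervals. -/
structure OMinimalRealExpansion : Type 1 where
  L : FirstOrder.Language.{0, 0}
  str : L.Structure ℝ
  definable_add : @Set.Definable ℝ (∅ : Set ℝ) L str _ {x : Fin 3 → ℝ | x 0 + x 1 = x 2}
  definable_mul : @Set.Definable ℝ (∅ : Set ℝ) L str _ {x : Fin 3 → ℝ | x 0 * x 1 = x 2}
  definable_lt : @Set.Definable ℝ (∅ : Set ℝ) L str _ {x : Fin 2 → ℝ | x 0 < x 1}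
  o_minimal : ∀ s : Set ℝ,
    @Set.Definable ℝ (Set.univ : Set ℝ) L str _ {x : Fin 1 → ℝ | x 0 ∈ s} →
    IsFiniteUnionOfPointsAndIntervals s

/-- `S.DefSet s` : the set `s` is definable with parameters in the o-minimal structure `S`. -/
def OMinimalRealExpansion.DefSet (S : OMinimalRealExpansion) {α : Type} (s : Set (α → ℝ)) :
    Prop :=
  @Set.Definable ℝ (Set.univ : Set ℝ) S.L S.str α s

/-- A definable group in an o-minimal expansion of the reals: a definable subset of `ℝⁿ`
together with a group structure whose multiplication has definable graph.  It is regarded as a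
topological group with the subspace topology from `ℝⁿ`. -/
def IsDefinableGroup (S : OMinimalRealExpansion) {n : ℕ} (c : Set (Fin n → ℝ)) [Group c] :
    Prop :=
  S.DefSet {x : Fin n → ℝ | x ∈ c} ∧
  S.DefSet {x : Fin 3 × Fin n → ℝ | ∃ a b : c,
    ((a : Fin n → ℝ) = fun j => x (0, j)) ∧ ((b : Fin n → ℝ) = fun j => x (1, j)) ∧
    ((↑(a * b) : Fin n → ℝ) = fun j => x (2, j))}

/-- A topological group (in particular, a Lie group) is Lie-isomorphic to a definable group if
there is a group isomorphism with a definable group in some o-minimal expansion of the real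
ordered field which is also a homeomorphism. -/
def IsLieIsomorphicToDefinableGroup (G : Type*) [Group G] [TopologicalSpace G] : Prop :=
  ∃ (S : OMinimalRealExpansion) (n : ℕ) (c : Set (Fin n → ℝ)) (grp : Group c),
    letI := grp
    IsDefinableGroup S c ∧ ∃ e : G ≃* c, Continuous e ∧ Continuous e.symm

/-- A subgroup of `GL_m(ℝ)` which is a definable subset of the matrix space `M_m(ℝ)` in the
o-minimal structure `S`. -/
def IsDefinableSubgroupOfGL (S : OMinimalRealExpansion) (m : ℕ)
    (G₁ : Subgroup (GL (Fin m) ℝ)) : Prop :=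
  S.DefSet {x : Fin m × Fin m → ℝ | ∃ g : GL (Fin m) ℝ, g ∈ G₁ ∧
    ∀ p : Fin m × Fin m, (g : Matrix (Fin m) (Fin m) ℝ) p.1 p.2 = x p}

/-- A topological group is Lie-isomorphic to a definably linear group if there are `m`, an
o-minimal expansion of the real ordered field, a subgroup `G₁` of `GL_m(ℝ)` which is a
definable subset of `M_m(ℝ)`, and a group isomorphism onto `G₁` that is a homeomorphism. -/
def IsLieIsomorphicToDefinablyLinearGroup (G : Type*) [Group G] [TopologicalSpace G] : Prop :=
  ∃ (m : ℕ) (S : OMinimalRealExpansion) (G₁ : Subgroup (GL (Fin m) ℝ)),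
    IsDefinableSubgroupOfGL S m G₁ ∧ ∃ e : G ≃* G₁, Continuous e ∧ Continuous e.symm

section toolkit
open Set

namespace OM

/-- Definable predicates. -/
def DP (S : OMinimalRealExpansion) {α : Type} (P : (α → ℝ) → Prop) : Prop :=
  S.DefSet {w | P w}

variable {S : OMinimalRealExpansion} {α β γ : Type}

theorem DP.congr {P Q : (α → ℝ) → Prop} (h : DP S P) (e : ∀ w, P w ↔ Q w) : DP S Q := by
  have : P = Q := funext fun w => propext (e w)
  exact this ▸ h

theorem DP.and {P Q : (α → ℝ) → Prop} (hP : DP S P) (hQ : DP S Q) :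
    DP S (fun w => P w ∧ Q w) := by
  let _ := S.str
  exact Set.Definable.inter hP hQ

theorem DP.or {P Q : (α → ℝ) → Prop} (hP : DP S P) (hQ : DP S Q) :
    DP S (fun w => P w ∨ Q w) := by
  let _ := S.str
  exact Set.Definable.union hP hQ

theorem DP.not {P : (α → ℝ) → Prop} (hP : DP S P) : DP S (fun w => ¬ P w) := by
  let _ := S.str
  exact Set.Definable.compl hP

theorem DP.imp {P Q : (α → ℝ) → Prop} (hP : DP S P) (hQ : DP S Q) :
    DP S (fun w => P w → Q w) :=
  (hP.not.or hQ).congr fun w => by tauto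

theorem DP.iff {P Q : (α → ℝ) → Prop} (hP : DP S P) (hQ : DP S Q) :
    DP S (fun w => P w ↔ Q w) :=
  ((hP.imp hQ).and (hQ.imp hP)).congr fun w => by tauto

theorem DP.const (p : Prop) : DP S (fun _ : α → ℝ => p) := by
  let _ := S.str
  by_cases h : p
  · have := Set.definable_univ (α := α) (A := (Set.univ : Set ℝ)) (L := S.L)
    exact DP.congr (P := fun _ => True) this (by simp [h])
  · have := Set.definable_empty (α := α) (A := (Set.univ : Set ℝ)) (L := S.L)
    exact DP.congr (P := fun _ => False) this (by simp [h])

theorem DP.reindex {P : (α → ℝ) → Prop} (hP : DP S P) (f : α → β) :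
    DP S (fun w : β → ℝ => P (fun i => w (f i))) := by
  let _ := S.str
  exact Set.Definable.preimage_comp f hP

theorem DP.allFin {ι : Type} [Finite ι] {P : ι → (α → ℝ) → Prop} (h : ∀ i, DP S (P i)) :
    DP S (fun w => ∀ i, P i w) := by
  let _ := S.str
  have := Set.definable_iInter_of_finite (A := (Set.univ : Set ℝ)) (L := S.L)
    (f := fun i => {w | P i w}) h
  have e : (⋂ i, {w | P i w}) = {w | ∀ i, P i w} := by ext; simp
  rw [e] at this
  exact this

theorem DP.exFin {ι : Type} [Finite ι] {P : ι → (α → ℝ) → Prop} (h : ∀ i, DP S (P i)) :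
    DP S (fun w => ∃ i, P i w) :=
  (DP.allFin fun i => (h i).not).not.congr fun w => by simp

theorem DP.exT [Finite α] [Finite β] {P : (α → ℝ) → (β → ℝ) → Prop}
    (h : DP S (fun v : α ⊕ β → ℝ => P (fun i => v (Sum.inl i)) (fun i => v (Sum.inr i)))) :
    DP S (fun w => ∃ q, P w q) := by
  let _ := S.str
  have := Set.Definable.image_comp h (Sum.inl : α → α ⊕ β)
  refine DP.congr (P := fun w => w ∈ (fun g : α ⊕ β → ℝ => g ∘ Sum.inl) ''
    {v | P (fun i => v (Sum.inl i)) (fun i => v (Sum.inr i))}) this fun w => ?_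
  constructor
  · rintro ⟨v, hv, rfl⟩
    exact ⟨_, hv⟩
  · rintro ⟨q, hq⟩
    exact ⟨Sum.elim w q, hq, rfl⟩

theorem DP.allT [Finite α] [Finite β] {P : (α → ℝ) → (β → ℝ) → Prop}
    (h : DP S (fun v : α ⊕ β → ℝ => P (fun i => v (Sum.inl i)) (fun i => v (Sum.inr i)))) :
    DP S (fun w => ∀ q, P w q) :=
  (DP.exT (P := fun w q => ¬ P w q) h.not).not.congr fun w => by simp

theorem DP.ex [Finite α] {P : (α → ℝ) → ℝ → Prop}
    (h : DP S (fun v : Option α → ℝ => P (fun i => v (some i)) (v none))) :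
    DP S (fun w => ∃ y, P w y) := by
  have h2 := DP.exT (α := α) (β := Unit) (P := fun w q => P w (q ())) (S := S) (by
    exact h.reindex (fun o : Option α => o.elim (Sum.inr ()) Sum.inl))
  exact h2.congr fun w => ⟨fun ⟨q, hq⟩ => ⟨_, hq⟩, fun ⟨y, hy⟩ => ⟨fun _ => y, hy⟩⟩

theorem DP.all [Finite α] {P : (α → ℝ) → ℝ → Prop}
    (h : DP S (fun v : Option α → ℝ => P (fun i => v (some i)) (v none))) :
    DP S (fun w => ∀ y, P w y) :=
  (DP.ex (P := fun w q => ¬ P w q) h.not).not.congr fun w => by simp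

/-- Definable functions. -/
def DF (S : OMinimalRealExpansion) {α : Type} (f : (α → ℝ) → ℝ) : Prop :=
  DP S (fun v : Option α → ℝ => v none = f (fun i => v (some i)))

theorem dp_of_empty {P : (α → ℝ) → Prop}
    (h : @Set.Definable ℝ (∅ : Set ℝ) S.L S.str _ {x | P x}) : DP S P := by
  let _ := S.str
  exact Set.Definable.mono h (Set.empty_subset _)

theorem dp_lt (i j : α) : DP S (fun w : α → ℝ => w i < w j) :=
  (dp_of_empty S.definable_lt).reindex ![i, j]

theorem dp_eq (i j : α) : DP S (fun w : α → ℝ => w i = w j) :=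
  ((dp_lt i j).not.and (dp_lt j i).not).congr fun w => by
    rw [not_lt, not_lt]; exact ⟨fun h => le_antisymm h.2 h.1, fun h => ⟨h.ge, h.le⟩⟩

theorem dp_eq_const (i : α) (r : ℝ) : DP S (fun w : α → ℝ => w i = r) := by
  let _ := S.str
  have h := Set.Definable.singleton_of_mem S.L (Set.mem_univ r)
  have h2 : DP S (fun w : Fin 1 → ℝ => w 0 = r) := h
  exact h2.reindex fun _ => i

/-- Substituting definable functions into a definable predicate. -/
theorem DP.subst [Finite α] [Finite β] {P : (β → ℝ) → Prop} (hP : DP S P)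
    {e : (α → ℝ) → β → ℝ} (he : ∀ j, DF S (fun w => e w j)) : DP S (fun w => P (e w)) := by
  have h : DP S (fun w : α → ℝ => ∃ q : β → ℝ, (∀ j, q j = e w j) ∧ P q) := by
    refine DP.exT (DP.and (DP.allFin fun j => ?_) ?_)
    · exact (he j).reindex (fun o : Option α => o.elim (Sum.inr j) Sum.inl)
    · exact hP.reindex Sum.inr
  refine h.congr fun w => ⟨?_, fun h => ⟨_, fun _ => rfl, h⟩⟩
  rintro ⟨q, hq, h⟩
  have : q = e w := funext hq
  exact this ▸ h

theorem DF.reindex {f : (α → ℝ) → ℝ} (hf : DF S f) (g : α → β) :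
    DF S (fun w : β → ℝ => f (fun i => w (g i))) :=
  DP.reindex hf (fun o : Option α => o.map g)

theorem DF.coord (i : α) : DF S (fun w : α → ℝ => w i) := dp_eq _ _

theorem DF.const (r : ℝ) : DF S (fun _ : α → ℝ => r) := dp_eq_const _ _

theorem DF.comp [Finite α] [Finite β] {f : (β → ℝ) → ℝ} (hf : DF S f)
    {e : (α → ℝ) → β → ℝ} (he : ∀ j, DF S (fun w => e w j)) : DF S (fun w => f (e w)) := by
  refine DP.subst (P := fun v : Option β → ℝ => v none = f (fun i => v (some i))) hf
    (e := fun (w : Option α → ℝ) o => o.elim (w none) (fun j => e (fun i => w (some i)) j)) ?_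
  rintro (_ | j)
  · exact DF.coord none
  · exact (he j).reindex some

theorem DP.sub2 [Finite α] {P : ℝ → ℝ → Prop} (hP : DP S (fun w : Fin 2 → ℝ => P (w 0) (w 1)))
    {e f : (α → ℝ) → ℝ} (he : DF S e) (hf : DF S f) : DP S (fun w => P (e w) (f w)) := by
  refine DP.subst hP (e := fun w => ![e w, f w]) fun j => ?_
  fin_cases j
  · exact he
  · exact hf

theorem DP.lt [Finite α] {e f : (α → ℝ) → ℝ} (he : DF S e) (hf : DF S f) :
    DP S (fun w => e w < f w) := DP.sub2 (P := fun a b => a < b) (dp_lt 0 1) he hf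

theorem DP.eq [Finite α] {e f : (α → ℝ) → ℝ} (he : DF S e) (hf : DF S f) :
    DP S (fun w => e w = f w) := DP.sub2 (P := fun a b => a = b) (dp_eq 0 1) he hf

theorem DP.le [Finite α] {e f : (α → ℝ) → ℝ} (he : DF S e) (hf : DF S f) :
    DP S (fun w => e w ≤ f w) := (DP.lt hf he).not.congr fun w => not_lt

theorem DF.of_graph {f : (α → ℝ) → ℝ}
    (h : DP S (fun v : Option α → ℝ => v none = f (fun i => v (some i)))) : DF S f := h

theorem DF.add2 : DF S (fun w : Fin 2 → ℝ => w 0 + w 1) := by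
  have h := (dp_of_empty S.definable_add).reindex (![some 0, some 1, none] : Fin 3 → Option (Fin 2))
  exact h.congr fun w => by simpa using eq_comm

theorem DF.mul2 : DF S (fun w : Fin 2 → ℝ => w 0 * w 1) := by
  have h := (dp_of_empty S.definable_mul).reindex (![some 0, some 1, none] : Fin 3 → Option (Fin 2))
  exact h.congr fun w => by simpa using eq_comm

theorem DF.comp2 [Finite α] {g : ℝ → ℝ → ℝ} (hg : DF S (fun w : Fin 2 → ℝ => g (w 0) (w 1)))
    {e f : (α → ℝ) → ℝ} (he : DF S e) (hf : DF S f) : DF S (fun w => g (e w) (f w)) := by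
  refine DF.comp hg (e := fun w => ![e w, f w]) fun j => ?_
  fin_cases j
  · exact he
  · exact hf

theorem DF.add [Finite α] {e f : (α → ℝ) → ℝ} (he : DF S e) (hf : DF S f) :
    DF S (fun w => e w + f w) := DF.comp2 (g := fun a b => a + b) DF.add2 he hf

theorem DF.mul [Finite α] {e f : (α → ℝ) → ℝ} (he : DF S e) (hf : DF S f) :
    DF S (fun w => e w * f w) := DF.comp2 (g := fun a b => a * b) DF.mul2 he hf

theorem DF.congr {e f : (α → ℝ) → ℝ} (he : DF S e) (h : ∀ w, e w = f w) : DF S f := by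
  have : e = f := funext h
  exact this ▸ he

theorem DF.neg [Finite α] {e : (α → ℝ) → ℝ} (he : DF S e) : DF S (fun w => - e w) :=
  ((DF.const (-1)).mul he).congr fun w => by ring

theorem DF.sub [Finite α] {e f : (α → ℝ) → ℝ} (he : DF S e) (hf : DF S f) :
    DF S (fun w => e w - f w) := (he.add hf.neg).congr fun w => by ring

theorem DF.pow [Finite α] {e : (α → ℝ) → ℝ} (he : DF S e) (n : ℕ) :
    DF S (fun w => e w ^ n) := by
  induction n with
  | zero => exact (DF.const 1).congr fun w => by simp
  | succ n ih => exact (ih.mul he).congr fun w => by ring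

theorem DF.sum [Finite α] {ι : Type} (s : Finset ι) {e : ι → (α → ℝ) → ℝ}
    (he : ∀ i, DF S (e i)) : DF S (fun w => ∑ i ∈ s, e i w) := by
  classical
  induction s using Finset.induction_on with
  | empty => exact (DF.const 0).congr fun w => by simp
  | insert a s ha ih => exact ((he a).add ih).congr fun w => by rw [Finset.sum_insert ha]

open Classical in
theorem DF.ite [Finite α] {P : (α → ℝ) → Prop} (hP : DP S P) {e f : (α → ℝ) → ℝ}
    (he : DF S e) (hf : DF S f) : DF S (fun w => if P w then e w else f w) := by
  refine DP.congr (P := fun v : Option α → ℝ => (P (fun i => v (some i)) ∧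
      v none = e (fun i => v (some i))) ∨ (¬ P (fun i => v (some i)) ∧
      v none = f (fun i => v (some i)))) ?_ fun v => ?_
  · exact ((hP.reindex some).and he).or ((hP.reindex some).not.and hf)
  · by_cases h : P (fun i => v (some i)) <;> simp [h]

theorem DF.max [Finite α] {e f : (α → ℝ) → ℝ} (he : DF S e) (hf : DF S f) :
    DF S (fun w => max (e w) (f w)) := by
  classical
  exact (DF.ite (DP.le he hf) hf he).congr fun w => by rw [max_def]

theorem DF.min [Finite α] {e f : (α → ℝ) → ℝ} (he : DF S e) (hf : DF S f) :
    DF S (fun w => min (e w) (f w)) := by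
  classical
  exact (DF.ite (DP.le he hf) he hf).congr fun w => by rw [min_def]

theorem DF.abs [Finite α] {e : (α → ℝ) → ℝ} (he : DF S e) : DF S (fun w => |e w|) :=
  (DF.max he he.neg).congr fun w => by rw [abs_eq_max_neg]

theorem DF.inv [Finite α] {e : (α → ℝ) → ℝ} (he : DF S e) : DF S (fun w => (e w)⁻¹) := by
  refine DP.congr (P := fun v : Option α → ℝ =>
    (e (fun i => v (some i)) = 0 ∧ v none = 0) ∨ v none * e (fun i => v (some i)) = 1) ?_
    fun v => ?_
  · have h := he.reindex (some : α → Option α)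
    exact ((DP.eq h (DF.const 0)).and (DP.eq (DF.coord none) (DF.const 0))).or
      (DP.eq ((DF.coord none).mul h) (DF.const 1))
  · by_cases h : e (fun i => v (some i)) = 0
    · simp [h]
    · simp only [h, false_and, false_or]
      exact ⟨eq_inv_of_mul_eq_one_left, fun h' => by rw [h', inv_mul_cancel₀ h]⟩

theorem DF.div [Finite α] {e f : (α → ℝ) → ℝ} (he : DF S e) (hf : DF S f) :
    DF S (fun w => e w / f w) := (he.mul hf.inv).congr fun w => by rw [div_eq_mul_inv]

/-- Appending a coordinate. -/
def oc (x : α → ℝ) (t : ℝ) : Option α → ℝ := fun o => o.elim t x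

/-- Dropping a coordinate. -/
def tl (x : Option α → ℝ) : α → ℝ := fun i => x (some i)

@[simp] theorem oc_none (x : α → ℝ) (t : ℝ) : oc x t none = t := rfl
@[simp] theorem oc_some (x : α → ℝ) (t : ℝ) (i : α) : oc x t (some i) = x i := rfl
@[simp] theorem tl_oc (x : α → ℝ) (t : ℝ) : tl (oc x t) = x := rfl
@[simp] theorem oc_tl (x : Option α → ℝ) : oc (tl x) (x none) = x := by
  funext o; cases o <;> rfl
@[simp] theorem tl_apply (x : Option α → ℝ) (i : α) : tl x i = x (some i) := rfl

theorem DP.mem [Finite α] [Finite β] {A : Set (β → ℝ)} (hA : S.DefSet A)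
    {e : (α → ℝ) → β → ℝ} (he : ∀ j, DF S (fun w => e w j)) : DP S (fun w => e w ∈ A) :=
  DP.subst (P := fun w => w ∈ A) hA he

theorem DP.memOc [Finite α] [Finite β] {A : Set (Option β → ℝ)} (hA : S.DefSet A)
    {e : (α → ℝ) → β → ℝ} (he : ∀ j, DF S (fun w => e w j)) {t : (α → ℝ) → ℝ} (ht : DF S t) :
    DP S (fun w => oc (e w) (t w) ∈ A) :=
  DP.mem hA (e := fun w => oc (e w) (t w)) (by rintro (_ | j); exacts [ht, he j])

/-- Definable subsets of the line. -/
def D1 (S : OMinimalRealExpansion) (s : Set ℝ) : Prop := DP S (fun w : Unit → ℝ => w () ∈ s)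

theorem D1.exists_Ioo {s : Set ℝ} (hs : D1 S s) (hinf : s.Infinite) :
    ∃ a b : ℚ, a < b ∧ Ioo (a : ℝ) b ⊆ s := by
  have h1 : DP S (fun w : Fin 1 → ℝ => w 0 ∈ s) := hs.reindex fun _ => 0
  obtain ⟨k, f, hf, rfl⟩ := S.o_minimal s h1
  have : ∃ i, (f i).Infinite := by
    by_contra hcon
    push Not at hcon
    exact hinf (Set.finite_iUnion fun i => hcon i)
  obtain ⟨i, hi⟩ := this
  have key : ∃ a b : ℝ, a < b ∧ Ioo a b ⊆ f i := by
    rcases hf i with ⟨a, h⟩ | ⟨a, b, h⟩ | ⟨a, h⟩ | ⟨a, h⟩ | h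
    · rw [h] at hi; exact absurd (Set.finite_singleton a) hi
    · refine ⟨a, b, ?_, h.ge⟩
      by_contra hab
      rw [h, Ioo_eq_empty hab] at hi
      exact hi Set.finite_empty
    · exact ⟨a - 1, a, by linarith, by rw [h]; exact fun x hx => hx.2⟩
    · exact ⟨a, a + 1, by linarith, by rw [h]; exact fun x hx => hx.1⟩
    · exact ⟨0, 1, by norm_num, by rw [h]; exact subset_univ _⟩
  obtain ⟨a, b, hab, hsub⟩ := key
  obtain ⟨q, hq1, hq2⟩ := exists_rat_btwn hab
  obtain ⟨r, hr1, hr2⟩ := exists_rat_btwn hq2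
  exact ⟨q, r, by exact_mod_cast hr1, fun x hx =>
    mem_iUnion.2 ⟨i, hsub ⟨hq1.trans hx.1, hx.2.trans hr2⟩⟩⟩

theorem infinite_Ioo' {a b : ℝ} (h : a < b) : (Ioo a b).Infinite := Set.Ioo_infinite h

/-- Fibres of definable sets are definable. -/
theorem D1.fib [Finite α] {A : Set (Option α → ℝ)} (hA : S.DefSet A) (x : α → ℝ) :
    D1 S {t | oc x t ∈ A} :=
  DP.memOc hA (e := fun _ => x) (t := fun w : Unit → ℝ => w ()) (fun _ => DF.const _) (DF.coord _)

theorem DF.ocApp {e : (α → ℝ) → β → ℝ} {t : (α → ℝ) → ℝ} (he : ∀ j, DF S (fun w => e w j))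
    (ht : DF S t) (j : Option β) : DF S (fun w => oc (e w) (t w) j) := by
  cases j
  exacts [ht, he _]

theorem DF.tlApp {e : (α → ℝ) → Option β → ℝ} {j : β} (he : DF S (fun w => e w (some j))) :
    DF S (fun w => tl (e w) j) := he

theorem DF.elimApp {e : (α → ℝ) → β → ℝ} {t : (α → ℝ) → γ → ℝ} (he : ∀ j, DF S (fun w => e w j))
    (ht : ∀ j, DF S (fun w => t w j)) (j : β ⊕ γ) : DF S (fun w => Sum.elim (e w) (t w) j) := by
  cases j
  exacts [he _, ht _]

theorem DP.gt [Finite α] {e f : (α → ℝ) → ℝ} (he : DF S e) (hf : DF S f) :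
    DP S (fun w => e w > f w) := DP.lt hf he

theorem DP.ge [Finite α] {e f : (α → ℝ) → ℝ} (he : DF S e) (hf : DF S f) :
    DP S (fun w => e w ≥ f w) := DP.le hf he

theorem DP.ball [Finite α] {P : (α → ℝ) → ℝ → Prop} {Q : (α → ℝ) → ℝ → Prop}
    (h : DP S (fun v : Option α → ℝ => P (fun i => v (some i)) (v none)
      → Q (fun i => v (some i)) (v none))) :
    DP S (fun w => ∀ y, P w y → Q w y) := DP.all h

theorem dfn {P : (α → ℝ) → Prop} (h : DP S P := by
  with_reducible repeat' first
    | exact DF.coord _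
    | exact DF.const _
    | exact DP.const _
    | assumption
    | intro _
    | refine DP.mem (by first | assumption | apply_assumption) ?_
    | refine DP.and ?_ ?_
    | refine DP.or ?_ ?_
    | refine DP.not ?_
    | refine DP.imp ?_ ?_
    | refine DP.iff ?_ ?_
    | refine DP.lt ?_ ?_
    | refine DP.le ?_ ?_
    | refine DP.gt ?_ ?_
    | refine DP.ge ?_ ?_
    | refine DP.eq ?_ ?_
    | refine DF.ocApp ?_ ?_ _
    | refine DF.tlApp ?_
    | refine DF.elimApp ?_ ?_ _
    | refine DF.add ?_ ?_
    | refine DF.sub ?_ ?_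
    | refine DF.mul ?_ ?_
    | refine DF.div ?_ ?_
    | refine DF.neg ?_
    | refine DF.abs ?_
    | refine DF.max ?_ ?_
    | refine DF.min ?_ ?_
    | refine DF.pow ?_ _
    | refine DF.inv ?_
    | refine DF.sum _ ?_
    | refine DP.ex ?_
    | refine DP.all ?_
    | refine DP.exT ?_
    | refine DP.allT ?_
    | refine DP.exFin ?_
    | refine DP.allFin ?_
    | refine DF.comp (by first | assumption | apply_assumption) ?_
    | apply_assumption) : DP S P := h

theorem dff {f : (α → ℝ) → ℝ} (h : DF S f := by
  with_reducible repeat' first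
    | exact DF.coord _
    | exact DF.const _
    | exact DP.const _
    | assumption
    | intro _
    | refine DP.mem (by first | assumption | apply_assumption) ?_
    | refine DP.and ?_ ?_
    | refine DP.or ?_ ?_
    | refine DP.not ?_
    | refine DP.imp ?_ ?_
    | refine DP.iff ?_ ?_
    | refine DP.lt ?_ ?_
    | refine DP.le ?_ ?_
    | refine DP.gt ?_ ?_
    | refine DP.ge ?_ ?_
    | refine DP.eq ?_ ?_
    | refine DF.ocApp ?_ ?_ _
    | refine DF.tlApp ?_
    | refine DF.elimApp ?_ ?_ _
    | refine DF.add ?_ ?_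
    | refine DF.sub ?_ ?_
    | refine DF.mul ?_ ?_
    | refine DF.div ?_ ?_
    | refine DF.neg ?_
    | refine DF.abs ?_
    | refine DF.max ?_ ?_
    | refine DF.min ?_ ?_
    | refine DF.pow ?_ _
    | refine DF.inv ?_
    | refine DF.sum _ ?_
    | refine DP.ex ?_
    | refine DP.all ?_
    | refine DP.exT ?_
    | refine DP.allT ?_
    | refine DP.exFin ?_
    | refine DP.allFin ?_
    | refine DF.comp (by first | assumption | apply_assumption) ?_
    | apply_assumption) : DF S f := h

end OM
end toolkit

section fatness
open Set Topology
namespace OM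
variable {S : OMinimalRealExpansion} {α β γ : Type}

/-- A set is fat if it contains a box. -/
def Fat (A : Set (α → ℝ)) : Prop :=
  ∃ z : α → ℝ, ∃ ε : ℝ, 0 < ε ∧ ∀ z' : α → ℝ, (∀ i, |z' i - z i| < ε) → z' ∈ A

theorem mem_nhds_box [Finite α] {s : Set (α → ℝ)} {z : α → ℝ} :
    s ∈ 𝓝 z ↔ ∃ ε : ℝ, 0 < ε ∧ ∀ z' : α → ℝ, (∀ i, |z' i - z i| < ε) → z' ∈ s := by
  cases nonempty_fintype α
  rw [Metric.mem_nhds_iff]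
  constructor
  · rintro ⟨ε, hε, h⟩
    refine ⟨ε, hε, fun z' hz' => h ?_⟩
    rw [Metric.mem_ball, dist_pi_lt_iff hε]
    exact hz'
  · rintro ⟨ε, hε, h⟩
    refine ⟨ε, hε, fun z' hz' => h z' ?_⟩
    rw [Metric.mem_ball, dist_pi_lt_iff hε] at hz'
    exact hz'

theorem fat_iff [Finite α] {A : Set (α → ℝ)} : Fat A ↔ (interior A).Nonempty := by
  constructor
  · rintro ⟨z, h⟩
    exact ⟨z, mem_interior_iff_mem_nhds.2 (mem_nhds_box.2 h)⟩
  · rintro ⟨z, h⟩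
    exact ⟨z, mem_nhds_box.1 (mem_interior_iff_mem_nhds.1 h)⟩

theorem Fat.mono {A B : Set (α → ℝ)} (h : Fat A) (hAB : A ⊆ B) : Fat B := by
  obtain ⟨z, ε, hε, h⟩ := h
  exact ⟨z, ε, hε, fun z' hz' => hAB (h z' hz')⟩

theorem Fat.equiv {A : Set (α → ℝ)} (h : Fat A) (e : α ≃ β) :
    Fat {w : β → ℝ | (fun i => w (e i)) ∈ A} := by
  obtain ⟨z, ε, hε, h⟩ := h
  refine ⟨fun j => z (e.symm j), ε, hε, fun z' hz' => h _ fun i => ?_⟩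
  simpa using hz' (e i)

theorem Fat.nonempty {A : Set (α → ℝ)} (h : Fat A) : A.Nonempty := by
  obtain ⟨z, ε, hε, h⟩ := h
  exact ⟨z, h z fun i => by simpa using hε⟩

theorem fat_option {B : Set (α → ℝ)} {A : Set (Option α → ℝ)} (hB : Fat B) {c d : ℝ} (hcd : c < d)
    (h : ∀ x ∈ B, ∀ t, c < t → t < d → oc x t ∈ A) : Fat A := by
  obtain ⟨z, ε, hε, hz⟩ := hB
  refine ⟨oc z ((c + d) / 2), min ε ((d - c) / 2), lt_min hε (by linarith), fun z' hz' => ?_⟩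
  have h1 := h (tl z') (hz _ fun i => (hz' (some i)).trans_le (min_le_left _ _)) (z' none)
  have h2 := (hz' none).trans_le (min_le_right _ _)
  rw [abs_lt, oc_none] at h2
  rw [oc_tl] at h1
  exact h1 (by linarith) (by linarith)

theorem fat_iUnion [Finite α] {ι : Type} [Countable ι] {A : ι → Set (α → ℝ)}
    (hA : ∀ k, S.DefSet (A k)) (h : Fat (⋃ k, A k)) : ∃ k, Fat (A k) := by
  suffices H : ∀ (ι : Type) [Countable ι] (A : ι → Set (α → ℝ)), (∀ k, S.DefSet (A k)) →
      Fat (⋃ k, A k) → ∃ k, Fat (A k) from H ι A hA h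
  clear h hA A
  induction α using Finite.induction_empty_option with
  | of_equiv e ih =>
    intro ι _ A hA h
    obtain ⟨k, hk⟩ := ih ι (fun k => {w | (fun i => w (e.symm i)) ∈ A k})
      (fun k => DP.reindex (hA k) e.symm) ((h.equiv e.symm).mono (fun w hw => by
        obtain ⟨k, hk⟩ := mem_iUnion.1 hw
        exact mem_iUnion.2 ⟨k, hk⟩))
    refine ⟨k, (hk.equiv e).mono fun w hw => ?_⟩
    simpa using hw
  | h_empty =>
    intro ι _ A hA h
    obtain ⟨z, hz⟩ := h.nonempty
    obtain ⟨k, hk⟩ := mem_iUnion.1 hz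
    refine ⟨k, z, 1, one_pos, fun z' _ => ?_⟩
    rwa [Subsingleton.elim z' z]
  | h_option ih =>
    rename_i α _
    intro ι _ A hA h
    obtain ⟨z, ε, hε, h⟩ := h
    let B : ι × ℚ × ℚ → Set (α → ℝ) := fun p =>
      {x | p.2.1 < p.2.2 ∧ ∀ t, (p.2.1 : ℝ) < t → t < (p.2.2 : ℝ) → oc x t ∈ A p.1}
    have hB : ∀ p, S.DefSet (B p) := by
      rintro ⟨k, c, d⟩
      exact dfn
    obtain ⟨⟨k, c, d⟩, hk⟩ := ih (ι × ℚ × ℚ) B hB ⟨tl z, ε, hε, fun x hx => by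
      have h1 : ∃ k, {t | oc x t ∈ A k}.Infinite := by
        by_contra hcon
        push Not at hcon
        have h2 : (⋃ k, {t | oc x t ∈ A k}).Countable :=
          countable_iUnion fun k => (hcon k).countable
        have h3 : ¬ (Ioo (z none - ε) (z none + ε)).Countable := by
          rw [Cardinal.Real.Ioo_countable_iff]; linarith
        refine h3 (h2.mono fun t ht => ?_)
        obtain ⟨k, hk⟩ := mem_iUnion.1 (h (oc x t) (by
          rintro (_ | i)
          · rw [oc_none, abs_lt]; constructor <;> linarith [ht.1, ht.2]
          · exact hx i))
        exact mem_iUnion.2 ⟨k, hk⟩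
      obtain ⟨k, hk⟩ := h1
      obtain ⟨c, d, hcd, hs⟩ := (D1.fib (hA k) x).exists_Ioo hk
      exact mem_iUnion.2 ⟨(k, c, d), hcd, fun t h1 h2 => hs ⟨h1, h2⟩⟩⟩
    have hcd : c < d := hk.nonempty.some_mem.1
    exact ⟨k, fat_option hk (c := c) (d := d) (by exact_mod_cast hcd) fun x hx t h1 h2 =>
      hx.2 t h1 h2⟩

theorem fat_union [Finite α] {A B : Set (α → ℝ)} (hA : S.DefSet A) (hB : S.DefSet B)
    (h : Fat (A ∪ B)) : Fat A ∨ Fat B := by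
  obtain ⟨k, hk⟩ := fat_iUnion (S := S) (ι := Bool) (A := fun b => bif b then A else B)
    (by rintro (_ | _) <;> assumption) (h.mono (fun x hx => by
      rcases hx with hx | hx
      exacts [mem_iUnion.2 ⟨true, hx⟩, mem_iUnion.2 ⟨false, hx⟩]))
  cases k
  exacts [Or.inr hk, Or.inl hk]

/-- The fibre of `F` over `x`. -/
def Fib (F : Set (Option α → ℝ)) (x : α → ℝ) : Set ℝ := {t | oc x t ∈ F}

/-- Points with infinite fibre. -/
def InfF (F : Set (Option α → ℝ)) : Set (α → ℝ) := {x | (Fib F x).Infinite}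

theorem infinite_iff [Finite α] {F : Set (Option α → ℝ)} (hF : S.DefSet F) (x : α → ℝ) :
    (Fib F x).Infinite ↔ ∃ a b : ℝ, a < b ∧ ∀ t, a < t → t < b → oc x t ∈ F := by
  constructor
  · intro h
    obtain ⟨a, b, hab, hs⟩ := (D1.fib hF x).exists_Ioo h
    exact ⟨a, b, by exact_mod_cast hab, fun t h1 h2 => hs ⟨h1, h2⟩⟩
  · rintro ⟨a, b, hab, h⟩
    exact (Ioo_infinite hab).mono fun t ht => h t ht.1 ht.2

theorem def_InfF [Finite α] {F : Set (Option α → ℝ)} (hF : S.DefSet F) : S.DefSet (InfF F) := by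
  have : DP S (fun x : α → ℝ => ∃ a b : ℝ, a < b ∧ ∀ t, a < t → t < b → oc x t ∈ F) := dfn
  exact this.congr fun x => (infinite_iff hF x).symm

theorem fat_of_InfF [Finite α] {F : Set (Option α → ℝ)} (hF : S.DefSet F) (h : Fat (InfF F)) :
    Fat F := by
  let B : ℚ × ℚ → Set (α → ℝ) := fun p =>
      {x | p.1 < p.2 ∧ ∀ t, (p.1 : ℝ) < t → t < (p.2 : ℝ) → oc x t ∈ F}
  have hB : ∀ p, S.DefSet (B p) := by
    rintro ⟨c, d⟩
    exact dfn
  obtain ⟨⟨c, d⟩, hk⟩ := fat_iUnion hB (h.mono (fun x hx => by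
    obtain ⟨c, d, hcd, hs⟩ := (D1.fib hF x).exists_Ioo hx
    exact mem_iUnion.2 ⟨(c, d), hcd, fun t h1 h2 => hs ⟨h1, h2⟩⟩))
  have hcd : c < d := hk.nonempty.some_mem.1
  exact fat_option hk (c := c) (d := d) (by exact_mod_cast hcd) fun x hx t h1 h2 =>
      hx.2 t h1 h2

theorem def_fat_fib [Finite α] [Finite β] {F : Set (α ⊕ β → ℝ)} (hF : S.DefSet F) :
    S.DefSet {v : α → ℝ | Fat {u : β → ℝ | Sum.elim v u ∈ F}} := by
  refine DP.congr (P := fun v => ∃ z : β → ℝ, ∃ ε : ℝ, 0 < ε ∧ ∀ z' : β → ℝ,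
    (∀ i, |z' i - z i| < ε) → Sum.elim v z' ∈ F) ?_ (fun _ => Iff.rfl)
  exact dfn

/-- A countable set of values if the slices are not fat somewhere. -/
theorem finite_fat_slices [Finite α] {F : Set (Option α → ℝ)} (hF : S.DefSet F) (h : ¬ Fat F) :
    {t | Fat {x | oc x t ∈ F}}.Finite := by
  by_contra hinf
  have hd : D1 S {t | Fat {x | oc x t ∈ F}} := by
    refine DP.congr (P := fun v : Unit → ℝ => ∃ z : α → ℝ, ∃ ε : ℝ, 0 < ε ∧ ∀ z' : α → ℝ,
      (∀ i, |z' i - z i| < ε) → oc z' (v ()) ∈ F) dfn (fun _ => Iff.rfl)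
  obtain ⟨a, b, hab, hs⟩ := hd.exists_Ioo hinf
  let T : (α → ℚ) × ℚ → Set (Unit → ℝ) := fun p => {w | 0 < p.2 ∧ ∀ z' : α → ℝ,
    (∀ i, |z' i - p.1 i| < p.2) → oc z' (w ()) ∈ F}
  have hT : ∀ p, S.DefSet (T p) := by
    rintro ⟨c, d⟩
    exact dfn
  obtain ⟨⟨q, r⟩, hqr⟩ := fat_iUnion hT (⟨fun _ => (a + b) / 2, (b - a) / 2, by
      have : (a : ℝ) < b := by exact_mod_cast hab
      linarith, fun w hw => by
    have h1 := hw ()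
    rw [abs_lt] at h1
    obtain ⟨z, ε, hε, hz⟩ := hs (show w () ∈ Ioo (a : ℝ) b by constructor <;> linarith)
    obtain ⟨r, hr0, hr⟩ := exists_rat_btwn (half_pos hε)
    choose q hq1 hq2 using fun i => exists_rat_btwn (show z i - r < z i + r by linarith)
    refine mem_iUnion.2 ⟨(q, r), by exact_mod_cast hr0, fun z' hz' => hz _ fun i => ?_⟩
    have := hz' i
    have h1 := hq1 i
    have h2 := hq2 i
    rw [abs_lt] at this ⊢
    constructor <;> linarith⟩)
  obtain ⟨t, δ, hδ, ht⟩ := hqr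
  have hr : (0 : ℚ) < r := (ht t (by simpa using hδ)).1
  refine h (fat_option (B := {x | ∀ i, |x i - q i| < r}) (c := t () - δ) (d := t () + δ)
    ⟨fun i => q i, r, by exact_mod_cast hr, fun z' hz' => hz'⟩ (by linarith) ?_)
  intro x hx s h1 h2
  exact (ht (fun _ => s) (fun _ => by rw [abs_lt]; constructor <;> linarith)).2 x hx

theorem def_closure [Finite α] {A : Set (α → ℝ)} (hA : S.DefSet A) : S.DefSet (closure A) := by
  have : DP S (fun x : α → ℝ => ∀ ε : ℝ, 0 < ε → ∃ y : α → ℝ, (∀ i, |y i - x i| < ε) ∧ y ∈ A) := dfn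
  refine this.congr fun x => ?_
  change _ ↔ x ∈ closure A
  rw [mem_closure_iff_nhds]
  constructor
  · intro h t ht
    obtain ⟨ε, hε, h2⟩ := mem_nhds_box.1 ht
    obtain ⟨y, hy, hyA⟩ := h ε hε
    exact ⟨y, h2 y hy, hyA⟩
  · intro h ε hε
    obtain ⟨y, hy, hyA⟩ := h {y | ∀ i, |y i - x i| < ε} (mem_nhds_box.2 ⟨ε, hε, fun _ h => h⟩)
    exact ⟨y, hy, hyA⟩

theorem def_compl {A : Set (α → ℝ)} (hA : S.DefSet A) : S.DefSet Aᶜ := DP.not hA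

theorem def_frontier [Finite α] {A : Set (α → ℝ)} (hA : S.DefSet A) : S.DefSet (frontier A) := by
  rw [frontier_eq_closure_inter_closure]
  exact DP.and (def_closure hA) (def_closure (def_compl hA))

theorem not_fat_frontier [Finite α] {A : Set (α → ℝ)} (hA : S.DefSet A) : ¬ Fat (frontier A) := by
  intro h
  have h2 : S.DefSet (frontier A ∩ A) := DP.and (def_frontier hA) hA
  have h3 : S.DefSet (frontier A ∩ Aᶜ) := DP.and (def_frontier hA) (def_compl hA)
  rcases fat_union h2 h3 (h.mono fun x hx => by
    by_cases hxA : x ∈ A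
    exacts [Or.inl ⟨hx, hxA⟩, Or.inr ⟨hx, hxA⟩]) with h | h
  · obtain ⟨z, hz⟩ := fat_iff.1 h
    have h5 : z ∈ interior A := interior_mono inter_subset_right hz
    exact (interior_subset hz).1.2 h5
  · obtain ⟨z, hz⟩ := fat_iff.1 h
    have h5 : z ∈ interior Aᶜ := interior_mono inter_subset_right hz
    rw [interior_compl] at h5
    exact h5 (interior_subset hz).1.1

end OM
end fatness

section generic
open Set Topology
namespace OM
variable {S : OMinimalRealExpansion} {α β γ : Type}

theorem continuousAt_box [Finite α] {f : (α → ℝ) → ℝ} {x : α → ℝ} :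
    ContinuousAt f x ↔ ∀ ε : ℝ, 0 < ε → ∃ δ : ℝ, 0 < δ ∧ ∀ y : α → ℝ,
      (∀ i, |y i - x i| < δ) → |f y - f x| < ε := by
  rw [ContinuousAt, Metric.tendsto_nhds]
  refine forall_congr' fun ε => forall_congr' fun hε => ?_
  exact mem_nhds_box

theorem def_cont [Finite α] {f : (α → ℝ) → ℝ} (hf : DF S f) :
    S.DefSet {x | ContinuousAt f x} := by
  have : DP S (fun x : α → ℝ => ∀ ε : ℝ, 0 < ε → ∃ δ : ℝ, 0 < δ ∧ ∀ y : α → ℝ,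
      (∀ i, |y i - x i| < δ) → |f y - f x| < ε) := dfn
  exact this.congr fun x => continuousAt_box.symm

theorem generic_cont [Finite α] {f : (α → ℝ) → ℝ} (hf : DF S f) :
    ¬ Fat {x | ¬ ContinuousAt f x} := by
  intro h
  let O : ℕ → Set (α → ℝ) := fun m => {x | ∀ δ : ℝ, 0 < δ → ∃ y : α → ℝ,
      (∀ i, |y i - x i| < δ) ∧ 1 / ((m : ℝ) + 1) ≤ |f y - f x|}
  have hO : ∀ m, S.DefSet (O m) := fun m => dfn
  obtain ⟨m, hm⟩ := fat_iUnion hO (h.mono fun x hx => by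
    change ¬ _ at hx
    rw [continuousAt_box] at hx
    push Not at hx
    obtain ⟨ε, hε, hx⟩ := hx
    obtain ⟨m, hm⟩ := exists_nat_one_div_lt hε
    refine mem_iUnion.2 ⟨m, fun δ hδ => ?_⟩
    obtain ⟨y, hy1, hy2⟩ := hx δ hδ
    exact ⟨y, hy1, hm.le.trans hy2⟩)
  set e : ℝ := 1 / ((m : ℝ) + 1) with he
  have he0 : 0 < e := by positivity
  have hOm := hO m
  let J : ℤ → Set (α → ℝ) := fun j => {x | x ∈ O m ∧ (j : ℝ) * (e / 2) ≤ f x ∧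
    f x < ((j : ℝ) + 1) * (e / 2)}
  have hJ : ∀ j, S.DefSet (J j) := fun j => dfn
  obtain ⟨j, z, ε, hε, hz⟩ := fat_iUnion hJ (hm.mono fun x hx => by
    refine mem_iUnion.2 ⟨⌊f x / (e / 2)⌋, hx, ?_, ?_⟩
    · rw [← le_div_iff₀ (by positivity)]; exact Int.floor_le _
    · rw [← div_lt_iff₀ (by positivity)]; exact Int.lt_floor_add_one _)
  have h1 := hz z (fun i => by simpa using hε)
  obtain ⟨y, hy, hy2⟩ := h1.1 ε hε
  have h2 := hz y hy
  have h3 : |f y - f z| < e := by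
    rw [abs_lt]
    constructor <;> linarith [h1.2.1, h1.2.2, h2.2.1, h2.2.2]
  linarith

theorem decomp [Finite α] {F : Set (α → ℝ)} (hF : S.DefSet F) (h : ¬ Fat F) :
    ∃ G : α → Set (α → ℝ), (∀ i, S.DefSet (G i)) ∧ (∀ x ∈ F, ∃ i, x ∈ G i) ∧
      ∀ (x : α → ℝ) (i : α), {y : α → ℝ | y ∈ G i ∧ ∀ j, j ≠ i → y j = x j}.Finite := by
  induction α using Finite.induction_empty_option with
  | of_equiv e ih =>
    obtain ⟨G, h1, h2, h3⟩ := ih (F := {w | (fun i => w (e.symm i)) ∈ F}) (DP.reindex hF e.symm)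
      (fun hf => h ((hf.equiv e).mono fun w hw => by simpa using hw))
    refine ⟨fun j => {w | (fun i => w (e i)) ∈ G (e.symm j)}, fun j => DP.reindex (h1 _) e,
      fun x hx => ?_, fun x i => ?_⟩
    · obtain ⟨i, hi⟩ := h2 (fun i => x (e i)) (by simpa using hx)
      exact ⟨e i, by simpa using hi⟩
    · refine Finite.of_injOn (f := fun (y : _ → ℝ) i => y (e i)) ?_ ?_
        (h3 (fun i => x (e i)) (e.symm i))
      · rintro y ⟨hy1, hy2⟩
        exact ⟨hy1, fun j hj => hy2 _ fun hc => hj (by rw [← hc]; simp)⟩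
      · intro y _ y' _ hyy
        funext j
        simpa using congrFun hyy (e.symm j)
  | h_empty =>
    refine ⟨fun _ => ∅, fun i => i.elim, fun x hx => ?_, fun x i => i.elim⟩
    refine absurd ?_ h
    refine ⟨x, 1, one_pos, fun z' _ => ?_⟩
    rwa [Subsingleton.elim z' x]
  | h_option ih =>
    rename_i α _
    have hE := def_InfF hF
    obtain ⟨G, h1, h2, h3⟩ := ih hE fun hf => h (fat_of_InfF hF hf)
    refine ⟨fun o => o.elim {x | x ∈ F ∧ tl x ∉ InfF F} (fun i => {x | tl x ∈ G i}), ?_, ?_, ?_⟩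
    · rintro (_ | i)
      · change DP S fun x => x ∈ F ∧ ¬ (tl x ∈ InfF F)
        exact dfn
      · change DP S fun x => tl x ∈ G i
        exact dfn
    · intro x hx
      by_cases hxE : tl x ∈ InfF F
      · obtain ⟨i, hi⟩ := h2 _ hxE
        exact ⟨some i, hi⟩
      · exact ⟨none, hx, hxE⟩
    · rintro x (_ | i)
      · by_cases hxE : tl x ∈ InfF F
        · convert Set.finite_empty
          rw [Set.eq_empty_iff_forall_notMem]
          rintro y ⟨hy1, hy2⟩
          have : tl y = tl x := funext fun j => hy2 (some j) (by simp)
          exact hy1.2 (this ▸ hxE)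
        · refine Finite.of_injOn (f := fun (y : Option α → ℝ) => y none) ?_ ?_
            (not_infinite.1 hxE)
          · rintro y ⟨hy1, hy2⟩
            have : tl y = tl x := funext fun j => hy2 (some j) (by simp)
            change oc _ _ ∈ F
            rw [← this, oc_tl]
            exact hy1.1
          · rintro y ⟨hy1, hy2⟩ y' ⟨hy1', hy2'⟩ hyy
            funext o
            rcases o with _ | j
            · exact hyy
            · rw [hy2 _ (by simp), hy2' _ (by simp)]
      · refine Finite.of_injOn (f := tl) ?_ ?_ (h3 (tl x) i)
        · rintro y ⟨hy1, hy2⟩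
          exact ⟨hy1, fun j hj => hy2 (some j) (by simpa using hj)⟩
        · rintro y ⟨hy1, hy2⟩ y' ⟨hy1', hy2'⟩ hyy
          funext o
          rcases o with _ | j
          · rw [hy2 _ (by simp), hy2' _ (by simp)]
          · exact congrFun hyy j

open Classical in
/-- Extending a tuple by one missing coordinate. -/
noncomputable def ext1 {a : α} (u : {b // b ≠ a} → ℝ) (s : ℝ) : α → ℝ :=
  fun b => if h : b = a then s else u ⟨b, h⟩

theorem ext1_self {a : α} (u : {b // b ≠ a} → ℝ) (s : ℝ) : ext1 u s a = s := by
  simp [ext1]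

theorem ext1_ne {a : α} (u : {b // b ≠ a} → ℝ) (s : ℝ) {b : α} (h : b ≠ a) :
    ext1 u s b = u ⟨b, h⟩ := by
  simp [ext1, h]

theorem ext1_restr {a : α} (u : α → ℝ) : ext1 (fun b : {b // b ≠ a} => u b) (u a) = u := by
  funext b
  by_cases h : b = a
  · subst h; rw [ext1_self]
  · rw [ext1_ne _ _ h]

theorem DF.ext1App {a : α} {u : (β → ℝ) → {b // b ≠ a} → ℝ} {s : (β → ℝ) → ℝ}
    (hu : ∀ j, DF S fun w => u w j) (hs : DF S s) (j : α) : DF S (fun w => ext1 (u w) (s w) j) := by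
  by_cases h : j = a
  · subst h; simpa only [ext1_self] using hs
  · simpa only [ext1_ne _ _ h] using hu ⟨j, h⟩

theorem noSpaceFill (n : ℕ) : ∀ {α β : Type} [Finite α] [Finite β], Nat.card α = n →
    n < Nat.card β → ∀ {G : Set (α ⊕ β → ℝ)}, S.DefSet G →
    (∀ u, {v | Sum.elim u v ∈ G}.Finite) → ¬ Fat {v | ∃ u, Sum.elim u v ∈ G} := by
  induction n using Nat.strong_induction_on with
  | _ n ih =>
  intro α β _ _ hα hβ G hG hfin hfat
  obtain ⟨z, ε, hε, hz⟩ := hfat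
  have hne : Nonempty β := (Nat.card_pos_iff.1 (by omega)).1
  obtain ⟨b0⟩ := hne
  let L : ℝ → Set (α → ℝ) := fun c => {u | ∃ v, Sum.elim u v ∈ G ∧ v b0 = c}
  have hL : ∀ c, S.DefSet (L c) := fun c => dfn
  have key : ∃ c, |c - z b0| < ε ∧ ¬ Fat (L c) := by
    by_contra hcon
    push Not at hcon
    have h1 : ∀ c ∈ Ioo (z b0 - ε) (z b0 + ε), ∃ q : α → ℚ, (fun i => (q i : ℝ)) ∈ L c := by
      intro c hc
      obtain ⟨y, r, hr, hy⟩ := hcon c (by rw [abs_lt]; constructor <;> linarith [hc.1, hc.2])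
      choose q hq1 hq2 using fun i => exists_rat_btwn (show y i - r < y i + r by linarith)
      exact ⟨q, hy _ fun i => by rw [abs_lt]; constructor <;> linarith [hq1 i, hq2 i]⟩
    have h2 : (⋃ q : α → ℚ, {c | (fun i => (q i : ℝ)) ∈ L c}).Countable := by
      refine countable_iUnion fun q => Finite.countable ?_
      refine ((hfin fun i => (q i : ℝ)).image fun v => v b0).subset ?_
      rintro c ⟨v, hv, rfl⟩
      exact ⟨v, hv, rfl⟩
    have h3 : ¬ (Ioo (z b0 - ε) (z b0 + ε)).Countable := by
      rw [Cardinal.Real.Ioo_countable_iff]; linarith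
    exact h3 (h2.mono fun c hc => mem_iUnion.2 (h1 c hc))
  obtain ⟨c, hc, hLc⟩ := key
  obtain ⟨D, hD1, hD2, hD3⟩ := decomp (hL c) hLc
  let B : α → Set ({b // b ≠ b0} → ℝ) := fun i => {v | ∃ u, u ∈ D i ∧ Sum.elim u (ext1 v c) ∈ G}
  have hB : ∀ i, S.DefSet (B i) := by
    intro i
    have hDi := hD1 i
    refine DP.exT (DP.and dfn (DP.mem hG ?_))
    intro j
    refine DF.elimApp (fun j => dff) (fun j => DF.ext1App (fun j => dff) dff _) _
  obtain ⟨i, hi⟩ := fat_iUnion hB ⟨fun b => z b, ε, hε, fun v hv => by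
    have h1 := hz (ext1 v c) (fun b => by
      by_cases h : b = b0
      · subst h; rwa [ext1_self]
      · rw [ext1_ne _ _ h]; exact hv ⟨b, h⟩)
    obtain ⟨u, hu⟩ := h1
    obtain ⟨i, hi⟩ := hD2 u ⟨_, hu, ext1_self _ _⟩
    exact mem_iUnion.2 ⟨i, u, hi, hu⟩⟩
  have hDi := hD1 i
  classical
  have := Fintype.ofFinite α
  have := Fintype.ofFinite β
  have hcα : Nat.card {a // a ≠ i} = n - 1 := by
    rw [← hα, Nat.card_eq_fintype_card, Nat.card_eq_fintype_card, Fintype.card_subtype_compl]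
    simp
  have hcβ : Nat.card {b // b ≠ b0} = Nat.card β - 1 := by
    rw [Nat.card_eq_fintype_card, Nat.card_eq_fintype_card, Fintype.card_subtype_compl]
    simp
  have hn : 0 < n := by rw [← hα]; exact Nat.card_pos_iff.2 ⟨⟨i⟩, inferInstance⟩
  refine ih (n - 1) (by omega) (β := {b // b ≠ b0}) hcα (by omega) (G := {w | ∃ s, ext1 (fun a => w (Sum.inl a)) s ∈ D i
    ∧ Sum.elim (ext1 (fun a => w (Sum.inl a)) s) (ext1 (fun b => w (Sum.inr b)) c) ∈ G}) ?_ ?_ ?_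
  · refine DP.ex (DP.and (DP.mem hDi ?_) (DP.mem hG ?_))
    · exact DF.ext1App (fun j => dff) dff
    · exact DF.elimApp (DF.ext1App (fun j => dff) dff) (DF.ext1App (fun j => dff) dff)
  · intro u
    have h1 : {s | ext1 u s ∈ D i}.Finite := by
      refine Finite.of_injOn (f := fun s => ext1 u s) ?_ ?_ (hD3 (ext1 u 0) i)
      · intro s hs
        exact ⟨hs, fun j hj => (ext1_ne _ _ hj).trans (ext1_ne _ _ hj).symm⟩
      · intro s _ s' _ hss
        simpa [ext1_self] using congrFun hss i
    have h2 : (⋃ s ∈ {s | ext1 u s ∈ D i}, (fun (v : β → ℝ) (b : {b // b ≠ b0}) => v b) ''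
      {v | Sum.elim (ext1 u s) v ∈ G}).Finite := h1.biUnion fun s _ => (hfin _).image _
    refine h2.subset ?_
    rintro v ⟨s, hs1, hs2⟩
    refine mem_biUnion hs1 ⟨ext1 v c, hs2, ?_⟩
    funext b
    exact ext1_ne _ _ b.2
  · refine hi.mono ?_
    rintro v ⟨u, hu, huG⟩
    refine ⟨fun a => u a, u i, ?_, ?_⟩
    · exact (ext1_restr (a := i) u).symm ▸ hu
    · exact (ext1_restr (a := i) u).symm ▸ huG

/-- Polynomial shear. -/
noncomputable def shP {α : Type} {K : ℕ} (v : α × Fin K → ℝ) (t : ℝ) (i : α) : ℝ :=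
  ∑ k : Fin K, v (i, k) * t ^ ((k : ℕ) + 1)

theorem interp {K : ℕ} {t : Fin (K + 1) → ℝ} (ht : Function.Injective t) {a a' : ℝ}
    {v v' : Fin K → ℝ} (h : ∀ j, a + ∑ k : Fin K, v k * t j ^ ((k : ℕ) + 1) =
      a' + ∑ k : Fin K, v' k * t j ^ ((k : ℕ) + 1)) : v = v' := by
  have := Matrix.eq_zero_of_forall_index_sum_pow_mul_eq_zero (R := ℝ) (f := t)
    (v := Fin.cons (a - a') (v - v')) ht (fun j => by
      rw [Fin.sum_univ_succ]
      simp only [Fin.val_zero, pow_zero, Fin.cons_zero, one_mul, Fin.val_succ, Fin.cons_succ,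
        Pi.sub_apply, mul_sub, Finset.sum_sub_distrib]
      have := h j
      simp only [mul_comm (v _), mul_comm (v' _)] at this
      linarith)
  funext k
  have h2 := congrFun this k.succ
  simp only [Fin.cons_succ, Pi.sub_apply, Pi.zero_apply] at h2
  linarith

theorem good_shear [Finite α] {F : Set (Option α → ℝ)} (hF : S.DefSet F) (h : ¬ Fat F) :
    ∃ P : ℝ → α → ℝ, (∀ i, Continuous fun t => P t i) ∧
      (∀ i, DF S fun w : Unit → ℝ => P (w ()) i) ∧
      ∀ x : α → ℝ, {t | oc (fun i => x i + P t i) t ∈ F}.Finite := by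
  have := Fintype.ofFinite α
  by_cases hemp : IsEmpty α
  · refine ⟨fun _ i => (hemp.false i).elim, fun i => (hemp.false i).elim,
      fun i => (hemp.false i).elim, fun x => ?_⟩
    by_contra hinf
    refine h (fat_of_InfF hF ⟨x, 1, one_pos, fun z' _ => ?_⟩)
    have : z' = fun i => x i + (hemp.false i).elim := Subsingleton.elim _ _
    rw [this]
    exact hinf
  rw [not_isEmpty_iff] at hemp
  set K := Fintype.card α with hK
  have hcont : ∀ (v : α × Fin K → ℝ) i, Continuous fun t => shP v t i := by
    intro v i
    unfold shP
    fun_prop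
  have hdfs : ∀ (v : α × Fin K → ℝ) i, DF S fun w : Unit → ℝ => shP v (w ()) i := by
    intro v i
    unfold shP
    exact dff
  by_contra hcon
  push Not at hcon
  let V : ℚ × ℚ → Set (α × Fin K → ℝ) := fun p => {v | p.1 < p.2 ∧ ∃ x : α → ℝ, ∀ t : ℝ,
    (p.1 : ℝ) < t → t < (p.2 : ℝ) → oc (fun i => x i + shP v t i) t ∈ F}
  have hV : ∀ p, S.DefSet (V p) := by
    rintro ⟨a, b⟩
    unfold V shP
    exact dfn
  obtain ⟨⟨a, b⟩, hab⟩ := fat_iUnion hV ⟨0, 1, one_pos, fun v _ => by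
    obtain ⟨x, hx⟩ := hcon (fun t i => shP v t i) (hcont v) (hdfs v)
    have hd : D1 S {t | oc (fun i => x i + shP v t i) t ∈ F} := by
      have := hdfs v
      refine DP.mem hF (e := fun w : Unit → ℝ => oc (fun i => x i + shP v (w ()) i) (w ())) ?_
      exact DF.ocApp (fun j => DF.add dff (hdfs v j)) dff
    obtain ⟨a, b, hab, hs⟩ := hd.exists_Ioo hx
    exact mem_iUnion.2 ⟨(a, b), hab, x, fun t h1 h2 => hs ⟨h1, h2⟩⟩⟩
  have hab' : (a : ℝ) < b := by exact_mod_cast hab.nonempty.some_mem.1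
  have hbad := finite_fat_slices hF h
  have hinf : (Ioo (a : ℝ) b \ {t | Fat {x | oc x t ∈ F}}).Infinite :=
    (Ioo_infinite hab').sdiff hbad
  let t : Fin (K + 1) → ℝ := fun j => hinf.natEmbedding _ (j : ℕ)
  have htinj : Function.Injective t := by
    intro j j' hj
    exact Fin.ext ((hinf.natEmbedding _).injective (Subtype.ext hj))
  have ht1 : ∀ j, t j ∈ Ioo (a : ℝ) b := fun j => (hinf.natEmbedding _ (j : ℕ)).2.1
  have ht2 : ∀ j, ¬ Fat {x | oc x (t j) ∈ F} := fun j => (hinf.natEmbedding _ (j : ℕ)).2.2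
  have hFj : ∀ j, S.DefSet {x | oc x (t j) ∈ F} := fun j => dfn
  choose D hD1 hD2 hD3 using fun j => decomp (hFj j) (ht2 j)
  let W : (Fin (K + 1) → α) → Set (α × Fin K → ℝ) := fun σ => {v | ∃ x : α → ℝ, ∀ j,
    (fun i => x i + shP v (t j) i) ∈ D j (σ j)}
  have hW : ∀ σ, S.DefSet (W σ) := by
    intro σ
    unfold W shP
    have : ∀ j, S.DefSet (D j (σ j)) := fun j => hD1 j _
    exact dfn
  obtain ⟨σ, hσ⟩ := fat_iUnion hW (hab.mono fun v hv => by
    obtain ⟨-, x, hx⟩ := hv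
    choose σ hσ using fun j => hD2 j (fun i => x i + shP v (t j) i) (hx _ (ht1 j).1 (ht1 j).2)
    exact mem_iUnion.2 ⟨σ, x, hσ⟩)
  classical
  let U := {p : Fin (K + 1) × α // p.2 ≠ σ p.1}
  have hcard : Nat.card U < Nat.card (α × Fin K) := by
    have e : {p : Fin (K + 1) × α // p.2 = σ p.1} ≃ Fin (K + 1) :=
      { toFun := fun p => p.1.1
        invFun := fun j => ⟨(j, σ j), rfl⟩
        left_inv := by rintro ⟨⟨j, a⟩, h⟩; obtain rfl : a = σ j := h; rfl
        right_inv := fun j => rfl }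
    have hc := Fintype.card_congr e
    rw [Nat.card_eq_fintype_card, Nat.card_eq_fintype_card, Fintype.card_subtype_compl, hc]
    simp only [Fintype.card_prod, Fintype.card_fin, ← hK]
    have : 0 < K := Fintype.card_pos
    rw [Nat.sub_lt_iff_lt_add (by nlinarith)]
    nlinarith
  refine noSpaceFill (S := S) _ rfl hcard (G := {w : U ⊕ (α × Fin K) → ℝ | ∃ x : α → ℝ, ∀ j,
    (fun i => x i + shP (fun q => w (Sum.inr q)) (t j) i) ∈ D j (σ j) ∧ ∀ p : U, p.1.1 = j →
      x p.1.2 + shP (fun q => w (Sum.inr q)) (t j) p.1.2 = w (Sum.inl p)}) ?_ ?_ ?_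
  · have : ∀ j, S.DefSet (D j (σ j)) := fun j => hD1 j _
    unfold shP
    exact dfn
  · intro u
    let Y : Fin (K + 1) → Set (α → ℝ) := fun j => {y | y ∈ D j (σ j) ∧ ∀ l (hl : l ≠ σ j),
      y l = u ⟨(j, l), hl⟩}
    have hY : ∀ j, (Y j).Finite := by
      intro j
      refine (hD3 j (fun l => if hl : l ≠ σ j then u ⟨(j, l), hl⟩ else 0) (σ j)).subset ?_
      rintro y ⟨hy1, hy2⟩
      exact ⟨hy1, fun l hl => by rw [hy2 l hl, dif_pos hl]⟩
    have h1 : (⋃ y ∈ Set.pi univ Y, {v : α × Fin K → ℝ | ∃ x : α → ℝ, ∀ j i,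
        x i + shP v (t j) i = y j i}).Finite := by
      refine (Finite.pi hY).biUnion fun y _ => ?_
      refine Set.Subsingleton.finite ?_
      rintro v ⟨x, hx⟩ v' ⟨x', hx'⟩
      funext ⟨i, k⟩
      exact congrFun (interp (v := fun k => v (i, k)) (v' := fun k => v' (i, k)) htinj
        fun j => (hx j i).trans (hx' j i).symm) k
    refine h1.subset ?_
    rintro v ⟨x, hx⟩
    refine mem_biUnion (x := fun j i => x i + shP v (t j) i) ?_ ⟨x, fun j i => rfl⟩
    intro j _
    exact ⟨(hx j).1, fun l hl => (hx j).2 ⟨(j, l), hl⟩ rfl⟩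
  · refine hσ.mono ?_
    rintro v ⟨x, hx⟩
    exact ⟨fun p => x p.1.2 + shP v (t p.1.1) p.1.2, x, fun j => ⟨hx j, fun p hp => by
      subst hp; rfl⟩⟩

end OM
end generic

section unifin
open Set Topology
namespace OM
variable {S : OMinimalRealExpansion} {α β γ : Type}

open Classical in
/-- Selecting the point of a fibre. -/
noncomputable def sel (A : Set (Option α → ℝ)) (x : α → ℝ) : ℝ :=
  if h : ∃ y, oc x y ∈ A then h.choose else 0

theorem sel_mem {A : Set (Option α → ℝ)} {x : α → ℝ} (h : ∃ y, oc x y ∈ A) :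
    oc x (sel A x) ∈ A := by
  rw [sel, dif_pos h]
  exact h.choose_spec

theorem sel_eq {A : Set (Option α → ℝ)} {x : α → ℝ} (hA : (Fib A x).Subsingleton) {y : ℝ}
    (h : oc x y ∈ A) : sel A x = y :=
  hA (sel_mem ⟨y, h⟩) h

theorem df_sel [Finite α] {A : Set (Option α → ℝ)} (hA : S.DefSet A)
    (h : ∀ x, (Fib A x).Subsingleton) : DF S (sel A) := by
  have : DP S (fun v : Option α → ℝ => oc (tl v) (v none) ∈ A ∨
    ((¬ ∃ y, oc (tl v) y ∈ A) ∧ v none = 0)) := dfn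
  refine this.congr fun v => ?_
  change _ ↔ v none = sel A (tl v)
  constructor
  · rintro (h1 | ⟨h1, h2⟩)
    · exact (sel_eq (h _) h1).symm
    · rw [sel, dif_neg h1, h2]
  · intro hv
    by_cases h1 : ∃ y, oc (tl v) y ∈ A
    · left
      rw [hv]
      exact sel_mem h1
    · right
      rw [sel, dif_neg h1] at hv
      exact ⟨h1, hv⟩

/-- At least `i` points of the fibre are below. -/
def GE (F : Set (Option α → ℝ)) : ℕ → Set (Option α → ℝ)
  | 0 => univ
  | i + 1 => {x | ∃ z, z < x none ∧ oc (tl x) z ∈ F ∧ oc (tl x) z ∈ GE F i}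

theorem def_GE [Finite α] {F : Set (Option α → ℝ)} (hF : S.DefSet F) (i : ℕ) :
    S.DefSet (GE F i) := by
  induction i with
  | zero => exact DP.const True
  | succ i ih =>
    change DP S fun x : Option α → ℝ => ∃ z, z < x none ∧ oc (tl x) z ∈ F ∧ oc (tl x) z ∈ GE F i
    exact dfn

theorem GE_anti (F : Set (Option α → ℝ)) (i : ℕ) : GE F (i + 1) ⊆ GE F i := by
  induction i with
  | zero => exact subset_univ _
  | succ i ih =>
    rintro x ⟨z, h1, h2, h3⟩
    exact ⟨z, h1, h2, ih h3⟩

theorem GE_card {F : Set (Option α → ℝ)} {x : α → ℝ} (hfin : (Fib F x).Finite) (i : ℕ) :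
    ∀ y, oc x y ∈ GE F i → i ≤ (Fib F x ∩ Iio y).ncard := by
  induction i with
  | zero => intros; omega
  | succ i ih =>
    rintro y ⟨z, h1, h2, h3⟩
    refine Nat.succ_le_of_lt ((ih z h3).trans_lt (ncard_lt_ncard ?_ (hfin.inter_of_left _)))
    refine ⟨fun t ht => ⟨ht.1, lt_trans ht.2 h1⟩, fun h => ?_⟩
    exact lt_irrefl z (h ⟨h2, h1⟩).2

/-- Points of rank `i` in their fibre. -/
def Rk (F : Set (Option α → ℝ)) (i : ℕ) : Set (Option α → ℝ) :=
  {x | x ∈ F ∧ x ∈ GE F i ∧ ¬ x ∈ GE F (i + 1)}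

theorem def_Rk [Finite α] {F : Set (Option α → ℝ)} (hF : S.DefSet F) (i : ℕ) :
    S.DefSet (Rk F i) := by
  have h1 := def_GE hF i
  have h2 := def_GE hF (i + 1)
  exact DP.and hF (DP.and h1 (DP.not h2))

theorem Rk_sub (F : Set (Option α → ℝ)) (i : ℕ) (x : α → ℝ) : (Fib (Rk F i) x).Subsingleton := by
  have key : ∀ y y', y < y' → oc x y ∈ Rk F i → oc x y' ∈ Rk F i → False := by
    intro y y' h h1 h2
    exact h2.2.2 ⟨y, h, h1.1, h1.2.1⟩
  intro y hy y' hy'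
  rcases lt_trichotomy y y' with h | h | h
  exacts [(key _ _ h hy hy').elim, h, (key _ _ h hy' hy).elim]

theorem Rk_disj {F : Set (Option α → ℝ)} {i j : ℕ} {x : Option α → ℝ} (hi : x ∈ Rk F i)
    (hj : x ∈ Rk F j) : i = j := by
  have key : ∀ i j, i < j → x ∈ Rk F i → x ∈ Rk F j → False := by
    intro i j h h1 h2
    exact h1.2.2 (antitone_nat_of_succ_le (f := GE F) (GE_anti F) (Nat.succ_le_of_lt h) h2.2.1)
  rcases lt_trichotomy i j with h | h | h
  exacts [(key _ _ h hi hj).elim, h, (key _ _ h hj hi).elim]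

theorem Rk_exists {F : Set (Option α → ℝ)} {x : α → ℝ} (hfin : (Fib F x).Finite) {y : ℝ}
    (hy : oc x y ∈ F) : ∃ i < (Fib F x).ncard, oc x y ∈ Rk F i := by
  classical
  have hex : ∃ i, oc x y ∉ GE F i := by
    refine ⟨(Fib F x ∩ Iio y).ncard + 1, fun h => ?_⟩
    have := GE_card hfin _ y h
    omega
  have h0 : Nat.find hex ≠ 0 := fun h => by
    have := Nat.find_spec hex
    rw [h] at this
    exact this (mem_univ _)
  obtain ⟨i, hi⟩ := Nat.exists_eq_succ_of_ne_zero h0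
  have h1 : oc x y ∈ GE F i := by
    by_contra hc
    have := Nat.find_min' hex hc
    omega
  refine ⟨i, ?_, hy, h1, by rw [← Nat.succ_eq_add_one, ← hi]; exact Nat.find_spec hex⟩
  refine (GE_card hfin _ y h1).trans_lt (ncard_lt_ncard ⟨inter_subset_left, fun h => ?_⟩ hfin)
  exact lt_irrefl y (h hy).2

/-- `ε`-matching of two sets of reals. -/
def Mat (A B : Set ℝ) (ε : ℝ) : Prop :=
  (∀ y, y ∈ A → ∃ y', y' ∈ B ∧ |y - y'| < ε) ∧
  ∀ y y', y ∈ A → y' ∈ A → |y - y'| < 2 * ε → y = y'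

theorem Mat.ncard_le {A B : Set ℝ} {ε : ℝ} (h : Mat A B ε) (hB : B.Finite) : A.ncard ≤ B.ncard := by
  classical
  choose! f hf1 hf2 using h.1
  refine ncard_le_ncard_of_injOn f hf1 ?_ hB
  intro y hy y' hy' hyy
  refine h.2 y y' hy hy' ?_
  have h1 := hf2 y hy
  have h2 := hf2 y' hy'
  rw [hyy] at h1
  rw [abs_lt] at *
  constructor <;> linarith

/-- The good points. -/
def Good (F : Set (Option (Option α) → ℝ)) : Set (Option α → ℝ) :=
  {p | ∃ ε : ℝ, 0 < ε ∧ ∃ δ : ℝ, 0 < δ ∧ ∀ t, |t - p none| < δ →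
    Mat (Fib F p) (Fib F (oc (tl p) t)) ε ∧ Mat (Fib F (oc (tl p) t)) (Fib F p) ε}

theorem def_Good [Finite α] {F : Set (Option (Option α) → ℝ)} (hF : S.DefSet F) :
    S.DefSet (Good F) := by
  have : DP S (fun p : Option α → ℝ => ∃ ε : ℝ, 0 < ε ∧ ∃ δ : ℝ, 0 < δ ∧ ∀ t, |t - p none| < δ →
    ((∀ y, oc p y ∈ F → ∃ y', oc (oc (tl p) t) y' ∈ F ∧ |y - y'| < ε) ∧
      ∀ y y', oc p y ∈ F → oc p y' ∈ F → |y - y'| < 2 * ε → y = y') ∧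
    ((∀ y, oc (oc (tl p) t) y ∈ F → ∃ y', oc p y' ∈ F ∧ |y - y'| < ε) ∧
      ∀ y y', oc (oc (tl p) t) y ∈ F → oc (oc (tl p) t) y' ∈ F → |y - y'| < 2 * ε → y = y')) := dfn
  exact this

theorem good_const {F : Set (Option (Option α) → ℝ)} (hfin : ∀ p, (Fib F p).Finite) {x : α → ℝ}
    {C : Set ℝ} (hC : C.OrdConnected) (hg : ∀ t ∈ C, oc x t ∈ Good F) {s t : ℝ} (hs : s ∈ C)
    (ht : t ∈ C) : (Fib F (oc x s)).ncard = (Fib F (oc x t)).ncard := by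
  refine hC.isPreconnected.constant (f := fun t => (Fib F (oc x t)).ncard) ?_ hs ht
  intro t ht
  refine ContinuousAt.continuousWithinAt ?_
  obtain ⟨ε, hε, δ, hδ, h⟩ := hg t ht
  refine continuousAt_const.congr (f := fun _ => (Fib F (oc x t)).ncard) ?_
  filter_upwards [Metric.ball_mem_nhds t hδ] with s hs
  obtain ⟨h1, h2⟩ := h s hs
  exact le_antisymm (h1.ncard_le (hfin _)) (h2.ncard_le (hfin _))

theorem exists_good [Finite α] {F : Set (Option (Option α) → ℝ)} (hF : S.DefSet F)
    (hfin : ∀ p, (Fib F p).Finite) (x : α → ℝ) {a b : ℝ} (hab : a < b) :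
    ∃ t, a < t ∧ t < b ∧ oc x t ∈ Good F := by
  let T : Finset ℕ → Set (Unit → ℝ) := fun I => {w | (∀ i : I, ∃ y, oc (oc x (w ())) y ∈ Rk F i) ∧
    ∀ y, oc (oc x (w ())) y ∈ F → ∃ i : I, oc (oc x (w ())) y ∈ Rk F i}
  have hR := def_Rk hF
  have hT : ∀ I, S.DefSet (T I) := fun I => dfn
  have hfat : Fat {w : Unit → ℝ | a < w () ∧ w () < b} :=
    ⟨fun _ => (a + b) / 2, (b - a) / 2, by linarith, fun w hw => by
      have := hw ()
      rw [abs_lt] at this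
      constructor <;> linarith⟩
  have hfd : S.DefSet {w : Unit → ℝ | a < w () ∧ w () < b} := dfn
  obtain ⟨I, hI⟩ := fat_iUnion (A := fun I => {w : Unit → ℝ | a < w () ∧ w () < b} ∩ T I)
    (fun I => DP.and hfd (hT I)) (hfat.mono fun w hw => by
      classical
      refine mem_iUnion.2 ⟨(Finset.range (Fib F (oc x (w ()))).ncard).filter
        (fun i => ∃ y, oc (oc x (w ())) y ∈ Rk F i), hw, fun i => (Finset.mem_filter.1 i.2).2, ?_⟩
      intro y hy
      obtain ⟨i, hi, hi2⟩ := Rk_exists (hfin _) hy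
      exact ⟨⟨i, Finset.mem_filter.2 ⟨Finset.mem_range.2 hi, y, hi2⟩⟩, hi2⟩)
  let ξ : ℕ → (Unit → ℝ) → ℝ := fun i w => sel (Rk F i) (oc x (w ()))
  have hξ : ∀ i, DF S (ξ i) := by
    intro i
    have := df_sel (def_Rk hF i) (Rk_sub F i)
    exact DF.comp this (DF.ocApp (fun j => DF.const _) (DF.coord _))
  have hgen : ∃ w ∈ interior ({w : Unit → ℝ | a < w () ∧ w () < b} ∩ T I), ∀ i : I,
      ContinuousAt (ξ i) w := by
    by_contra hcon
    push Not at hcon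
    have hInter : Fat (interior ({w : Unit → ℝ | a < w () ∧ w () < b} ∩ T I)) := by
      rw [fat_iff, interior_interior]; exact fat_iff.1 hI
    obtain ⟨i, hi⟩ := fat_iUnion (A := fun i : I => {w | ¬ ContinuousAt (ξ i) w})
      (fun i => DP.not (def_cont (hξ i))) (hInter.mono fun w hw => mem_iUnion.2 (hcon w hw))
    exact generic_cont (hξ i) hi
  obtain ⟨w, hw, hc⟩ := hgen
  have hwT := interior_subset hw
  refine ⟨w (), hwT.1.1, hwT.1.2, ?_⟩
  -- values
  have hval : ∀ w ∈ T I, Fib F (oc x (w ())) = range fun i : I => ξ i w := by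
    intro w hw
    ext y
    constructor
    · intro hy
      obtain ⟨i, hi⟩ := hw.2 y hy
      exact ⟨i, sel_eq (Rk_sub F i _) hi⟩
    · rintro ⟨i, rfl⟩
      exact (sel_mem (hw.1 i)).1
  have hinj : ∀ w ∈ T I, ∀ i j : I, ξ i w = ξ j w → i = j := by
    intro w hw i j hij
    have h1 := sel_mem (hw.1 i)
    have h2 := sel_mem (hw.1 j)
    change oc _ (ξ i w) ∈ _ at h1
    change oc _ (ξ j w) ∈ _ at h2
    rw [hij] at h1
    exact Subtype.ext (Rk_disj h1 h2)
  have hgap : ∃ ε : ℝ, 0 < ε ∧ ∀ i j : I, i ≠ j → 4 * ε ≤ |ξ i w - ξ j w| := by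
    have : ∀ᶠ ε in 𝓝[>] (0 : ℝ), ∀ i j : I, i ≠ j → 4 * ε ≤ |ξ i w - ξ j w| := by
      rw [Filter.eventually_all]
      intro i
      rw [Filter.eventually_all]
      intro j
      by_cases hij : i = j
      · exact Filter.Eventually.of_forall fun ε h => absurd hij h
      · have hpos : 0 < |ξ i w - ξ j w| :=
          abs_pos.2 (sub_ne_zero.2 fun h => hij (hinj w hwT.2 i j h))
        filter_upwards [Ioo_mem_nhdsGT (show (0 : ℝ) < |ξ i w - ξ j w| / 4 by positivity)]
          with ε hε _
        linarith [hε.2]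
    obtain ⟨ε, h1, h2⟩ := (this.and self_mem_nhdsWithin).exists
    exact ⟨ε, h2, h1⟩
  obtain ⟨ε, hε, hgap⟩ := hgap
  have hnear : ∀ᶠ w' in 𝓝 w, w' ∈ T I ∧ ∀ i : I, |ξ i w' - ξ i w| < ε := by
    refine Filter.Eventually.and ?_ ?_
    · filter_upwards [isOpen_interior.mem_nhds hw] with w' hw'
      exact (interior_subset hw').2
    · rw [Filter.eventually_all]
      intro i
      exact Metric.tendsto_nhds.1 (hc i) ε hε
  obtain ⟨δ, hδ, hn⟩ := mem_nhds_box.1 hnear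
  refine ⟨ε, hε, δ, hδ, fun t ht => ?_⟩
  obtain ⟨h1, h2⟩ := hn (fun _ => t) (fun _ => ht)
  have hF1 := hval w hwT.2
  have hF2 := hval _ h1
  simp only [tl_oc] at hF2 ⊢
  rw [hF1, hF2]
  refine ⟨⟨?_, ?_⟩, ⟨?_, ?_⟩⟩
  · rintro _ ⟨i, rfl⟩
    exact ⟨_, ⟨i, rfl⟩, by rw [abs_sub_comm]; exact h2 i⟩
  · rintro _ _ ⟨i, rfl⟩ ⟨j, rfl⟩ hij
    by_contra hne
    have := hgap i j fun h => hne (by rw [h])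
    simp only at hij
    linarith
  · rintro _ ⟨i, rfl⟩
    exact ⟨_, ⟨i, rfl⟩, h2 i⟩
  · rintro _ _ ⟨i, rfl⟩ ⟨j, rfl⟩ hij
    by_contra hne
    have h3 := hgap i j fun h => hne (by rw [h])
    have h4 := h2 i
    have h5 := h2 j
    simp only [abs_lt] at hij h4 h5
    rcases le_abs.1 h3 with h3 | h3 <;> linarith [hij.1, hij.2, h4.1, h4.2, h5.1, h5.2]

/-- Representatives of the complementary intervals. -/
theorem exists_rep {B : Set ℝ} (hB : B.Finite) (t : ℝ) (ht : t ∉ B) :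
    ∃ r, (r = 0 ∨ ∃ b ∈ B, r = b + 1 ∨ r = b - 1 ∨ ∃ b' ∈ B, r = (b + b') / 2) ∧
      ∃ C : Set ℝ, C.OrdConnected ∧ t ∈ C ∧ r ∈ C ∧ Disjoint C B := by
  have hlo : (B ∩ Iio t).Nonempty → ∃ b ∈ B, b < t ∧ ∀ c ∈ B, c < t → c ≤ b := by
    intro h
    obtain ⟨b, hb, hm⟩ := exists_max_image _ id (hB.inter_of_left _) h
    exact ⟨b, hb.1, hb.2, fun c h1 h2 => hm c ⟨h1, h2⟩⟩
  have hhi : (B ∩ Ioi t).Nonempty → ∃ b ∈ B, t < b ∧ ∀ c ∈ B, t < c → b ≤ c := by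
    intro h
    obtain ⟨b, hb, hm⟩ := exists_min_image _ id (hB.inter_of_left _) h
    exact ⟨b, hb.1, hb.2, fun c h1 h2 => hm c ⟨h1, h2⟩⟩
  have hne : ∀ c ∈ B, c < t ∨ t < c := fun c hc => lt_or_gt_of_ne fun h => ht (h ▸ hc)
  by_cases h1 : (B ∩ Iio t).Nonempty <;> by_cases h2 : (B ∩ Ioi t).Nonempty
  · obtain ⟨b, hb, hbt, hbm⟩ := hlo h1
    obtain ⟨b', hb', hbt', hbm'⟩ := hhi h2
    refine ⟨(b + b') / 2, Or.inr ⟨b, hb, Or.inr (Or.inr ⟨b', hb', rfl⟩)⟩, Ioo b b', ordConnected_Ioo,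
      ⟨hbt, hbt'⟩, ⟨by linarith, by linarith⟩, ?_⟩
    rw [Set.disjoint_left]
    intro c hc hcB
    rcases hne c hcB with h | h
    · exact absurd (hbm c hcB h) (not_le.2 hc.1)
    · exact absurd (hbm' c hcB h) (not_le.2 hc.2)
  · obtain ⟨b, hb, hbt, hbm⟩ := hlo h1
    refine ⟨b + 1, Or.inr ⟨b, hb, Or.inl rfl⟩, Ioi b, ordConnected_Ioi,
      hbt, by simp, ?_⟩
    rw [Set.disjoint_left]
    intro c hc hcB
    rcases hne c hcB with h | h
    · exact absurd (hbm c hcB h) (not_le.2 hc)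
    · exact h2 ⟨c, hcB, h⟩
  · obtain ⟨b', hb', hbt', hbm'⟩ := hhi h2
    refine ⟨b' - 1, Or.inr ⟨b', hb', Or.inr (Or.inl rfl)⟩, Iio b', ordConnected_Iio,
      hbt', by simp, ?_⟩
    rw [Set.disjoint_left]
    intro c hc hcB
    rcases hne c hcB with h | h
    · exact h1 ⟨c, hcB, h⟩
    · exact absurd (hbm' c hcB h) (not_le.2 hc)
  · refine ⟨0, Or.inl rfl, univ, ordConnected_univ, mem_univ _, mem_univ _, ?_⟩
    rw [Set.disjoint_left]
    intro c hc hcB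
    rcases hne c hcB with h | h
    · exact h1 ⟨c, hcB, h⟩
    · exact h2 ⟨c, hcB, h⟩

theorem unif_fin [Finite α] {F : Set (Option α → ℝ)} (hF : S.DefSet F)
    (hfin : ∀ x, (Fib F x).Finite) : ∃ M : ℕ, ∀ x, (Fib F x).ncard ≤ M := by
  induction α using Finite.induction_empty_option with
  | of_equiv e ih =>
    have h0 : ∀ x t, (fun o : Option _ => oc x t (o.map e.symm)) = oc (fun i => x (e.symm i)) t := by
      intro x t
      funext o
      cases o <;> rfl
    obtain ⟨M, hM⟩ := ih (F := {w | (fun o : Option _ => w (o.map e.symm)) ∈ F})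
      (DP.reindex hF _) (fun x => (hfin fun i => x (e.symm i)).subset fun t ht => by
        change _ ∈ F at ht
        rw [h0] at ht
        exact ht)
    refine ⟨M, fun x => le_of_eq_of_le ?_ (hM fun i => x (e i))⟩
    congr 1
    ext t
    change _ ↔ _ ∈ F
    rw [h0]
    simp [Fib]
  | h_empty =>
    refine ⟨(Fib F 0).ncard, fun x => ?_⟩
    rw [Subsingleton.elim x 0]
  | h_option ih =>
    rename_i α _
    have hG := def_Good hF
    let Bd : Set (Option α → ℝ) := {p | ¬ p ∈ Good F}
    have hBd : S.DefSet Bd := DP.not hG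
    have hBfin : ∀ x, (Fib Bd x).Finite := by
      intro x
      by_contra hinf
      obtain ⟨a, b, hab, h⟩ := (infinite_iff hBd x).1 hinf
      obtain ⟨t, h1, h2, h3⟩ := exists_good hF hfin x hab
      exact h t h1 h2 h3
    let R : Set (Option α → ℝ) := {p | p ∈ Bd ∨ p none = 0 ∨ ∃ b, oc (tl p) b ∈ Bd ∧
      (p none = b + 1 ∨ p none = b - 1 ∨ ∃ b', oc (tl p) b' ∈ Bd ∧ p none = (b + b') / 2)}
    have hR : S.DefSet R := dfn
    have hRfin : ∀ x, (Fib R x).Finite := by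
      intro x
      have hB := hBfin x
      have h2 : (Fib Bd x ∪ {0} ∪ ((fun b => b + 1) '' Fib Bd x) ∪ ((fun b => b - 1) '' Fib Bd x) ∪
        (Set.image2 (fun b b' => (b + b') / 2) (Fib Bd x) (Fib Bd x))).Finite :=
        ((((hB.union (finite_singleton 0)).union (hB.image _)).union (hB.image _)).union
          (Set.Finite.image2 _ hB hB))
      refine h2.subset ?_
      rintro t (h | h | ⟨b, hb, h | h | ⟨b', hb', h⟩⟩)
      · exact Or.inl (Or.inl (Or.inl (Or.inl h)))
      · exact Or.inl (Or.inl (Or.inl (Or.inr h)))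
      · exact Or.inl (Or.inl (Or.inr ⟨b, hb, h.symm⟩))
      · exact Or.inl (Or.inr ⟨b, hb, h.symm⟩)
      · exact Or.inr ⟨b, hb, b', hb', h.symm⟩
    obtain ⟨M1, hM1⟩ := ih hR hRfin
    let Fi : ℕ → Set (Option α → ℝ) := fun i => {q | ∃ t, oc (tl q) t ∈ Rk R i ∧
      oc (oc (tl q) t) (q none) ∈ F}
    have hRk := def_Rk hR
    have hFi : ∀ i, S.DefSet (Fi i) := fun i => dfn
    have hFifin : ∀ i x, (Fib (Fi i) x).Finite := by
      intro i x
      refine (hfin (oc x (sel (Rk R i) x))).subset ?_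
      rintro y ⟨t, h1, h2⟩
      change oc (oc x _) y ∈ F
      rw [sel_eq (Rk_sub R i x) (y := t) h1]
      exact h2
    choose M hM using fun i => ih (hFi i) (hFifin i)
    refine ⟨∑ i ∈ Finset.range M1, M i, fun p => ?_⟩
    have hrep : ∃ r, oc (tl p) r ∈ R ∧ (Fib F p).ncard = (Fib F (oc (tl p) r)).ncard := by
      by_cases hp : p ∈ Bd
      · exact ⟨p none, by rw [oc_tl]; exact Or.inl hp, by rw [oc_tl]⟩
      · obtain ⟨r, hr, C, hC, h1, h2, h3⟩ := exists_rep (hBfin (tl p)) (p none)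
          (fun hc => hp (by have hc' : oc (tl p) (p none) ∈ Bd := hc; rwa [oc_tl] at hc'))
        refine ⟨r, ?_, ?_⟩
        · right
          rcases hr with hr | ⟨b, hb, hr⟩
          · exact Or.inl hr
          · refine Or.inr ⟨b, hb, ?_⟩
            rcases hr with hr | hr | ⟨b', hb', hr⟩
            exacts [Or.inl hr, Or.inr (Or.inl hr), Or.inr (Or.inr ⟨b', hb', hr⟩)]
        · have := good_const hfin (x := tl p) hC (fun t ht => by
            by_contra hc
            exact Set.disjoint_left.1 h3 ht hc) h1 h2
          rwa [oc_tl] at this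
    obtain ⟨r, hr, hcard⟩ := hrep
    obtain ⟨i, hi, hi2⟩ := Rk_exists (hRfin _) hr
    rw [hcard]
    refine le_trans ?_ (Finset.single_le_sum (f := M) (fun _ _ => Nat.zero_le _)
      (Finset.mem_range.2 (hi.trans_le (hM1 _))))
    refine le_trans (ncard_le_ncard ?_ (hFifin i (tl p))) (hM i (tl p))
    intro y hy
    exact ⟨r, hi2, hy⟩

end OM
end unifin

section piecewise
open Set Topology
namespace OM
variable {S : OMinimalRealExpansion} {α β γ : Type}

/-- Shear homeomorphism. -/
def shear (P : ℝ → α → ℝ) (hP : ∀ i, Continuous fun t => P t i) :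
    (Option α → ℝ) ≃ₜ (Option α → ℝ) where
  toFun y := oc (fun i => y (some i) + P (y none) i) (y none)
  invFun y := oc (fun i => y (some i) - P (y none) i) (y none)
  left_inv y := by funext o; cases o <;> simp
  right_inv y := by funext o; cases o <;> simp
  continuous_toFun := by
    refine continuous_pi fun o => ?_
    rcases o with _ | i
    · exact continuous_apply none
    · exact (continuous_apply (some i)).add ((hP i).comp (continuous_apply none))
  continuous_invFun := by
    refine continuous_pi fun o => ?_
    rcases o with _ | i
    · exact continuous_apply none
    · exact (continuous_apply (some i)).sub ((hP i).comp (continuous_apply none))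

theorem df_shear [Finite α] [Finite β] {P : ℝ → α → ℝ} (hP : ∀ i, Continuous fun t => P t i)
    (hP2 : ∀ i, DF S fun w : Unit → ℝ => P (w ()) i) {e : (β → ℝ) → Option α → ℝ}
    (he : ∀ j, DF S fun w => e w j) (j : Option α) : DF S fun w => shear P hP (e w) j := by
  refine DF.ocApp (fun i => DF.add (he _) ?_) (he _) j
  exact DF.comp (hP2 i) (e := fun w (_ : Unit) => e w none) fun _ => he _

theorem df_shear_symm [Finite α] [Finite β] {P : ℝ → α → ℝ} (hP : ∀ i, Continuous fun t => P t i)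
    (hP2 : ∀ i, DF S fun w : Unit → ℝ => P (w ()) i) {e : (β → ℝ) → Option α → ℝ}
    (he : ∀ j, DF S fun w => e w j) (j : Option α) : DF S fun w => (shear P hP).symm (e w) j := by
  refine DF.ocApp (fun i => DF.sub (he _) ?_) (he _) j
  exact DF.comp (hP2 i) (e := fun w (_ : Unit) => e w none) fun _ => he _

theorem continuous_tl : Continuous (tl : (Option α → ℝ) → α → ℝ) :=
  continuous_pi fun i => continuous_apply (some i)

theorem pw_cont [Finite α] {f : (α → ℝ) → ℝ} (hf : DF S f) :
    ∃ (ι : Type) (_ : Finite ι) (X : ι → Set (α → ℝ)), (∀ k, S.DefSet (X k)) ∧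
      (∀ x, ∃ k, x ∈ X k) ∧ ∀ k, ContinuousOn f (X k) := by
  induction α using Finite.induction_empty_option with
  | of_equiv e ih =>
    obtain ⟨ι, hι, X, h1, h2, h3⟩ := ih (hf.reindex e.symm)
    refine ⟨ι, hι, fun k => {w | (fun i => w (e i)) ∈ X k}, fun k => DP.reindex (h1 k) e,
      fun x => h2 _, fun k => ?_⟩
    have hc : Continuous fun (w : _ → ℝ) => (fun i => w (e i)) :=
      continuous_pi fun i => continuous_apply (e i)
    refine ((h3 k).comp hc.continuousOn (fun w hw => hw)).congr fun w hw => ?_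
    simp
  | h_empty =>
    refine ⟨Unit, inferInstance, fun _ => univ, fun _ => DP.const True, fun x => ⟨(), mem_univ _⟩,
      fun _ => Continuous.continuousOn (continuous_of_discreteTopology)⟩
  | h_option ih =>
    rename_i α _
    obtain ⟨P, hP1, hP2, hP3⟩ := good_shear (F := {x | ¬ ContinuousAt f x}) (DP.not (def_cont hf))
      (generic_cont hf)
    let Y : Set (Option α → ℝ) := {y | shear P hP1 y ∈ {x | ¬ ContinuousAt f x}}
    have hY : S.DefSet Y := DP.mem (DP.not (def_cont hf)) (df_shear hP1 hP2 fun j => DF.coord _)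
    have hYfin : ∀ x, (Fib Y x).Finite := hP3
    obtain ⟨M, hM⟩ := unif_fin hY hYfin
    have hRk := def_Rk hY
    have hsel := fun i => df_sel (hRk i) (Rk_sub Y i)
    have hfi : ∀ i : Fin M, DF S fun x => f (shear P hP1 (oc x (sel (Rk Y i) x))) := fun i =>
      DF.comp hf (df_shear hP1 hP2 (DF.ocApp (fun j => DF.coord _) (hsel i)))
    choose ι hι X h1 h2 h3 using fun i : Fin M => ih (hfi i)
    have hX : ∀ (i : Fin M) k, S.DefSet {y | (shear P hP1).symm y ∈ Rk Y i ∧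
        tl ((shear P hP1).symm y) ∈ X i k} := by
      intro i k
      refine DP.and (DP.mem (hRk i) (df_shear_symm hP1 hP2 fun j => DF.coord _))
        (DP.mem (h1 i k) fun j => DF.tlApp (df_shear_symm hP1 hP2 (fun j => DF.coord _) _))
    refine ⟨Option (Σ i, ι i), inferInstance, fun o => o.elim {x | ContinuousAt f x}
      (fun p => {y | (shear P hP1).symm y ∈ Rk Y p.1 ∧ tl ((shear P hP1).symm y) ∈ X p.1 p.2}),
      ?_, ?_, ?_⟩
    · rintro (_ | ⟨i, k⟩)
      · exact def_cont hf
      · exact hX i k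
    · intro x
      by_cases hx : ContinuousAt f x
      · exact ⟨none, hx⟩
      · have hxY : (shear P hP1).symm x ∈ Y := by
          have h : ¬ ContinuousAt f (shear P hP1 ((shear P hP1).symm x)) := by
            rw [Homeomorph.apply_symm_apply]; exact hx
          exact h
        rw [← oc_tl ((shear P hP1).symm x)] at hxY
        obtain ⟨i, hi, hi2⟩ := Rk_exists (hYfin _) hxY
        obtain ⟨k, hk⟩ := h2 ⟨i, hi.trans_le (hM _)⟩ (tl ((shear P hP1).symm x))
        rw [oc_tl] at hi2
        exact ⟨some ⟨⟨i, _⟩, k⟩, hi2, hk⟩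
    · rintro (_ | ⟨i, k⟩)
      · exact fun x hx => ContinuousAt.continuousWithinAt hx
      · have hc : Continuous fun y => tl ((shear P hP1).symm y) :=
          continuous_tl.comp (shear P hP1).symm.continuous
        refine ((h3 i k).comp hc.continuousOn (fun y hy => hy.2)).congr ?_
        rintro y ⟨hy1, hy2⟩
        rw [← oc_tl ((shear P hP1).symm y)] at hy1
        simp only [Function.comp]
        rw [sel_eq (Rk_sub Y i _) hy1, oc_tl, Homeomorph.apply_symm_apply]

/-- The `ℓ¹` distance. -/
def d1 [Fintype α] (x y : α → ℝ) : ℝ := ∑ i, |x i - y i|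

theorem d1_nonneg [Fintype α] (x y : α → ℝ) : 0 ≤ d1 x y :=
  Finset.sum_nonneg fun _ _ => abs_nonneg _

theorem d1_tri [Fintype α] (x y z : α → ℝ) : d1 x z ≤ d1 x y + d1 y z := by
  unfold d1
  rw [← Finset.sum_add_distrib]
  exact Finset.sum_le_sum fun i _ => abs_sub_le _ _ _

theorem d1_comm [Fintype α] (x y : α → ℝ) : d1 x y = d1 y x := by
  unfold d1
  exact Finset.sum_congr rfl fun i _ => abs_sub_comm _ _

theorem d1_self [Fintype α] (x : α → ℝ) : d1 x x = 0 := by simp [d1]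

theorem d1_coord [Fintype α] (x y : α → ℝ) (i : α) : |x i - y i| ≤ d1 x y :=
  Finset.single_le_sum (f := fun i => |x i - y i|) (fun _ _ => abs_nonneg _) (Finset.mem_univ i)

theorem d1_cont [Fintype α] (y : α → ℝ) : Continuous fun x => d1 x y := by
  unfold d1
  fun_prop

theorem d1_near [Fintype α] (p : α → ℝ) {r : ℝ} (hr : 0 < r) : ∀ᶠ x in 𝓝 p, d1 x p < r :=
  (d1_cont p).continuousAt.eventually_lt continuousAt_const (by simpa [d1_self] using hr)

/-- Box limits of `ξ` along `D`. -/
def BL (D : Set (α → ℝ)) (ξ : (α → ℝ) → ℝ) (p : α → ℝ) (L : ℝ) : Prop :=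
  ∀ ε : ℝ, 0 < ε → ∃ δ : ℝ, 0 < δ ∧ ∀ y : α → ℝ, y ∈ D → (∀ i, |y i - p i| < δ) → |ξ y - L| < ε

theorem BL.of_tendsto [Finite α] {D : Set (α → ℝ)} {ξ : (α → ℝ) → ℝ} {p : α → ℝ} {L : ℝ}
    (h : Filter.Tendsto ξ (𝓝[D] p) (𝓝 L)) : BL D ξ p L := by
  intro ε hε
  have := Metric.tendsto_nhds.1 h ε hε
  rw [eventually_nhdsWithin_iff] at this
  obtain ⟨δ, hδ, h2⟩ := mem_nhds_box.1 this
  exact ⟨δ, hδ, fun y hy hb => h2 y hb hy⟩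

theorem BL.mem {D : Set (α → ℝ)} {ξ : (α → ℝ) → ℝ} {p : α → ℝ} {L : ℝ} (h : BL D ξ p L)
    (hp : p ∈ D) : ξ p = L := by
  by_contra hne
  obtain ⟨δ, hδ, h2⟩ := h |ξ p - L| (abs_pos.2 (sub_ne_zero.2 hne))
  exact lt_irrefl _ (h2 p hp fun i => by simpa using hδ)

/-- Infimum of a family `y ↦ g x y` over `D`. -/
theorem df_inf [Finite α] {D : Set (α → ℝ)} (hD : S.DefSet D) (hne : D.Nonempty)
    {g : (α → ℝ) → (α → ℝ) → ℝ} (hg0 : ∀ x y, y ∈ D → 0 ≤ g x y)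
    (hg : DF S fun w : α ⊕ α → ℝ => g (fun i => w (Sum.inl i)) (fun i => w (Sum.inr i))) :
    DF S fun x => sInf (g x '' D) := by
  have hg' : DF S fun w : Option α ⊕ α → ℝ => g (fun i => w (Sum.inl (some i)))
      (fun i => w (Sum.inr i)) :=
    hg.reindex (Sum.map some id)
  have hg'' : DF S fun w : Option (Option α) ⊕ α → ℝ => g (fun i => w (Sum.inl (some (some i))))
      (fun i => w (Sum.inr i)) :=
    hg.reindex (Sum.map (fun i => some (some i)) id)
  have : DP S fun v : Option α → ℝ => (∀ y : α → ℝ, y ∈ D → v none ≤ g (fun i => v (some i)) y) ∧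
      ∀ c : ℝ, (∀ y : α → ℝ, y ∈ D → c ≤ g (fun i => v (some i)) y) → c ≤ v none :=
    DP.and (DP.allT (DP.imp dfn (DP.le dff hg')))
      (DP.all (DP.imp (DP.allT (DP.imp dfn (DP.le dff hg''))) dfn))
  refine this.congr fun v => ?_
  have hGLB : IsGLB (g (fun i => v (some i)) '' D) (sInf (g (fun i => v (some i)) '' D)) :=
    isGLB_csInf (hne.image _) ⟨0, by rintro _ ⟨y, hy, rfl⟩; exact hg0 _ _ hy⟩
  constructor
  · rintro ⟨h1, h2⟩
    refine IsGLB.unique ⟨?_, ?_⟩ hGLB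
    · rintro _ ⟨y, hy, rfl⟩; exact h1 y hy
    · intro c hc; exact h2 c fun y hy => hc ⟨y, hy, rfl⟩
  · intro h
    rw [h]
    exact ⟨fun y hy => hGLB.1 ⟨y, hy, rfl⟩, fun c hc => hGLB.2 (by
      rintro _ ⟨y, hy, rfl⟩; exact hc y hy)⟩

/-- Definable Tietze extension, normalized version (Hausdorff's formula). -/
theorem tietze1 [Finite α] {D : Set (α → ℝ)} (hD : S.DefSet D) (hne : D.Nonempty)
    {ξ : (α → ℝ) → ℝ} (hξ : DF S ξ) (hb : ∀ x ∈ D, 1 ≤ ξ x ∧ ξ x ≤ 2)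
    (hlim : ∀ p ∈ closure D, ∃ L, BL D ξ p L) :
    ∃ f : (α → ℝ) → ℝ, DF S f ∧ Continuous f ∧ (∀ x, 1 ≤ f x ∧ f x ≤ 2) ∧
      ∀ x ∈ D, f x = ξ x := by
  classical
  have := Fintype.ofFinite α
  -- closure points approximated in `d1`
  have hcl : ∀ p ∈ closure D, ∀ r > 0, ∃ y ∈ D, d1 y p < r := by
    intro p hp r hr
    obtain ⟨y, hy, hyD⟩ := mem_closure_iff_nhds.1 hp _ (d1_near p hr)
    exact ⟨y, hyD, hy⟩
  have hBL : ∀ {p L}, BL D ξ p L → ∀ ε > 0, ∃ δ > 0, ∀ y ∈ D, d1 y p < δ → |ξ y - L| < ε := by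
    intro p L h ε hε
    obtain ⟨δ, hδ, h2⟩ := h ε hε
    exact ⟨δ, hδ, fun y hy hd => h2 y hy fun i => (d1_coord y p i).trans_lt hd⟩
  let A : Set (Option α → ℝ) := {v | tl v ∈ closure D ∧ ∀ ε : ℝ, 0 < ε → ∃ δ : ℝ, 0 < δ ∧
    ∀ y : α → ℝ, y ∈ D → (∀ i, |y i - tl v i| < δ) → |ξ y - v none| < ε}
  have hclD := def_closure hD
  have hA : S.DefSet A := dfn
  have hAsub : ∀ x, (Fib A x).Subsingleton := by
    rintro x L ⟨h0, h1⟩ L' ⟨-, h2⟩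
    by_contra hLL
    obtain ⟨δ, hδ, h3⟩ := hBL h1 (|L - L'| / 2) (by have := abs_pos.2 (sub_ne_zero.2 hLL); linarith)
    obtain ⟨δ', hδ', h4⟩ := hBL h2 (|L - L'| / 2) (by have := abs_pos.2 (sub_ne_zero.2 hLL); linarith)
    obtain ⟨y, hy, hyd⟩ := hcl x h0 (min δ δ') (lt_min hδ hδ')
    have h5 := h3 y hy (hyd.trans_le (min_le_left _ _))
    have h6 := h4 y hy (hyd.trans_le (min_le_right _ _))
    have h7 : |L - L'| ≤ |ξ y - L| + |ξ y - L'| := by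
      rw [abs_sub_comm (ξ y) L]; exact abs_sub_le _ _ _
    simp only [oc_none] at h5 h6
    linarith
  let Lf : (α → ℝ) → ℝ := sel A
  have hLf : ∀ p ∈ closure D, BL D ξ p (Lf p) := by
    intro p hp
    obtain ⟨L, hL⟩ := hlim p hp
    exact (sel_mem (A := A) ⟨L, hp, hL⟩).2
  have hLb : ∀ p ∈ closure D, 1 ≤ Lf p ∧ Lf p ≤ 2 := by
    intro p hp
    constructor
    · by_contra hc
      push Not at hc
      obtain ⟨δ, hδ, h3⟩ := hBL (hLf p hp) (1 - Lf p) (by linarith)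
      obtain ⟨y, hy, hyd⟩ := hcl p hp δ hδ
      have := h3 y hy hyd
      rw [abs_lt] at this
      linarith [(hb y hy).1]
    · by_contra hc
      push Not at hc
      obtain ⟨δ, hδ, h3⟩ := hBL (hLf p hp) (Lf p - 2) (by linarith)
      obtain ⟨y, hy, hyd⟩ := hcl p hp δ hδ
      have := h3 y hy hyd
      rw [abs_lt] at this
      linarith [(hb y hy).2]
  let ρ : (α → ℝ) → ℝ := fun x => sInf ((fun y => d1 x y) '' D)
  let g : (α → ℝ) → ℝ := fun x => sInf ((fun y => ξ y * d1 x y) '' D)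
  have hξ0 : ∀ y ∈ D, 0 ≤ ξ y := fun y hy => zero_le_one.trans (hb y hy).1
  have hρdf : DF S ρ := by
    refine df_inf (g := fun x y => d1 x y) hD hne (fun x y _ => d1_nonneg _ _) ?_
    unfold d1
    exact dff
  have hgdf : DF S g := by
    refine df_inf (g := fun x y => ξ y * d1 x y) hD hne
      (fun x y hy => mul_nonneg (hξ0 y hy) (d1_nonneg _ _)) ?_
    unfold d1
    exact dff
  have hρle : ∀ x, ∀ y ∈ D, ρ x ≤ d1 x y := fun x y hy =>
    csInf_le ⟨0, by rintro _ ⟨y, hy, rfl⟩; exact d1_nonneg _ _⟩ ⟨y, hy, rfl⟩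
  have hgle : ∀ x, ∀ y ∈ D, g x ≤ ξ y * d1 x y := fun x y hy =>
    csInf_le ⟨0, by rintro _ ⟨y, hy, rfl⟩; exact mul_nonneg (hξ0 y hy) (d1_nonneg _ _)⟩ ⟨y, hy, rfl⟩
  have hρge : ∀ x c, (∀ y ∈ D, c ≤ d1 x y) → c ≤ ρ x := fun x c h =>
    le_csInf (hne.image _) (by rintro _ ⟨y, hy, rfl⟩; exact h y hy)
  have hgge : ∀ x c, (∀ y ∈ D, c ≤ ξ y * d1 x y) → c ≤ g x := fun x c h =>
    le_csInf (hne.image _) (by rintro _ ⟨y, hy, rfl⟩; exact h y hy)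
  have hρlip : ∀ x x', ρ x - ρ x' ≤ d1 x x' := by
    intro x x'
    have := hρge x' (ρ x - d1 x x') fun y hy => by
      linarith [hρle x y hy, d1_tri x x' y]
    linarith
  have hglip : ∀ x x', g x - g x' ≤ 2 * d1 x x' := by
    intro x x'
    have := hgge x' (g x - 2 * d1 x x') fun y hy => by
      have h1 := hgle x y hy
      have h2 := mul_le_mul_of_nonneg_left (d1_tri x x' y) (hξ0 y hy)
      have h3 := mul_le_mul_of_nonneg_right (hb y hy).2 (d1_nonneg x x')
      linarith
    linarith
  have hlipc : ∀ (h : (α → ℝ) → ℝ), (∀ x x', h x - h x' ≤ 2 * d1 x x') → Continuous h := by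
    intro h hl
    rw [continuous_iff_continuousAt]
    intro p
    rw [ContinuousAt, Metric.tendsto_nhds]
    intro ε hε
    filter_upwards [d1_near p (half_pos hε)] with x hx
    rw [Real.dist_eq, abs_lt]
    have h1 := hl x p
    have h2 := hl p x
    rw [d1_comm p x] at h2
    constructor <;> linarith
  have hρc : Continuous ρ := hlipc ρ fun x x' => by linarith [hρlip x x', d1_nonneg x x']
  have hgc : Continuous g := hlipc g hglip
  have hρpos : ∀ x, x ∉ closure D → 0 < ρ x := by
    intro x hx
    have h1 : (closure D)ᶜ ∈ 𝓝 x := isClosed_closure.isOpen_compl.mem_nhds hx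
    obtain ⟨ε, hε, h2⟩ := mem_nhds_box.1 h1
    refine hε.trans_le (hρge x ε fun y hy => ?_)
    by_contra hc
    push Not at hc
    refine h2 y (fun i => ?_) (subset_closure hy)
    rw [abs_sub_comm]
    exact (d1_coord x y i).trans_lt hc
  have hgρ : ∀ x, ρ x ≤ g x ∧ g x ≤ 2 * ρ x := by
    intro x
    constructor
    · refine hgge x _ fun y hy => (hρle x y hy).trans ?_
      nlinarith [(hb y hy).1, d1_nonneg x y]
    · have := hρge x (g x / 2) fun y hy => by
        have h1 := hgle x y hy
        nlinarith [(hb y hy).2, d1_nonneg x y]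
      linarith
  let f : (α → ℝ) → ℝ := fun x => if x ∈ closure D then Lf x else g x / ρ x
  have hLdf : DF S Lf := df_sel hA hAsub
  refine ⟨f, ?_, ?_, ?_, ?_⟩
  · refine DF.ite (P := fun x => x ∈ closure D) hclD hLdf (DF.div hgdf hρdf)
  · rw [continuous_iff_continuousAt]
    intro p
    by_cases hp : p ∈ closure D
    · have hfp : f p = Lf p := if_pos hp
      rw [ContinuousAt, hfp, Metric.tendsto_nhds]
      intro ε0 hε0
      obtain ⟨ε, hε, hεε⟩ := exists_between hε0
      set L := Lf p with hL
      obtain ⟨δ, hδ, h3⟩ := hBL (hLf p hp) ε hε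
      filter_upwards [d1_near p (show 0 < δ / 4 by linarith)] with x hx
      refine lt_of_le_of_lt ?_ hεε
      by_cases hxc : x ∈ closure D
      · rw [show f x = Lf x from if_pos hxc, Real.dist_eq]
        refine le_of_forall_pos_le_add fun η hη => ?_
        obtain ⟨δ', hδ', h4⟩ := hBL (hLf x hxc) η hη
        obtain ⟨y, hy, hyd⟩ := hcl x hxc (min δ' (δ / 4)) (lt_min hδ' (by linarith))
        have h5 := h4 y hy (hyd.trans_le (min_le_left _ _))
        have h6 := h3 y hy (by
          have := d1_tri y x p
          have := hyd.trans_le (min_le_right δ' (δ / 4))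
          linarith)
        have h7 := abs_sub_le (Lf x) (ξ y) L
        rw [abs_sub_comm (Lf x) (ξ y)] at h7
        rw [← hL] at h6
        linarith
      · have hfx : f x = g x / ρ x := if_neg hxc
        have hρx := hρpos x hxc
        have hρp : ρ x ≤ d1 x p := by
          refine le_of_forall_pos_le_add fun η hη => ?_
          obtain ⟨y, hy, hyd⟩ := hcl p hp η hη
          have := hρle x y hy
          have := d1_tri x p y
          rw [d1_comm p y] at this
          linarith
        have hLp := hLb p hp
        have hlo : (L - ε) * ρ x ≤ g x := by
          refine hgge x _ fun y hy => ?_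
          have hd := hρle x y hy
          by_cases hyp : d1 y p < δ
          · have h6 := h3 y hy hyp
            rw [abs_lt] at h6
            have h7 : (L - ε) * ρ x ≤ ξ y * ρ x := mul_le_mul_of_nonneg_right (by linarith) hρx.le
            exact h7.trans (mul_le_mul_of_nonneg_left hd (hξ0 y hy))
          · have h8 := d1_tri y x p
            rw [d1_comm y x] at h8
            have h9 : 2 * ρ x ≤ d1 x y := by linarith
            nlinarith [(hb y hy).1]
        have hhi : g x ≤ (L + ε) * ρ x := by
          by_contra hc
          push Not at hc
          have hLe : 0 < L + ε := by linarith
          have h10 : ∃ y ∈ D, d1 x y < min (2 * ρ x) (g x / (L + ε)) := by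
            by_contra hc2
            push Not at hc2
            have := hρge x _ hc2
            have h11 : ρ x < min (2 * ρ x) (g x / (L + ε)) := by
              refine lt_min (by linarith) ?_
              rw [lt_div_iff₀ hLe]
              linarith
            linarith
          obtain ⟨y, hy, hyd⟩ := h10
          have h11 := hyd.trans_le (min_le_left _ _)
          have h12 := hyd.trans_le (min_le_right _ _)
          rw [lt_div_iff₀ hLe] at h12
          have h8 := d1_tri y x p
          rw [d1_comm y x] at h8
          have h6 := h3 y hy (by linarith)
          rw [abs_lt] at h6
          have h13 := hgle x y hy
          have h14 : ξ y * d1 x y ≤ (L + ε) * d1 x y :=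
            mul_le_mul_of_nonneg_right (by linarith) (d1_nonneg _ _)
          linarith
        rw [hfx, Real.dist_eq, abs_le]
        constructor
        · have : L - ε ≤ g x / ρ x := by rw [le_div_iff₀ hρx]; exact hlo
          linarith
        · have : g x / ρ x ≤ L + ε := by rw [div_le_iff₀ hρx]; exact hhi
          linarith
    · have h1 : ContinuousAt (fun x => g x / ρ x) p :=
        hgc.continuousAt.div hρc.continuousAt (hρpos p hp).ne'
      refine h1.congr ?_
      filter_upwards [isClosed_closure.isOpen_compl.mem_nhds hp] with x hx
      exact (if_neg hx).symm
  · intro x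
    by_cases hx : x ∈ closure D
    · rw [show f x = Lf x from if_pos hx]; exact hLb x hx
    · rw [show f x = g x / ρ x from if_neg hx]
      have h1 := hρpos x hx
      rw [le_div_iff₀ h1, div_le_iff₀ h1, one_mul]
      exact hgρ x
  · intro x hx
    rw [show f x = Lf x from if_pos (subset_closure hx)]
    exact ((hLf x (subset_closure hx)).mem hx).symm

theorem tietze [Finite α] {D : Set (α → ℝ)} (hD : S.DefSet D)
    {R : ℝ} (hR : ∀ x ∈ D, ∀ i, |x i| ≤ R)
    {ξ : (α → ℝ) → ℝ} (hξ : DF S ξ) {B : ℝ} (hb : ∀ x ∈ D, |ξ x| ≤ B)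
    (hlim : ∀ p ∈ closure D, ∃ L, BL D ξ p L) :
    ∃ f : (α → ℝ) → ℝ, DF S f ∧ Continuous f ∧ (∃ B', ∀ x, |f x| ≤ B') ∧
      (∃ R', ∀ x, f x ≠ 0 → ∀ i, |x i| ≤ R') ∧ ∀ x ∈ D, f x = ξ x := by
  have := Fintype.ofFinite α
  rcases D.eq_empty_or_nonempty with rfl | hne
  · exact ⟨fun _ => 0, DF.const _, continuous_const, ⟨0, by simp⟩, ⟨0, by simp⟩, by simp⟩
  have hB0 : 0 ≤ B := (abs_nonneg _).trans (hb _ hne.some_mem)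
  set C := B + 1 with hC
  have hC0 : 0 < C := by linarith
  obtain ⟨f, h1, h2, h3, h4⟩ := tietze1 hD hne (ξ := fun x => (ξ x / C + 3) / 2) dff
    (fun x hx => by
      have := hb x hx
      rw [abs_le] at this
      have h1 : ξ x / C ≤ 1 := by rw [div_le_one hC0]; linarith
      have h2 : -1 ≤ ξ x / C := by rw [le_div_iff₀ hC0]; linarith
      constructor <;> linarith)
    (fun p hp => by
      obtain ⟨L, hL⟩ := hlim p hp
      refine ⟨(L / C + 3) / 2, fun ε hε => ?_⟩
      obtain ⟨δ, hδ, h⟩ := hL (2 * C * ε) (by positivity)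
      refine ⟨δ, hδ, fun y hy hyb => ?_⟩
      have h5 := h y hy hyb
      have e : (ξ y / C + 3) / 2 - (L / C + 3) / 2 = (ξ y - L) / (2 * C) := by
        field_simp; ring
      rw [e, abs_div, abs_of_pos (show 0 < 2 * C by linarith), div_lt_iff₀ (by linarith)]
      linarith)
  let Rs : ℝ := ∑ _i : α, R
  let χ : (α → ℝ) → ℝ := fun x => max 0 (min 1 (Rs + 1 - d1 x 0))
  have hχdf : DF S χ := by
    unfold χ d1
    exact dff
  have hχc : Continuous χ := by
    have := d1_cont (0 : α → ℝ)
    unfold χ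
    fun_prop
  have hχ01 : ∀ x, 0 ≤ χ x ∧ χ x ≤ 1 := fun x =>
    ⟨le_max_left _ _, max_le zero_le_one (min_le_left _ _)⟩
  refine ⟨fun x => (2 * f x - 3) * C * χ x, dff, by fun_prop, ⟨C, fun x => ?_⟩,
    ⟨Rs + 1, fun x hx i => ?_⟩, fun x hx => ?_⟩
  · rw [abs_mul, abs_mul, abs_of_pos hC0, abs_of_nonneg (hχ01 x).1]
    have : |2 * f x - 3| ≤ 1 := by rw [abs_le]; constructor <;> linarith [(h3 x).1, (h3 x).2]
    have h5 : |2 * f x - 3| * C ≤ 1 * C := mul_le_mul_of_nonneg_right this hC0.le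
    have h6 : |2 * f x - 3| * C * χ x ≤ |2 * f x - 3| * C * 1 :=
      mul_le_mul_of_nonneg_left (hχ01 x).2 (by positivity)
    linarith
  · by_contra hc
    push Not at hc
    have h5 := d1_coord x 0 i
    simp only [Pi.zero_apply, sub_zero] at h5
    refine hx ?_
    have : χ x = 0 := max_eq_left ((min_le_right _ _).trans (by linarith))
    simp only [this, mul_zero]
  · have hd : d1 x 0 ≤ Rs := Finset.sum_le_sum fun i _ => by simpa using hR x hx i
    have : χ x = 1 := by
      have : min 1 (Rs + 1 - d1 x 0) = 1 := min_eq_left (by linarith)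
      change max 0 (min 1 _) = 1
      rw [this]; simp
    simp only [this, h4 x hx]
    field_simp
    ring

end OM
end piecewise

section strat
open Set Topology
namespace OM
variable {S : OMinimalRealExpansion} {α β γ ι κ : Type}

/-- Conical (definable-in-time) contraction of a neighbourhood of `p`, preserving labels. -/
def LC (S : OMinimalRealExpansion) (lab : (α → ℝ) → ι) (p : α → ℝ) : Prop :=
  ∃ V ∈ 𝓝 p, ∃ H : (α → ℝ) → ℝ → (α → ℝ),
    ContinuousOn (fun q : (α → ℝ) × ℝ => H q.1 q.2) (V ×ˢ Icc 0 1) ∧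
    ∀ x ∈ V, H x 0 = x ∧ H x 1 = p ∧ (∀ t ∈ Ico (0 : ℝ) 1, lab (H x t) = lab x) ∧
      ∀ i, DF S fun w : Unit → ℝ => H x (w ()) i

/-- Local connectedness of the fibre over `l` at `p`. -/
def LCF (lab : (α → ℝ) → ι) (l : ι) (p : α → ℝ) : Prop :=
  ∀ U ∈ 𝓝 p, ∃ V ∈ 𝓝 p, ∃ C : Set (α → ℝ), IsPreconnected C ∧
    (∀ x ∈ V, lab x = l → x ∈ C) ∧ ∀ x ∈ C, lab x = l ∧ x ∈ U

structure Strat (S : OMinimalRealExpansion) (lab : (α → ℝ) → ι) : Prop where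
  defn : ∀ l, S.DefSet {x | lab x = l}
  lcf : ∀ l p, LCF lab l p
  lc : ∀ p, LC S lab p

/-- Convex combination is continuous where weights are, or where the ends agree. -/
theorem conv_cont {X : Type*} [TopologicalSpace X] {u v r : X → ℝ} {s : Set X} {q : X}
    (hu : ContinuousWithinAt u s q) (hv : ContinuousWithinAt v s q)
    (hr : ∀ x ∈ s, 0 ≤ r x ∧ r x ≤ 1)
    (h : u q ≠ v q → ContinuousWithinAt r s q) :
    ContinuousWithinAt (fun x => u x + r x * (v x - u x)) s q := by
  by_cases he : u q = v q
  · have h0 : Filter.Tendsto (fun x => |v x - u x|) (𝓝[s] q) (𝓝 0) := by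
      have := (hv.sub hu).abs
      simpa [ContinuousWithinAt, he] using this
    have h1 : Filter.Tendsto (fun x => r x * (v x - u x)) (𝓝[s] q) (𝓝 0) := by
      refine squeeze_zero_norm' ?_ h0
      filter_upwards [self_mem_nhdsWithin] with x hx
      rw [Real.norm_eq_abs, abs_mul, abs_of_nonneg (hr x hx).1]
      exact mul_le_of_le_one_left (abs_nonneg _) (hr x hx).2
    have h2 := Filter.Tendsto.add (show Filter.Tendsto u (𝓝[s] q) (𝓝 (u q)) from hu) h1
    unfold ContinuousWithinAt
    simpa [he] using h2
  · exact hu.add ((h he).mul (hv.sub hu))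

/-- The label on the total space. -/
noncomputable def liftLab (lab : (α → ℝ) → ι) (g : κ → (α → ℝ) → ℝ) (x : Option α → ℝ) :
    ι × (κ → SignType) :=
  (lab (tl x), fun k => SignType.sign (x none - g k (tl x)))

theorem sign_sub_eq {a b c d : ℝ} (h1 : a < b ↔ c < d) (h2 : b < a ↔ d < c) :
    SignType.sign (a - b) = SignType.sign (c - d) := by
  rcases lt_trichotomy a b with h | h | h
  · have h' := h1.1 h
    rw [sign_neg (sub_neg.2 h), sign_neg (sub_neg.2 h')]
  · have h' : c = d := le_antisymm (not_lt.1 fun h3 => (h2.2 h3).ne' h)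
      (not_lt.1 fun h3 => (h1.2 h3).ne h)
    rw [h, h', sub_self, sub_self]
  · have h' := h2.1 h
    rw [sign_pos (sub_pos.2 h), sign_pos (sub_pos.2 h')]

theorem sign_sub_iff {a b c d : ℝ} (h : SignType.sign (a - b) = SignType.sign (c - d)) :
    (a < b ↔ c < d) ∧ (b < a ↔ d < c) ∧ (a = b ↔ c = d) := by
  refine ⟨?_, ?_, ?_⟩
  · rw [← sub_neg, ← sign_eq_neg_one_iff, h, sign_eq_neg_one_iff, sub_neg]
  · rw [← sub_pos, ← sign_eq_one_iff, h, sign_eq_one_iff, sub_pos]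
  · rw [← sub_eq_zero, ← sign_eq_zero_iff, h, sign_eq_zero_iff, sub_eq_zero]

theorem LC_lift [Finite α] [Finite κ] {lab : (α → ℝ) → ι} {g : κ → (α → ℝ) → ℝ}
    (hg : ∀ k, DF S (g k)) (hgc : ∀ k, Continuous (g k))
    (hcmp : ∀ a b x y, lab x = lab y → (g a x < g b x ↔ g a y < g b y))
    {p : Option α → ℝ} (hlc : LC S lab (tl p)) (hlo : ∃ k, g k (tl p) < p none)
    (hhi : ∃ k, p none < g k (tl p)) : LC S (liftLab lab g) p := by
  classical
  obtain ⟨V', hV', H', hH', hx'⟩ := hlc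
  let V : Set (Option α → ℝ) := {x | tl x ∈ V' ∧ (∀ k, g k (tl p) < p none → g k (tl x) < x none) ∧
    (∀ k, p none < g k (tl p) → x none < g k (tl x)) ∧
    (∀ a b, g a (tl p) < g b (tl p) → g a (tl x) < g b (tl x))}
  have hgt : ∀ k, Continuous fun x : Option α → ℝ => g k (tl x) := fun k =>
    (hgc k).comp continuous_tl
  have hev : ∀ {u v : (Option α → ℝ) → ℝ}, Continuous u → Continuous v →
      ∀ᶠ x in 𝓝 p, u p < v p → u x < v x := by
    intro u v hu hv
    by_cases h : u p < v p
    · filter_upwards [hu.continuousAt.eventually_lt hv.continuousAt h] with x hx _ using hx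
    · exact Filter.Eventually.of_forall fun x h' => absurd h' h
  have hV : V ∈ 𝓝 p := by
    refine Filter.inter_mem (continuous_tl.continuousAt.preimage_mem_nhds hV')
      (Filter.inter_mem ?_ (Filter.inter_mem ?_ ?_))
    · exact Filter.eventually_all.2 fun k => hev (hgt k) (continuous_apply none)
    · exact Filter.eventually_all.2 fun k => hev (continuous_apply none) (hgt k)
    · exact Filter.eventually_all.2 fun a => Filter.eventually_all.2 fun b => hev (hgt a) (hgt b)
  -- patterns
  let Pat : κ → κ → (Option α → ℝ) → Prop := fun a b x => g a (tl x) ≤ x none ∧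
    x none ≤ g b (tl x) ∧ ∀ k, g k (tl x) ≤ g a (tl x) ∨ g b (tl x) ≤ g k (tl x)
  have hPcl : ∀ a b, IsClosed {x | Pat a b x} := by
    intro a b
    refine (isClosed_le (hgt a) (continuous_apply none)).inter
      ((isClosed_le (continuous_apply none) (hgt b)).inter ?_)
    have e : {x : Option α → ℝ | ∀ k, g k (tl x) ≤ g a (tl x) ∨ g b (tl x) ≤ g k (tl x)} =
        ⋂ k, ({x | g k (tl x) ≤ g a (tl x)} ∪ {x | g b (tl x) ≤ g k (tl x)}) := by
      ext x; simp
    change IsClosed {x : Option α → ℝ | ∀ k, g k (tl x) ≤ g a (tl x) ∨ g b (tl x) ≤ g k (tl x)}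
    rw [e]
    exact isClosed_iInter fun k => (isClosed_le (hgt k) (hgt a)).union (isClosed_le (hgt b) (hgt k))
  have hPex : ∀ x ∈ V, ∃ ab : κ × κ, Pat ab.1 ab.2 x := by
    rintro x ⟨-, h1, h2, -⟩
    obtain ⟨k1, hk1⟩ := hlo
    obtain ⟨k2, hk2⟩ := hhi
    obtain ⟨a, ha, ha2⟩ := Set.exists_max_image {k | g k (tl x) ≤ x none} (fun k => g k (tl x))
      (Set.toFinite _) ⟨k1, (h1 k1 hk1).le⟩
    obtain ⟨b, hb, hb2⟩ := Set.exists_min_image {k | x none ≤ g k (tl x)} (fun k => g k (tl x))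
      (Set.toFinite _) ⟨k2, (h2 k2 hk2).le⟩
    refine ⟨(a, b), ha, hb, fun k => ?_⟩
    rcases le_total (g k (tl x)) (x none) with h | h
    · exact Or.inl (ha2 k h)
    · exact Or.inr (hb2 k h)
  let r : κ → κ → (Option α → ℝ) → ℝ := fun a b x =>
    (x none - g a (tl x)) / (g b (tl x) - g a (tl x))
  let w : κ → κ → (Option α → ℝ) → ℝ → ℝ := fun a b x t =>
    if g a (tl p) < g b (tl p) then (1 - t) * r a b x + t * r a b p else r a b x
  let Y : (Option α → ℝ) → ℝ → (α → ℝ) := fun x t => H' (tl x) t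
  let Z : κ → κ → (Option α → ℝ) → ℝ → ℝ := fun a b x t =>
    g a (Y x t) + w a b x t * (g b (Y x t) - g a (Y x t))
  have : Nonempty κ := ⟨hlo.choose⟩
  choose! pat hpat using hPex
  have hY0 : ∀ x ∈ V, Y x 0 = tl x := fun x hx => (hx' _ hx.1).1
  have hY1 : ∀ x ∈ V, Y x 1 = tl p := fun x hx => (hx' _ hx.1).2.1
  have hYl : ∀ x ∈ V, ∀ t ∈ Ico (0 : ℝ) 1, lab (Y x t) = lab (tl x) := fun x hx => (hx' _ hx.1).2.2.1
  have hYc : ContinuousOn (fun q : (Option α → ℝ) × ℝ => Y q.1 q.2) (V ×ˢ Icc 0 1) := by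
    refine hH'.comp (f := fun q : (Option α → ℝ) × ℝ => (tl q.1, q.2)) ?_ ?_
    · exact Continuous.continuousOn (by have := @continuous_tl α; fun_prop)
    · rintro ⟨x, t⟩ ⟨hx, ht⟩
      exact ⟨hx.1, ht⟩
  have hcl : ∀ a b, ∀ x ∈ V, g a (tl x) ≤ g b (tl x) → g a (tl p) ≤ g b (tl p) := fun a b x hx h =>
    not_lt.1 fun h2 => absurd (hx.2.2.2 b a h2) (not_lt.2 h)
  have hgle : ∀ a b, ∀ x ∈ V, ∀ t ∈ Icc (0 : ℝ) 1, g a (tl x) ≤ g b (tl x) →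
      g a (Y x t) ≤ g b (Y x t) := by
    intro a b x hx t ht h
    rcases eq_or_lt_of_le ht.2 with rfl | ht1
    · rw [hY1 x hx]; exact hcl a b x hx h
    · exact not_lt.1 fun h2 => absurd ((hcmp b a _ _ (hYl x hx t ⟨ht.1, ht1⟩)).1 h2) (not_lt.2 h)
  have hgeq : ∀ a b, ∀ x ∈ V, ∀ t ∈ Icc (0 : ℝ) 1, g a (tl x) = g b (tl x) →
      g a (Y x t) = g b (Y x t) := fun a b x hx t ht h =>
    le_antisymm (hgle a b x hx t ht h.le) (hgle b a x hx t ht h.ge)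
  have hgeqp : ∀ a b, ∀ x ∈ V, g a (tl x) = g b (tl x) → g a (tl p) = g b (tl p) :=
    fun a b x hx h => le_antisymm (hcl a b x hx h.le) (hcl b a x hx h.ge)
  have hPp : ∀ a b, ∀ x ∈ V, Pat a b x → g a (tl p) ≤ p none ∧ p none ≤ g b (tl p) :=
    fun a b x hx h => ⟨not_lt.1 fun h2 => absurd (hx.2.2.1 a h2) (not_lt.2 h.1),
      not_lt.1 fun h2 => absurd (hx.2.1 b h2) (not_lt.2 h.2.1)⟩
  have hkp : ∀ k, ∀ x ∈ V, g k (tl x) = x none → g k (tl p) = p none := fun k x hx h =>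
    le_antisymm (not_lt.1 fun h2 => absurd (hx.2.2.1 k h2) (not_lt.2 h.le))
      (not_lt.1 fun h2 => absurd (hx.2.1 k h2) (not_lt.2 h.ge))
  have hrI : ∀ a b, ∀ x : Option α → ℝ, g a (tl x) ≤ x none → x none ≤ g b (tl x) →
      0 ≤ r a b x ∧ r a b x ≤ 1 := fun a b x h1 h2 =>
    ⟨div_nonneg (by linarith) (by linarith), div_le_one_of_le₀ (by linarith) (by linarith)⟩
  have hwI : ∀ a b, ∀ x ∈ V, Pat a b x → ∀ t ∈ Icc (0 : ℝ) 1, 0 ≤ w a b x t ∧ w a b x t ≤ 1 := by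
    intro a b x hx hP t ht
    have h1 := hrI a b x hP.1 hP.2.1
    have h2 := hrI a b p (hPp a b x hx hP).1 (hPp a b x hx hP).2
    change 0 ≤ ite _ _ _ ∧ ite _ _ _ ≤ _
    split_ifs
    · obtain ⟨h3, h4⟩ := ht
      have : 0 ≤ 1 - t := by linarith
      constructor
      · exact add_nonneg (mul_nonneg this h1.1) (mul_nonneg h3 h2.1)
      · nlinarith
    · exact h1
  -- on graphs
  have hZk : ∀ a b, ∀ x ∈ V, Pat a b x → ∀ t ∈ Icc (0 : ℝ) 1, ∀ k, g k (tl x) = x none →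
      Z a b x t = g k (Y x t) := by
    intro a b x hx hP t ht k hk
    by_cases ha : g a (tl x) = x none
    · have hap := hkp a x hx ha
      have h1 : r a b x = 0 := by simp [r, ha]
      have h2 : r a b p = 0 := by simp [r, hap]
      have h3 : w a b x t = 0 := by simp [w, h1, h2]
      change g a (Y x t) + w a b x t * _ = _
      rw [h3, zero_mul, add_zero]
      exact hgeq a k x hx t ht (ha.trans hk.symm)
    · have halt := lt_of_le_of_ne hP.1 ha
      have hb : g b (tl x) = x none := by
        rcases hP.2.2 k with h | h
        · linarith
        · exact le_antisymm (by linarith) hP.2.1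
      have hbp := hkp b x hx hb
      have h1 : r a b x = 1 := by
        simp only [r]; rw [hb]; exact div_self (by linarith)
      have h3 : w a b x t = 1 := by
        simp only [w]
        split_ifs with h
        · have h2 : r a b p = 1 := by
            simp only [r]; rw [hbp]; exact div_self (by linarith)
          rw [h1, h2]; ring
        · exact h1
      change g a (Y x t) + w a b x t * _ = _
      rw [h3, one_mul, add_sub_cancel]
      exact hgeq b k x hx t ht (hb.trans hk.symm)
  have hstrict : ∀ a b, ∀ x : Option α → ℝ, Pat a b x → (∀ k, g k (tl x) ≠ x none) →
      g a (tl x) < x none ∧ x none < g b (tl x) := fun a b x hP h =>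
    ⟨lt_of_le_of_ne hP.1 (h a), lt_of_le_of_ne hP.2.1 (h b).symm⟩
  have hcons : ∀ a b c d, ∀ x ∈ V, Pat a b x → Pat c d x → ∀ t ∈ Icc (0 : ℝ) 1,
      Z a b x t = Z c d x t := by
    intro a b c d x hx hP hQ t ht
    by_cases hk : ∃ k, g k (tl x) = x none
    · obtain ⟨k, hk⟩ := hk
      rw [hZk a b x hx hP t ht k hk, hZk c d x hx hQ t ht k hk]
    · push Not at hk
      obtain ⟨h1, h2⟩ := hstrict a b x hP hk
      obtain ⟨h3, h4⟩ := hstrict c d x hQ hk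
      have hac : g a (tl x) = g c (tl x) := by
        refine le_antisymm ?_ ?_
        · rcases hQ.2.2 a with h | h <;> linarith
        · rcases hP.2.2 c with h | h <;> linarith
      have hbd : g b (tl x) = g d (tl x) := by
        refine le_antisymm ?_ ?_
        · rcases hP.2.2 d with h | h <;> linarith
        · rcases hQ.2.2 b with h | h <;> linarith
      simp only [Z, w, r, hgeq a c x hx t ht hac, hgeq b d x hx t ht hbd, hac, hbd,
        hgeqp a c x hx hac, hgeqp b d x hx hbd]
  have hZc : ∀ a b, ContinuousOn (fun q : (Option α → ℝ) × ℝ => Z a b q.1 q.2)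
      ((V ∩ {x | Pat a b x}) ×ˢ Icc 0 1) := by
    intro a b q hq
    have hsub : (V ∩ {x | Pat a b x}) ×ˢ Icc (0 : ℝ) 1 ⊆ V ×ˢ Icc 0 1 :=
      prod_mono inter_subset_left subset_rfl
    have hga : ∀ k, ContinuousWithinAt (fun q : (Option α → ℝ) × ℝ => g k (Y q.1 q.2))
      ((V ∩ {x | Pat a b x}) ×ˢ Icc 0 1) q := fun k =>
      (hgc k).continuousAt.comp_continuousWithinAt ((hYc q (hsub hq)).mono hsub)
    refine conv_cont (hga a) (hga b) ?_ ?_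
    · rintro ⟨x, t⟩ ⟨hx, ht⟩
      exact hwI a b x hx.1 hx.2 t ht
    · intro hne
      have hne2 : g a (tl q.1) ≠ g b (tl q.1) := fun h => hne (hgeq a b q.1 hq.1.1 q.2 hq.2 h)
      have hrc : ContinuousAt (fun q : (Option α → ℝ) × ℝ => r a b q.1) q := by
        have h1 : ContinuousAt (r a b) q.1 := by
          refine ContinuousAt.div ?_ ?_ (sub_ne_zero.2 hne2.symm)
          · exact ((continuous_apply none).sub (hgt a)).continuousAt
          · exact ((hgt b).sub (hgt a)).continuousAt
        exact h1.comp continuous_fst.continuousAt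
      refine ContinuousAt.continuousWithinAt ?_
      by_cases h : g a (tl p) < g b (tl p)
      · simp only [w, if_pos h]
        exact ((continuousAt_const.sub continuous_snd.continuousAt).mul hrc).add
          (continuous_snd.continuousAt.mul continuousAt_const)
      · simp only [w, if_neg h]
        exact hrc
  refine ⟨V, hV, fun x t => oc (Y x t) (Z (pat x).1 (pat x).2 x t), ?_, ?_⟩
  · rw [continuousOn_pi]
    rintro (_ | i)
    · simp only [oc_none]
      have hcov : V ×ˢ Icc (0 : ℝ) 1 ⊆ ⋃ ab : κ × κ, (V ∩ {x | Pat ab.1 ab.2 x}) ×ˢ Icc (0 : ℝ) 1 := by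
        rintro ⟨x, t⟩ ⟨hx, ht⟩
        exact mem_iUnion.2 ⟨pat x, ⟨hx, hpat x hx⟩, ht⟩
      intro q hq
      refine ContinuousWithinAt.mono ?_ hcov
      rw [ContinuousWithinAt, nhdsWithin_iUnion, Filter.tendsto_iSup]
      intro ab
      change ContinuousWithinAt _ _ _
      by_cases hqP : Pat ab.1 ab.2 q.1
      · have hq' : q ∈ (V ∩ {x | Pat ab.1 ab.2 x}) ×ˢ Icc (0 : ℝ) 1 := ⟨⟨hq.1, hqP⟩, hq.2⟩
        refine (hZc ab.1 ab.2 q hq').congr ?_ ?_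
        · rintro ⟨x, t⟩ ⟨hx, ht⟩
          exact hcons _ _ _ _ x hx.1 (hpat x hx.1) hx.2 t ht
        · exact hcons _ _ _ _ q.1 hq.1 (hpat q.1 hq.1) hqP q.2 hq.2
      · have : 𝓝[(V ∩ {x | Pat ab.1 ab.2 x}) ×ˢ Icc (0 : ℝ) 1] q = ⊥ := by
          rw [← notMem_closure_iff_nhdsWithin_eq_bot]
          intro h
          refine hqP ?_
          have h2 : closure ((V ∩ {x | Pat ab.1 ab.2 x}) ×ˢ Icc (0 : ℝ) 1) ⊆
              {q | Pat ab.1 ab.2 q.1} := by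
            refine closure_minimal (fun q hq => hq.1.2) ?_
            exact (hPcl ab.1 ab.2).preimage continuous_fst
          exact h2 h
        rw [ContinuousWithinAt, this]
        exact Filter.tendsto_bot
    · simp only [oc_some]
      exact (continuousOn_pi.1 hYc) i
  · intro x hx
    set a := (pat x).1 with hadef
    set b := (pat x).2 with hbdef
    have hP : Pat a b x := hpat x hx
    refine ⟨?_, ?_, ?_, ?_⟩
    · change oc (Y x 0) (Z a b x 0) = x
      rw [hY0 x hx]
      have : Z a b x 0 = x none := by
        have h0 : w a b x 0 = r a b x := by simp [w]
        simp only [Z, h0, hY0 x hx]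
        by_cases h : g b (tl x) - g a (tl x) = 0
        · rw [h, mul_zero, add_zero]
          exact le_antisymm hP.1 (by linarith [hP.2.1])
        · simp only [r]
          rw [div_mul_cancel₀ _ h]; ring
      rw [this, oc_tl]
    · change oc (Y x 1) (Z a b x 1) = p
      rw [hY1 x hx]
      have : Z a b x 1 = p none := by
        obtain ⟨h1, h2⟩ := hPp a b x hx hP
        simp only [Z, hY1 x hx, w]
        split_ifs with h
        · have h' : g b (tl p) - g a (tl p) ≠ 0 := by linarith
          simp only [r]
          rw [sub_self, zero_mul, zero_add, one_mul, div_mul_cancel₀ _ h']; ring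
        · have : g b (tl p) = g a (tl p) := by linarith
          rw [this, sub_self, mul_zero, add_zero]
          linarith
      rw [this, oc_tl]
    · intro t ht
      have ht' : t ∈ Icc (0 : ℝ) 1 := ⟨ht.1, ht.2.le⟩
      have hl := hYl x hx t ht
      refine Prod.ext ?_ ?_
      · simp only [liftLab, tl_oc]; exact hl
      · funext k
        simp only [liftLab, tl_oc, oc_none]
        by_cases hk : ∃ k, g k (tl x) = x none
        · obtain ⟨k0, hk0⟩ := hk
          rw [hZk a b x hx hP t ht' k0 hk0, ← hk0]
          exact sign_sub_eq (hcmp _ _ _ _ hl) (hcmp _ _ _ _ hl)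
        · push Not at hk
          obtain ⟨h1, h2⟩ := hstrict a b x hP hk
          have hab : g a (Y x t) < g b (Y x t) := (hcmp a b _ _ hl).2 (h1.trans h2)
          have hw : 0 < w a b x t ∧ w a b x t < 1 := by
            have hr1 : 0 < r a b x := div_pos (by linarith) (by linarith)
            have hr2 : r a b x < 1 := by
              simp only [r]; rw [div_lt_one (by linarith)]; linarith
            have hrp := hrI a b p (hPp a b x hx hP).1 (hPp a b x hx hP).2
            simp only [w]
            split_ifs
            · have h3 : 0 < 1 - t := by linarith [ht.2]
              constructor
              · exact add_pos_of_pos_of_nonneg (mul_pos h3 hr1) (mul_nonneg ht.1 hrp.1)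
              · have := mul_lt_mul_of_pos_left hr2 h3
                have := mul_le_mul_of_nonneg_left hrp.2 ht.1
                linarith
            · exact ⟨hr1, hr2⟩
          have hZ1 : g a (Y x t) < Z a b x t := by
            have := mul_pos hw.1 (sub_pos.2 hab)
            simp only [Z]; linarith
          have hZ2 : Z a b x t < g b (Y x t) := by
            have := mul_lt_mul_of_pos_right hw.2 (sub_pos.2 hab)
            simp only [Z]; linarith
          rcases hP.2.2 k with h | h
          · have h5 := hgle k a x hx t ht' h
            rw [sign_pos (by linarith), sign_pos (by linarith)]
          · have h5 := hgle b k x hx t ht' h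
            rw [sign_neg (by linarith), sign_neg (by linarith)]
    · have hYd : ∀ i, DF S fun w : Unit → ℝ => Y x (w ()) i := (hx' _ hx.1).2.2.2
      have hgd : ∀ k, DF S fun w : Unit → ℝ => g k (Y x (w ())) := fun k => DF.comp (hg k) hYd
      refine DF.ocApp hYd ?_
      simp only [Z, w]
      split_ifs
      · have h1 := hgd a
        have h2 := hgd b
        exact DF.add h1 (DF.mul dff (DF.sub h2 h1))
      · exact DF.add (hgd a) (DF.mul dff (DF.sub (hgd b) (hgd a)))

end OM
end strat

section strat2
open Set Topology
namespace OM
variable {S : OMinimalRealExpansion} {α β γ ι κ : Type}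

theorem fin_sup {X : Type*} [TopologicalSpace X] [Finite κ] [Nonempty κ] {g : κ → X → ℝ}
    (hg : ∀ k, Continuous (g k)) :
    ∃ a : X → ℝ, Continuous a ∧ ∀ y c, a y < c ↔ ∀ k, g k y < c := by
  have := Fintype.ofFinite κ
  refine ⟨fun y => Finset.univ.sup' Finset.univ_nonempty fun k => g k y,
    Continuous.finset_sup'_apply Finset.univ_nonempty fun k _ => hg k, fun y c => ?_⟩
  simp [Finset.sup'_lt_iff]

theorem fin_inf {X : Type*} [TopologicalSpace X] [Finite κ] [Nonempty κ] {g : κ → X → ℝ}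
    (hg : ∀ k, Continuous (g k)) :
    ∃ a : X → ℝ, Continuous a ∧ ∀ y c, c < a y ↔ ∀ k, c < g k y := by
  have := Fintype.ofFinite κ
  refine ⟨fun y => Finset.univ.inf' Finset.univ_nonempty fun k => g k y,
    Continuous.finset_inf'_apply Finset.univ_nonempty fun k _ => hg k, fun y c => ?_⟩
  simp [Finset.lt_inf'_iff]

theorem continuous_oc {X : Type*} [TopologicalSpace X] {f : X → α → ℝ} {g : X → ℝ}
    (hf : Continuous f) (hg : Continuous g) : Continuous fun x => oc (f x) (g x) := by
  refine continuous_pi fun o => ?_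
  rcases o with _ | i
  · exact hg
  · exact (continuous_apply i).comp hf

theorem preconn_band {C : Set (α → ℝ)} (hC : IsPreconnected C) {a b : (α → ℝ) → ℝ}
    (ha : Continuous a) (hb : Continuous b) (hab : ∀ y ∈ C, a y < b y) :
    IsPreconnected {x : Option α → ℝ | tl x ∈ C ∧ a (tl x) < x none ∧ x none < b (tl x)} := by
  have h1 : IsPreconnected (C ×ˢ Ioo (0 : ℝ) 1) := hC.prod isPreconnected_Ioo
  have h2 := h1.image (fun q : (α → ℝ) × ℝ => oc q.1 (a q.1 + q.2 * (b q.1 - a q.1)))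
    (continuous_oc continuous_fst (by fun_prop)).continuousOn
  convert h2 using 1
  ext x
  constructor
  · rintro ⟨h3, h4, h5⟩
    have h6 := hab _ h3
    have h7 : 0 < b (tl x) - a (tl x) := by linarith
    refine ⟨(tl x, (x none - a (tl x)) / (b (tl x) - a (tl x))), ⟨h3, ?_, ?_⟩, ?_⟩
    · exact div_pos (by linarith) h7
    · change _ / _ < (1 : ℝ)
      rw [div_lt_one h7]; linarith
    · simp only
      rw [div_mul_cancel₀ _ h7.ne', add_sub_cancel, oc_tl]
  · rintro ⟨⟨y, r⟩, ⟨h3, h4⟩, rfl⟩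
    have h6 := hab _ h3
    have h7 : 0 < b y - a y := by linarith
    simp only [mem_setOf_eq, tl_oc, oc_none]
    refine ⟨h3, ?_, ?_⟩
    · have := mul_pos h4.1 h7; linarith
    · have := mul_lt_mul_of_pos_right h4.2 h7; linarith

theorem LCF_lift [Finite α] [Finite κ] {lab : (α → ℝ) → ι} {g : κ → (α → ℝ) → ℝ}
    (hgc : ∀ k, Continuous (g k))
    (hcmp : ∀ a b x y, lab x = lab y → (g a x < g b x ↔ g a y < g b y))
    {p : Option α → ℝ} (l : ι × (κ → SignType)) (hl : LCF lab l.1 (tl p)) :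
    LCF (liftLab lab g) l p := by
  classical
  obtain ⟨l', s⟩ := l
  intro U hU
  have hgt : ∀ k, Continuous fun x : Option α → ℝ => g k (tl x) := fun k =>
    (hgc k).comp continuous_tl
  have hlab : ∀ x : Option α → ℝ, liftLab lab g x = (l', s) ↔
      lab (tl x) = l' ∧ ∀ k, SignType.sign (x none - g k (tl x)) = s k := by
    intro x
    simp only [liftLab, Prod.mk.injEq, funext_iff]
  by_cases hemp : ∃ x0 : Option α → ℝ, liftLab lab g x0 = (l', s)
  swap
  · exact ⟨univ, Filter.univ_mem, ∅, isPreconnected_empty, fun x _ hx => (hemp ⟨x, hx⟩).elim,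
      fun x hx => hx.elim⟩
  obtain ⟨x0, hx0⟩ := hemp
  rw [hlab] at hx0
  obtain ⟨ε, hε, hbox⟩ := mem_nhds_box.1 hU
  let U0 : Set (α → ℝ) := {y | ∀ i, |y i - tl p i| < ε}
  have hU0 : U0 ∈ 𝓝 (tl p) := mem_nhds_box.2 ⟨ε, hε, fun y hy => hy⟩
  have hUin : ∀ x : Option α → ℝ, tl x ∈ U0 → |x none - p none| < ε → x ∈ U := by
    intro x h1 h2
    refine hbox x ?_
    rintro (_ | i)
    · exact h2
    · exact h1 i
  by_cases hs : ∃ j, s j = 0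
  · obtain ⟨j, hj⟩ := hs
    have hx0j : x0 none = g j (tl x0) := by
      have := hx0.2 j
      rw [hj, sign_eq_zero_iff, sub_eq_zero] at this
      exact this
    have hgr : ∀ x : Option α → ℝ, liftLab lab g x = (l', s) ↔
        lab (tl x) = l' ∧ x none = g j (tl x) := by
      intro x
      rw [hlab]
      refine and_congr_right fun hx => ⟨fun h => ?_, fun h k => ?_⟩
      · have := h j
        rw [hj, sign_eq_zero_iff, sub_eq_zero] at this
        exact this
      · rw [← hx0.2 k, h, hx0j]
        exact sign_sub_eq (hcmp _ _ _ _ (hx.trans hx0.1.symm)) (hcmp _ _ _ _ (hx.trans hx0.1.symm))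
    by_cases hpj : p none = g j (tl p)
    · have hU1 : U0 ∩ {y | |g j y - p none| < ε} ∈ 𝓝 (tl p) := by
        refine Filter.inter_mem hU0 ?_
        have : Continuous fun y => |g j y - p none| := by have := hgc j; fun_prop
        exact this.continuousAt.eventually_lt continuousAt_const (by simpa [hpj] using hε)
      obtain ⟨V, hV, C, hC, h1, h2⟩ := hl _ hU1
      refine ⟨tl ⁻¹' V, continuous_tl.continuousAt.preimage_mem_nhds hV,
        (fun y => oc y (g j y)) '' C, hC.image _ (continuous_oc continuous_id (hgc j)).continuousOn,
        ?_, ?_⟩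
      · intro x hxV hx
        rw [hgr] at hx
        refine ⟨tl x, h1 _ hxV hx.1, ?_⟩
        simp only [← hx.2, oc_tl]
      · rintro _ ⟨y, hy, rfl⟩
        obtain ⟨h3, h4, h5⟩ := h2 y hy
        rw [hgr]
        simp only [tl_oc, oc_none, and_true]
        refine ⟨h3, hUin _ ?_ ?_⟩
        · rw [tl_oc]; exact h4
        · exact h5
    · refine ⟨{x | x none ≠ g j (tl x)}, ?_, ∅, isPreconnected_empty, ?_, fun x hx => hx.elim⟩
      · exact (isOpen_ne_fun (continuous_apply none) (hgt j)).mem_nhds hpj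
      · intro x h1 h2
        exact (h1 ((hgr x).1 h2).2).elim
  · push Not at hs
    have hlab2 : ∀ x : Option α → ℝ, liftLab lab g x = (l', s) ↔
      lab (tl x) = l' ∧ (∀ k, s k = 1 → g k (tl x) < x none) ∧
        ∀ k, s k = -1 → x none < g k (tl x) := by
      intro x
      rw [hlab]
      refine and_congr_right fun hx => ⟨fun h => ⟨fun k hk => ?_, fun k hk => ?_⟩, fun h k => ?_⟩
      · have := h k
        rw [hk, sign_eq_one_iff] at this; linarith
      · have := h k
        rw [hk, sign_eq_neg_one_iff] at this; linarith
      · rcases hk : s k with _ | _ | _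
        · exact absurd hk (hs k)
        · exact sign_neg (sub_neg.2 (h.2 k hk))
        · exact sign_pos (sub_pos.2 (h.1 k hk))
    by_cases hbad : ∃ k, (s k = 1 ∧ p none < g k (tl p)) ∨ (s k = -1 ∧ g k (tl p) < p none)
    · obtain ⟨k, ⟨hk1, hk2⟩ | ⟨hk1, hk2⟩⟩ := hbad
      · refine ⟨{x | x none < g k (tl x)}, ?_, ∅, isPreconnected_empty, ?_, fun x hx => hx.elim⟩
        · exact (isOpen_lt (continuous_apply none) (hgt k)).mem_nhds hk2
        · intro x h1 h2
          exact absurd (((hlab2 x).1 h2).2.1 k hk1) (not_lt.2 (le_of_lt h1))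
      · refine ⟨{x | g k (tl x) < x none}, ?_, ∅, isPreconnected_empty, ?_, fun x hx => hx.elim⟩
        · exact (isOpen_lt (hgt k) (continuous_apply none)).mem_nhds hk2
        · intro x h1 h2
          exact absurd (((hlab2 x).1 h2).2.2 k hk1) (not_lt.2 (le_of_lt h1))
    push Not at hbad
    let lo : Option {k // s k = 1} → (α → ℝ) → ℝ := fun o y => o.elim (p none - ε) fun k => g k y
    let hi : Option {k // s k = -1} → (α → ℝ) → ℝ := fun o y => o.elim (p none + ε) fun k => g k y
    have hloc : ∀ o, Continuous (lo o) := by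
      rintro (_ | k)
      · exact continuous_const
      · exact hgc k
    have hhic : ∀ o, Continuous (hi o) := by
      rintro (_ | k)
      · exact continuous_const
      · exact hgc k
    obtain ⟨a, hac, ha⟩ := fin_sup hloc
    obtain ⟨b, hbc, hb⟩ := fin_inf hhic
    let U1 : Set (α → ℝ) := {y | (∀ k : {k // s k = 1}, g k y < p none + ε) ∧
      ∀ k : {k // s k = -1}, p none - ε < g k y}
    have hU1 : U1 ∈ 𝓝 (tl p) := by
      refine Filter.inter_mem ?_ ?_
      · refine Filter.eventually_all.2 fun k => ?_
        exact (hgc k).continuousAt.eventually_lt continuousAt_const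
          (by linarith [(hbad k).1 k.2])
      · refine Filter.eventually_all.2 fun k => ?_
        exact continuousAt_const.eventually_lt (hgc k).continuousAt
          (by linarith [(hbad k).2 k.2])
    obtain ⟨V, hV, C, hC, h1, h2⟩ := hl _ (Filter.inter_mem hU0 hU1)
    have hab : ∀ y ∈ C, a y < b y := by
      intro y hy
      obtain ⟨h3, h4, h5⟩ := h2 y hy
      rw [ha]
      intro o
      rw [hb]
      intro o'
      rcases o with _ | k <;> rcases o' with _ | k'
      · change p none - ε < p none + ε; linarith
      · exact h5.2 k'
      · exact h5.1 k
      · refine (hcmp _ _ _ _ (h3.trans hx0.1.symm)).2 ?_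
        have h6 := hx0.2 k
        have h7 := hx0.2 k'
        rw [k.2, sign_eq_one_iff] at h6
        rw [k'.2, sign_eq_neg_one_iff] at h7
        linarith
    refine ⟨tl ⁻¹' V ∩ {x | |x none - p none| < ε},
      Filter.inter_mem (continuous_tl.continuousAt.preimage_mem_nhds hV) ?_, _,
      preconn_band hC hac hbc hab, ?_, ?_⟩
    · have : Continuous fun x : Option α → ℝ => |x none - p none| := by fun_prop
      exact this.continuousAt.eventually_lt continuousAt_const (by simpa using hε)
    · rintro x ⟨hxV, hxε⟩ hx
      rw [hlab2] at hx
      have hxε : |x none - p none| < ε := hxε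
      rw [abs_lt] at hxε
      refine ⟨h1 _ hxV hx.1, ?_, ?_⟩
      · rw [ha]
        rintro (_ | k)
        · change p none - ε < _; linarith
        · exact hx.2.1 k k.2
      · rw [hb]
        rintro (_ | k)
        · change _ < p none + ε; linarith
        · exact hx.2.2 k k.2
    · rintro x ⟨hxC, hxa, hxb⟩
      obtain ⟨h3, h4, h5⟩ := h2 _ hxC
      rw [ha] at hxa
      rw [hb] at hxb
      rw [hlab2]
      refine ⟨⟨h3, fun k hk => hxa (some ⟨k, hk⟩), fun k hk => hxb (some ⟨k, hk⟩)⟩,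
        hUin x h4 ?_⟩
      have h6 : p none - ε < x none := hxa none
      have h7 : x none < p none + ε := hxb none
      rw [abs_lt]
      constructor <;> linarith

theorem Strat_lift [Finite α] [Finite κ] {lab : (α → ℝ) → ι} {g : κ → (α → ℝ) → ℝ}
    (hs : Strat S lab) (hg : ∀ k, DF S (g k)) (hgc : ∀ k, Continuous (g k))
    (hgb : ∀ k, ∃ B, ∀ x, |g k x| ≤ B)
    (hcmp : ∀ a b x y, lab x = lab y → (g a x < g b x ↔ g a y < g b y)) :
    Strat S (liftLab lab g) := by
  refine ⟨?_, fun l p => LCF_lift hgc hcmp l (hs.lcf _ _), fun p => ?_⟩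
  · rintro ⟨l', s⟩
    have h1 : DP S fun x : Option α → ℝ => lab (tl x) = l' :=
      DP.mem (A := {x | lab x = l'}) (hs.defn l') fun i => DF.tlApp (DF.coord _)
    have hgd : ∀ k, DF S fun x : Option α → ℝ => g k (tl x) := fun k =>
      DF.comp (hg k) fun i => DF.tlApp (DF.coord _)
    have h2 : ∀ k, DP S fun x : Option α → ℝ => SignType.sign (x none - g k (tl x)) = s k := by
      intro k
      have h3 := hgd k
      rcases hk : s k with _ | _ | _
      · refine (DP.eq (DF.sub (DF.coord none) h3) (DF.const 0)).congr fun x => ?_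
        exact sign_eq_zero_iff.symm
      · refine (DP.lt (DF.sub (DF.coord none) h3) (DF.const 0)).congr fun x => ?_
        exact sign_eq_neg_one_iff.symm
      · refine (DP.lt (DF.const 0) (DF.sub (DF.coord none) h3)).congr fun x => ?_
        exact sign_eq_one_iff.symm
    refine (DP.and h1 (DP.allFin h2)).congr fun x => ?_
    simp only [liftLab, Prod.mk.injEq, funext_iff]
  · choose B hB using hgb
    obtain ⟨M, hM⟩ : ∃ M, (∀ k, B k < M) ∧ |p none| < M := by
      obtain ⟨M1, hM1⟩ := (Set.finite_range B).bddAbove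
      refine ⟨max M1 |p none| + 1, fun k => ?_, ?_⟩
      · have := hM1 (mem_range_self k)
        linarith [le_max_left M1 |p none|]
      · linarith [le_max_right M1 |p none|]
    let g' : κ ⊕ Bool → (α → ℝ) → ℝ := Sum.elim g fun c _ => if c then M else -M
    have hM0 : 0 < M := (abs_nonneg _).trans_lt hM.2
    have hgM : ∀ k x, -M < g k x ∧ g k x < M := fun k x => by
      rw [← abs_lt]; exact (hB k x).trans_lt (hM.1 k)
    have := LC_lift (lab := lab) (g := g') (p := p) ?_ ?_ ?_ (hs.lc _) ?_ ?_
    · obtain ⟨V, hV, H, h1, h2⟩ := this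
      refine ⟨V, hV, H, h1, fun x hx => ?_⟩
      obtain ⟨h3, h4, h5, h6⟩ := h2 x hx
      refine ⟨h3, h4, fun t ht => ?_, h6⟩
      have h7 := h5 t ht
      simp only [liftLab, Prod.mk.injEq] at h7 ⊢
      exact ⟨h7.1, funext fun k => congrFun h7.2 (Sum.inl k)⟩
    · rintro (k | c)
      · exact hg k
      · exact DF.const _
    · rintro (k | c)
      · exact hgc k
      · exact continuous_const
    · rintro (a | a) (b | b) x y hxy
      · exact hcmp a b x y hxy
      · rcases b with _ | _
        · change g a x < -M ↔ g a y < -M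
          constructor <;> intro h <;> linarith [(hgM a x).1, (hgM a y).1]
        · change g a x < M ↔ g a y < M
          exact ⟨fun _ => (hgM a y).2, fun _ => (hgM a x).2⟩
      · rcases a with _ | _
        · change -M < g b x ↔ -M < g b y
          exact ⟨fun _ => (hgM b y).1, fun _ => (hgM b x).1⟩
        · change M < g b x ↔ M < g b y
          constructor <;> intro h <;> linarith [(hgM b x).2, (hgM b y).2]
      · exact Iff.rfl
    · refine ⟨Sum.inr false, ?_⟩
      change -M < _
      exact (abs_lt.1 hM.2).1
    · refine ⟨Sum.inr true, ?_⟩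
      change _ < M
      exact (abs_lt.1 hM.2).2

end OM
end strat2

section strat3
open Set Topology
namespace OM
variable {S : OMinimalRealExpansion} {α β γ ι κ : Type}

theorem Strat.comap [Finite α] [Finite β] {lab : (β → ℝ) → ι} (h : Strat S lab)
    (e : (α → ℝ) ≃ₜ (β → ℝ)) (he : ∀ j, DF S fun x => e x j)
    (he' : ∀ (w : (Unit → ℝ) → β → ℝ), (∀ j, DF S fun t => w t j) →
      ∀ j, DF S fun t => e.symm (w t) j) :
    Strat S fun x => lab (e x) := by
  refine ⟨fun l => DP.mem (A := {x | lab x = l}) (h.defn l) he, fun l p U hU => ?_, fun p => ?_⟩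
  · have hU' : e.symm ⁻¹' U ∈ 𝓝 (e p) := by
      refine e.symm.continuous.continuousAt.preimage_mem_nhds ?_
      rwa [Homeomorph.symm_apply_apply]
    obtain ⟨V, hV, C, hC, h1, h2⟩ := h.lcf l (e p) _ hU'
    refine ⟨e ⁻¹' V, e.continuous.continuousAt.preimage_mem_nhds hV, e.symm '' C,
      hC.image _ e.symm.continuous.continuousOn, fun x hx hl => ⟨e x, h1 _ hx hl, by simp⟩, ?_⟩
    rintro _ ⟨y, hy, rfl⟩
    rw [Homeomorph.apply_symm_apply]
    exact h2 y hy
  · obtain ⟨V, hV, H, h1, h2⟩ := h.lc (e p)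
    refine ⟨e ⁻¹' V, e.continuous.continuousAt.preimage_mem_nhds hV,
      fun x t => e.symm (H (e x) t), ?_, ?_⟩
    · refine e.symm.continuous.comp_continuousOn
        (h1.comp (f := fun q : (α → ℝ) × ℝ => (e q.1, q.2)) ?_ ?_)
      · exact (Continuous.prodMk (e.continuous.comp continuous_fst) continuous_snd).continuousOn
      · rintro ⟨x, t⟩ ⟨hx, ht⟩
        exact ⟨hx, ht⟩
    · intro x hx
      obtain ⟨h3, h4, h5, h6⟩ := h2 _ hx
      refine ⟨?_, ?_, ?_, ?_⟩
      · simp only [h3, Homeomorph.symm_apply_apply]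
      · simp only [h4, Homeomorph.symm_apply_apply]
      · intro t ht
        simp only [Homeomorph.apply_symm_apply]
        exact h5 t ht
      · exact he' _ h6

/-- The stratification property in dimension `α`. -/
def TT (S : OMinimalRealExpansion) (α : Type) : Prop :=
  ∀ (κ : Type) [Finite κ] (A : κ → Set (α → ℝ)), (∀ k, S.DefSet (A k)) →
    (∀ k, ∃ R : ℝ, ∀ x ∈ A k, ∀ i, |x i| ≤ R) →
    ∃ (ι : Type) (_ : Finite ι) (lab : (α → ℝ) → ι), Strat S lab ∧
      ∀ k x y, lab x = lab y → (x ∈ A k ↔ y ∈ A k)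

theorem seg_frontier {X : Type*} [TopologicalSpace X] {A C : Set X} (hC : IsPreconnected C)
    (h : ∀ x ∈ C, x ∉ frontier A) {x y : X} (hx : x ∈ C) (hy : y ∈ C) (hxA : x ∈ A) : y ∈ A := by
  have h1 : C ⊆ interior A ∪ (closure A)ᶜ := by
    intro z hz
    by_cases hzi : z ∈ interior A
    · exact Or.inl hzi
    · exact Or.inr fun hzc => h z hz ⟨hzc, hzi⟩
  have h2 : C ⊆ interior A := by
    refine hC.subset_left_of_subset_union isOpen_interior isClosed_closure.isOpen_compl ?_ h1 ?_
    · rw [Set.disjoint_compl_right_iff_subset]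
      exact interior_subset.trans subset_closure
    · refine ⟨x, hx, ?_⟩
      rcases h1 hx with h3 | h3
      · exact h3
      · exact absurd (subset_closure hxA) h3
  exact interior_subset (h2 hy)

theorem limit_exists [Finite α] {lab : (α → ℝ) → ι} {d : ι} {p : α → ℝ} (hl : LCF lab d p)
    {F : Set (Option α → ℝ)} (hF : IsClosed F) (hfin : ∀ x, (Fib F x).Finite)
    {D : Set (α → ℝ)} (hD : ∀ x, x ∈ D ↔ lab x = d) (hp : p ∈ closure D)
    {ξ : (α → ℝ) → ℝ} (hξ : ContinuousOn ξ D) (hξF : ∀ x ∈ D, oc x (ξ x) ∈ F)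
    {R : ℝ} (hR : ∀ x ∈ D, |ξ x| ≤ R) : ∃ L, Filter.Tendsto ξ (𝓝[D] p) (𝓝 L) := by
  have hne : (𝓝[D] p).NeBot := mem_closure_iff_nhdsWithin_neBot.1 hp
  have hmem : Icc (-R) R ∈ Filter.map ξ (𝓝[D] p) := by
    rw [Filter.mem_map]
    filter_upwards [self_mem_nhdsWithin] with x hx
    exact abs_le.1 (hR x hx)
  obtain ⟨L, hL, hcl⟩ := (isCompact_Icc (a := -R) (b := R)) (Filter.le_principal_iff.2 hmem)
  refine ⟨L, isCompact_Icc.le_nhds_of_unique_clusterPt hmem fun L' _ hcl' => ?_⟩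
  have key : ∀ L1 L2, L1 < L2 → ClusterPt L1 (Filter.map ξ (𝓝[D] p)) →
      ClusterPt L2 (Filter.map ξ (𝓝[D] p)) → False := by
    intro L1 L2 hlt h1 h2
    refine (Set.Ioo_infinite hlt) ((hfin p).subset fun c hc => ?_)
    have hcl : IsClosed {x : α → ℝ | oc x c ∈ F} :=
      hF.preimage (continuous_oc continuous_id continuous_const)
    change p ∈ {x : α → ℝ | oc x c ∈ F}
    rw [← hcl.closure_eq, mem_closure_iff_nhds]
    intro U hU
    obtain ⟨V, hV, C, hC, h3, h4⟩ := hl U hU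
    have hex : ∀ L' : ℝ, ∀ W ∈ 𝓝 L', ClusterPt L' (Filter.map ξ (𝓝[D] p)) → ∃ x ∈ C, ξ x ∈ W := by
      intro L' W hW hc
      have h5 : ξ '' (V ∩ D) ∈ Filter.map ξ (𝓝[D] p) :=
        Filter.image_mem_map (Filter.inter_mem (mem_nhdsWithin_of_mem_nhds hV) self_mem_nhdsWithin)
      obtain ⟨_, hw, x, hx, rfl⟩ := clusterPt_iff_nonempty.1 hc hW h5
      exact ⟨x, h3 x hx.1 ((hD x).1 hx.2), hw⟩
    obtain ⟨x1, hx1, hx1c⟩ := hex L1 (Iio c) (Iio_mem_nhds hc.1) h1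
    obtain ⟨x2, hx2, hx2c⟩ := hex L2 (Ioi c) (Ioi_mem_nhds hc.2) h2
    have hCD : C ⊆ D := fun x hx => (hD x).2 (h4 x hx).1
    have hI := hC.intermediate_value hx1 hx2 (hξ.mono hCD)
    obtain ⟨x, hx, hxc⟩ := hI ⟨le_of_lt hx1c, le_of_lt hx2c⟩
    refine ⟨x, (h4 x hx).2, ?_⟩
    have := hξF x (hCD hx)
    rw [hxc] at this
    exact this
  rcases lt_trichotomy L L' with h | h | h
  · exact (key _ _ h hcl hcl').elim
  · exact h.symm
  · exact (key _ _ h hcl' hcl).elim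

end OM
end strat3

section strat4
open Set Topology
namespace OM
variable {S : OMinimalRealExpansion} {α β γ ι κ : Type}

/-- Covering a bounded closed definable set with finite fibres by graphs of continuous
definable bounded functions. -/
theorem graph_cover [Finite α] (hT : TT S α) {F : Set (Option α → ℝ)} (hF : S.DefSet F)
    (hFc : IsClosed F) (hfin : ∀ x, (Fib F x).Finite) {R : ℝ} (hR : ∀ x ∈ F, ∀ i, |x i| ≤ R) :
    ∃ (J : Type) (_ : Finite J) (f : J → (α → ℝ) → ℝ), (∀ j, DF S (f j)) ∧
      (∀ j, Continuous (f j)) ∧ (∀ j, ∃ B, ∀ x, |f j x| ≤ B) ∧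
      (∀ j, ∃ R', ∀ x, f j x ≠ 0 → ∀ i, |x i| ≤ R') ∧
      ∀ x ∈ F, ∃ j, x none = f j (tl x) := by
  obtain ⟨M, hM⟩ := unif_fin hF hfin
  let ξ : Fin M → (α → ℝ) → ℝ := fun i => sel (Rk F i)
  have hξ : ∀ i, DF S (ξ i) := fun i => df_sel (def_Rk hF i) (Rk_sub F i)
  let dom : Fin M → Set (α → ℝ) := fun i => {x | ∃ y, oc x y ∈ Rk F i}
  have hdom : ∀ i, S.DefSet (dom i) := by
    intro i
    have := def_Rk hF (i : ℕ)
    exact (dfn : DP S fun x : α → ℝ => ∃ y : ℝ, oc x y ∈ Rk F i)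
  have hξF : ∀ i, ∀ x ∈ dom i, oc x (ξ i x) ∈ F := fun i x hx =>
    (sel_mem (A := Rk F i) hx).1
  have hdomR : ∀ i, ∀ x ∈ dom i, ∀ j, |x j| ≤ R := fun i x hx j => hR _ (hξF i x hx) (some j)
  have hξR : ∀ i, ∀ x ∈ dom i, |ξ i x| ≤ R := fun i x hx => hR _ (hξF i x hx) none
  choose ιX hιX X hX1 hX2 hX3 using fun i => pw_cont (hξ i)
  obtain ⟨ι1, hι1, lab1, hs1, hc1⟩ := hT (Σ i, ιX i) (fun q => {x | x ∈ dom q.1 ∧ x ∈ X q.1 q.2})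
    (fun q => DP.and (hdom q.1) (hX1 q.1 q.2)) (fun q => ⟨R, fun x hx => hdomR q.1 x hx.1⟩)
  let D : Fin M × ι1 → Set (α → ℝ) := fun q => {x | lab1 x = q.2 ∧ x ∈ dom q.1}
  have hDd : ∀ q, S.DefSet (D q) := fun q => DP.and (hs1.defn q.2) (hdom q.1)
  have hlim : ∀ q, ∀ p ∈ closure (D q), ∃ L, BL (D q) (ξ q.1) p L := by
    intro q p hp
    have hne : (D q).Nonempty := closure_nonempty_iff.1 ⟨p, hp⟩
    obtain ⟨x0, hx0l, hx0d⟩ := hne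
    obtain ⟨k, hk⟩ := hX2 q.1 x0
    have hfib : ∀ x, lab1 x = q.2 → x ∈ dom q.1 ∧ x ∈ X q.1 k := fun x hx =>
      (hc1 ⟨q.1, k⟩ x0 x (hx0l.trans hx.symm)).1 ⟨hx0d, hk⟩
    obtain ⟨L, hL⟩ := limit_exists (hs1.lcf q.2 p) hFc hfin (D := D q) (ξ := ξ q.1) (R := R)
      (fun x => ⟨fun h => h.1, fun h => ⟨h, (hfib x h).1⟩⟩) hp
      ((hX3 q.1 k).mono fun x hx => (hfib x hx.1).2) (fun x hx => hξF _ _ hx.2)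
      (fun x hx => hξR _ _ hx.2)
    exact ⟨L, BL.of_tendsto hL⟩
  choose f hf1 hf2 hf3 hf4 hf5 using fun q => tietze (hDd q) (R := R)
    (fun x hx => hdomR _ x hx.2) (hξ q.1) (B := R) (fun x hx => hξR _ x hx.2) (hlim q)
  refine ⟨Fin M × ι1, inferInstance, f, hf1, hf2, hf3, hf4, fun x hx => ?_⟩
  rw [← oc_tl x] at hx
  obtain ⟨i, hi, hi2⟩ := Rk_exists (hfin _) hx
  refine ⟨(⟨i, hi.trans_le (hM _)⟩, lab1 (tl x)), ?_⟩
  rw [hf5 (⟨i, hi.trans_le (hM _)⟩, lab1 (tl x)) (tl x) ⟨rfl, ⟨_, hi2⟩⟩]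
  exact (sel_eq (Rk_sub F i _) hi2).symm

theorem TT_core [Finite α] [Finite κ] (hT : TT S α) {A : κ → Set (Option α → ℝ)}
    (hA : ∀ k, S.DefSet (A k)) (hAb : ∀ k, ∃ R : ℝ, ∀ x ∈ A k, ∀ i, |x i| ≤ R)
    (hfin : ∀ x, (Fib (⋃ k, frontier (A k)) x).Finite) :
    ∃ (ι : Type) (_ : Finite ι) (lab : (Option α → ℝ) → ι), Strat S lab ∧
      ∀ k x y, lab x = lab y → (x ∈ A k ↔ y ∈ A k) := by
  obtain ⟨R, hR⟩ : ∃ R : ℝ, ∀ k, ∀ x ∈ A k, ∀ i, |x i| ≤ R := by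
    choose r hr using hAb
    obtain ⟨R, hR⟩ := (Set.finite_range r).bddAbove
    exact ⟨R, fun k x hx i => (hr k x hx i).trans (hR (mem_range_self k))⟩
  set F := ⋃ k, frontier (A k) with hFdef
  have hF : S.DefSet F := by
    refine (DP.exFin (P := fun k x => x ∈ frontier (A k)) fun k => def_frontier (hA k)).congr
      fun x => ?_
    change _ ↔ x ∈ F
    rw [hFdef, mem_iUnion]
  have hFc : IsClosed F := isClosed_iUnion_of_finite fun k => isClosed_frontier
  have hFR : ∀ x ∈ F, ∀ i, |x i| ≤ R := by
    intro x hx i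
    obtain ⟨k, hk⟩ := mem_iUnion.1 hx
    have hcl : IsClosed {x : Option α → ℝ | |x i| ≤ R} :=
      isClosed_le (continuous_apply i).abs continuous_const
    exact closure_minimal (fun x hx => hR k x hx i) hcl (frontier_subset_closure hk)
  obtain ⟨J, hJ, f, hf1, hf2, hf3, hf4, hf5⟩ := graph_cover hT hF hFc hfin hFR
  let B : (J × J) ⊕ (J × J × κ) → Set (α → ℝ) := Sum.elim (fun q => {x | f q.1 x < f q.2 x})
    fun q => {x | oc x ((f q.1 x + f q.2.1 x) / 2) ∈ A q.2.2}
  obtain ⟨ι2, hι2, lab2, hs2, hc2⟩ := hT _ B (by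
      rintro (⟨a, b⟩ | ⟨a, b, k⟩)
      · exact DP.lt (hf1 a) (hf1 b)
      · have h1 := hf1 a
        have h2 := hf1 b
        have h3 := hA k
        exact (dfn : DP S fun x => oc x ((f a x + f b x) / 2) ∈ A k)) (by
      rintro (⟨a, b⟩ | ⟨a, b, k⟩)
      · obtain ⟨R1, h1⟩ := hf4 a
        obtain ⟨R2, h2⟩ := hf4 b
        refine ⟨max R1 R2, fun x hx i => ?_⟩
        have hx : f a x < f b x := hx
        by_cases h0 : f a x = 0
        · exact (h2 x (by rw [h0] at hx; exact hx.ne') i).trans (le_max_right _ _)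
        · exact (h1 x h0 i).trans (le_max_left _ _)
      · exact ⟨R, fun x hx i => hR k _ hx (some i)⟩)
  have hcmp : ∀ a b x y, lab2 x = lab2 y → (f a x < f b x ↔ f a y < f b y) := fun a b x y h =>
    hc2 (Sum.inl (a, b)) x y h
  have hmid : ∀ a b k x y, lab2 x = lab2 y → (oc x ((f a x + f b x) / 2) ∈ A k ↔
    oc y ((f a y + f b y) / 2) ∈ A k) := fun a b k x y h => hc2 (Sum.inr (a, b, k)) x y h
  refine ⟨_, inferInstance, liftLab lab2 f, Strat_lift hs2 hf1 hf2 hf3 hcmp, ?_⟩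
  -- moving vertically
  have hmove : ∀ k, ∀ x' s t, (∀ u ∈ uIcc s t, ∀ j, u ≠ f j x') → (oc x' s ∈ A k → oc x' t ∈ A k) := by
    intro k x' s t hu hs
    have hC : IsPreconnected ((fun u => oc x' u) '' uIcc s t) :=
      isPreconnected_uIcc.image _ (continuous_oc continuous_const continuous_id).continuousOn
    refine seg_frontier hC ?_ ⟨s, left_mem_uIcc, rfl⟩ ⟨t, right_mem_uIcc, rfl⟩ hs
    rintro _ ⟨u, hu2, rfl⟩ hfr
    obtain ⟨j, hj⟩ := hf5 _ (mem_iUnion.2 ⟨k, hfr⟩)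
    simp only [oc_none, tl_oc] at hj
    exact hu u hu2 j hj
  have hmoveq : ∀ k, ∀ x' s t, (∀ u ∈ uIcc s t, ∀ j, u ≠ f j x') → (oc x' s ∈ A k ↔ oc x' t ∈ A k) :=
    fun k x' s t h => ⟨hmove k x' s t h, hmove k x' t s (by rwa [uIcc_comm])⟩
  have hband : ∀ k a b, ∀ x : Option α → ℝ, f a (tl x) < x none → x none < f b (tl x) →
      (∀ j, f j (tl x) ≤ f a (tl x) ∨ f b (tl x) ≤ f j (tl x)) →
      (x ∈ A k ↔ oc (tl x) ((f a (tl x) + f b (tl x)) / 2) ∈ A k) := by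
    intro k a b x h1 h2 h3
    rw [← hmoveq k (tl x) (x none), oc_tl]
    intro u hu j hj
    have h4 : f a (tl x) < u ∧ u < f b (tl x) := by
      rcases mem_uIcc.1 hu with h | h
      · constructor <;> linarith [h.1, h.2]
      · constructor <;> linarith [h.1, h.2]
    rcases h3 j with h | h <;> linarith [h4.1, h4.2]
  have hup : ∀ k, ∀ x : Option α → ℝ, (∀ j, f j (tl x) < x none) → x ∉ A k := by
    intro k x h hx
    rw [← oc_tl x] at hx
    have h2 := hmove k (tl x) (x none) (max (x none) (R + 1)) (fun u hu j hj => by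
      rw [uIcc_of_le (le_max_left _ _)] at hu
      linarith [hu.1, h j]) hx
    have h3 := hR k _ h2 none
    rw [oc_none] at h3
    linarith [le_abs_self (max (x none) (R + 1)), le_max_right (x none) (R + 1)]
  have hdown : ∀ k, ∀ x : Option α → ℝ, (∀ j, x none < f j (tl x)) → x ∉ A k := by
    intro k x h hx
    rw [← oc_tl x] at hx
    have h2 := hmove k (tl x) (x none) (min (x none) (-R - 1)) (fun u hu j hj => by
      rw [uIcc_of_ge (min_le_left _ _)] at hu
      linarith [hu.2, h j]) hx
    have h3 := hR k _ h2 none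
    rw [oc_none] at h3
    linarith [neg_abs_le (min (x none) (-R - 1)), min_le_right (x none) (-R - 1)]
  have main : ∀ k x y, liftLab lab2 f x = liftLab lab2 f y → x ∈ A k → y ∈ A k := by
    intro k x y hxy hx
    simp only [liftLab, Prod.mk.injEq, funext_iff] at hxy
    obtain ⟨hl, hsg⟩ := hxy
    by_cases hj : ∃ j, x none = f j (tl x)
    · obtain ⟨j, hj⟩ := hj
      have hj' := (sign_sub_iff (hsg j)).2.2.1 hj
      have h1 := hmid j j k _ _ hl
      have e : ∀ z : ℝ, (z + z) / 2 = z := fun z => by ring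
      rw [e, e, ← hj, ← hj', oc_tl, oc_tl] at h1
      exact h1.1 hx
    · push Not at hj
      by_cases h1 : ∀ j, f j (tl x) < x none
      · exact (hup k x h1 hx).elim
      by_cases h2 : ∀ j, x none < f j (tl x)
      · exact (hdown k x h2 hx).elim
      push Not at h1 h2
      obtain ⟨j1, hj1⟩ := h1
      obtain ⟨j2, hj2⟩ := h2
      obtain ⟨a, ha, ha2⟩ := Set.exists_max_image {k | f k (tl x) ≤ x none} (fun k => f k (tl x))
        (Set.toFinite _) ⟨j2, hj2⟩
      obtain ⟨b, hb, hb2⟩ := Set.exists_min_image {k | x none ≤ f k (tl x)} (fun k => f k (tl x))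
        (Set.toFinite _) ⟨j1, hj1⟩
      have h3 : ∀ j, f j (tl x) ≤ f a (tl x) ∨ f b (tl x) ≤ f j (tl x) := by
        intro j
        rcases le_total (f j (tl x)) (x none) with h | h
        · exact Or.inl (ha2 j h)
        · exact Or.inr (hb2 j h)
      have ha' : f a (tl x) < x none := lt_of_le_of_ne ha (hj a).symm
      have hb' : x none < f b (tl x) := lt_of_le_of_ne hb (hj b)
      have h4 := (hband k a b x ha' hb' h3).1 hx
      rw [hmid a b k _ _ hl] at h4
      refine (hband k a b y ((sign_sub_iff (hsg a)).2.1.1 ha') ((sign_sub_iff (hsg b)).1.1 hb')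
        fun j => ?_).2 h4
      rcases h3 j with h | h
      · exact Or.inl (not_lt.1 fun h5 => absurd ((hcmp a j _ _ hl).2 h5) (not_lt.2 h))
      · exact Or.inr (not_lt.1 fun h5 => absurd ((hcmp j b _ _ hl).2 h5) (not_lt.2 h))
  exact fun k x y h => ⟨main k x y h, main k y x h.symm⟩

theorem TT_all (S : OMinimalRealExpansion) (α : Type) [Finite α] : TT S α := by
  refine Finite.induction_empty_option (P := fun α => Finite α → TT S α) ?_ ?_ ?_ α inferInstance
  · intro α β e ih hfb κ _ A hA hAb
    have hfa : Finite α := Finite.of_equiv β e.symm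
    obtain ⟨ι, hι, lab, hs, hc⟩ := ih hfa κ (fun k => {x | (fun i => x (e.symm i)) ∈ A k})
      (fun k => DP.reindex (hA k) e.symm) (fun k => by
        obtain ⟨R, hR⟩ := hAb k
        refine ⟨R, fun x hx i => ?_⟩
        simpa using hR _ hx (e i))
    let E : (β → ℝ) ≃ₜ (α → ℝ) :=
      { toFun := fun x i => x (e i)
        invFun := fun x i => x (e.symm i)
        left_inv := fun x => by funext i; simp
        right_inv := fun x => by funext i; simp
        continuous_toFun := continuous_pi fun i => continuous_apply (e i)
        continuous_invFun := continuous_pi fun i => continuous_apply (e.symm i) }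
    refine ⟨ι, hι, fun x => lab (E x), hs.comap E (fun j => DF.coord _) (fun w hw j => hw _), ?_⟩
    intro k x y h
    have h2 := hc k _ _ h
    have e1 : ∀ x : β → ℝ, (fun i => E x (e.symm i)) = x := fun x => E.left_inv x
    change (fun i => E x (e.symm i)) ∈ A k ↔ (fun i => E y (e.symm i)) ∈ A k at h2
    rwa [e1, e1] at h2
  · intro _ κ _ A hA hAb
    refine ⟨Unit, inferInstance, fun _ => (), ⟨fun l => ?_, fun l p U hU => ?_, fun p => ?_⟩,
      fun k x y _ => by rw [Subsingleton.elim x y]⟩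
    · exact (DP.const True).congr fun x => by simp
    · refine ⟨univ, Filter.univ_mem, univ, isPreconnected_univ, fun _ _ _ => mem_univ _,
        fun x _ => ⟨rfl, ?_⟩⟩
      rw [Subsingleton.elim x p]
      exact mem_of_mem_nhds hU
    · refine ⟨univ, Filter.univ_mem, fun x _ => x, continuous_fst.continuousOn, fun x _ =>
        ⟨rfl, Subsingleton.elim _ _, fun _ _ => rfl, fun i => i.elim⟩⟩
  · intro α _ ih _ κ _ A hA hAb
    replace ih : TT S α := ih inferInstance
    have hFd : S.DefSet (⋃ k, frontier (A k)) := by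
      refine (DP.exFin (P := fun k x => x ∈ frontier (A k)) fun k => def_frontier (hA k)).congr
        fun x => ?_
      change _ ↔ x ∈ ⋃ k, frontier (A k)
      rw [mem_iUnion]
    have hFat : ¬ Fat (⋃ k, frontier (A k)) := by
      intro h
      obtain ⟨k, hk⟩ := fat_iUnion (fun k => def_frontier (hA k)) h
      exact not_fat_frontier (hA k) hk
    obtain ⟨P, hP1, hP2, hP3⟩ := good_shear hFd hFat
    obtain ⟨ι, hι, lab, hs, hc⟩ := TT_core (S := S) ih (A := fun k => shear P hP1 ⁻¹' A k)
      (fun k => DP.mem (hA k) (df_shear hP1 hP2 fun j => DF.coord _)) (fun k => by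
        obtain ⟨R, hR⟩ := hAb k
        have hbd : ∀ i, ∃ C, ∀ t ∈ Icc (-R) R, |P t i| ≤ C := by
          intro i
          obtain ⟨C, hC⟩ := (isCompact_Icc (a := -R) (b := R)).exists_bound_of_continuousOn
            (hP1 i).continuousOn
          exact ⟨C, hC⟩
        choose C hC using hbd
        obtain ⟨C', hC'⟩ := (Set.finite_range C).bddAbove
        refine ⟨max R (R + C'), fun x hx o => ?_⟩
        have h1 := hR _ hx
        have hn : |x none| ≤ R := h1 none
        rcases o with _ | i
        · exact hn.trans (le_max_left _ _)
        · have h2 : |x (some i) + P (x none) i| ≤ R := h1 (some i)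
          have h3 := (hC i (x none) (abs_le.1 hn)).trans (hC' (mem_range_self i))
          refine le_trans ?_ (le_max_right _ _)
          rw [abs_le] at h2 h3 ⊢
          constructor <;> linarith) (fun x => by
        refine (hP3 x).subset ?_
        intro t ht
        obtain ⟨k, hk⟩ := mem_iUnion.1 ht
        rw [← Homeomorph.preimage_frontier] at hk
        exact mem_iUnion.2 ⟨k, hk⟩)
    refine ⟨ι, hι, fun x => lab ((shear P hP1).symm x), hs.comap (shear P hP1).symm
      (df_shear_symm hP1 hP2 fun j => DF.coord _) (fun w hw j => df_shear hP1 hP2 hw j), ?_⟩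
    intro k x y h
    have h2 := hc k _ _ h
    change shear P hP1 _ ∈ A k ↔ shear P hP1 _ ∈ A k at h2
    rwa [Homeomorph.apply_symm_apply, Homeomorph.apply_symm_apply] at h2

end OM
end strat4

section paths
open Set Topology
namespace OM
variable {S : OMinimalRealExpansion} {n : ℕ} {c : Set (Fin n → ℝ)}

/-- Local definable conic contractions inside a definable set. -/
theorem loc_contr (hc : S.DefSet c) (p : c) :
    ∃ V ∈ 𝓝 (p : Fin n → ℝ), ∃ H : (Fin n → ℝ) → ℝ → (Fin n → ℝ),
      ContinuousOn (fun q : (Fin n → ℝ) × ℝ => H q.1 q.2) (V ×ˢ Icc 0 1) ∧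
      ∀ x ∈ V, x ∈ c → H x 0 = x ∧ H x 1 = p ∧ (∀ t ∈ Icc (0:ℝ) 1, H x t ∈ c) ∧
        ∀ i, DF S fun w : Unit → ℝ => H x (w ()) i := by
  let A : Unit → Set (Fin n → ℝ) := fun _ =>
    {x | x ∈ c ∧ ∀ i, x i ≤ (p : Fin n → ℝ) i + 1 ∧ (p : Fin n → ℝ) i - 1 ≤ x i}
  have hA : ∀ k, S.DefSet (A k) := fun _ => DP.and hc (DP.allFin fun i =>
    DP.and (DP.le (DF.coord i) (DF.const _)) (DP.le (DF.const _) (DF.coord i)))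
  have hAb : ∀ k, ∃ R : ℝ, ∀ x ∈ A k, ∀ i, |x i| ≤ R := by
    intro _
    refine ⟨(∑ i, |(p : Fin n → ℝ) i|) + 1, fun x hx i => ?_⟩
    have h1 := hx.2 i
    have h2 : |(p : Fin n → ℝ) i| ≤ ∑ i, |(p : Fin n → ℝ) i| :=
      Finset.single_le_sum (f := fun i => |(p : Fin n → ℝ) i|) (fun i _ => abs_nonneg _)
        (Finset.mem_univ i)
    have h3 := abs_le.1 h2
    rw [abs_le]
    constructor <;> linarith [h3.1, h3.2, h1.1, h1.2]
  obtain ⟨ι, _, lab, hs, hl⟩ := TT_all S (Fin n) Unit A hA hAb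
  obtain ⟨V, hV, H, hH, hx⟩ := hs.lc p
  have hW : {x : Fin n → ℝ | ∀ i, x i < (p : Fin n → ℝ) i + 1 ∧ (p : Fin n → ℝ) i - 1 < x i} ∈
      𝓝 (p : Fin n → ℝ) := by
    refine IsOpen.mem_nhds ?_ fun i => ⟨by linarith, by linarith⟩
    simp only [setOf_forall, setOf_and]
    exact isOpen_iInter_of_finite fun i => IsOpen.inter
      (isOpen_lt (continuous_apply i) continuous_const)
      (isOpen_lt continuous_const (continuous_apply i))
  refine ⟨_, Filter.inter_mem hV hW, H, hH.mono (prod_mono inter_subset_left le_rfl),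
    fun x hxV hxc => ?_⟩
  obtain ⟨h0, h1, h2, h3⟩ := hx x hxV.1
  refine ⟨h0, h1, fun t ht => ?_, h3⟩
  rcases ht.2.lt_or_eq with h | rfl
  · exact ((hl () x (H x t) (h2 t ⟨ht.1, h⟩).symm).1
      ⟨hxc, fun i => ⟨(hxV.2 i).1.le, (hxV.2 i).2.le⟩⟩).1
  · rw [h1]; exact p.2

/-- A path with definable parametrization. -/
def Dpath (S : OMinimalRealExpansion) {n : ℕ} {c : Set (Fin n → ℝ)} {x y : c} (γ : Path x y) :
    Prop :=
  ∃ h : ℝ → (Fin n → ℝ), (∀ j, DF S fun w : Unit → ℝ => h (w ()) j) ∧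
    ∀ t : unitInterval, (γ t : Fin n → ℝ) = h t

theorem Dpath.of_const {x y : c} {γ : Path x y} (p : Fin n → ℝ) (h : ∀ t, (γ t : Fin n → ℝ) = p) :
    Dpath S γ :=
  ⟨fun _ => p, fun _ => DF.const _, h⟩

theorem DF.unit_comp {f : ℝ → ℝ} (hf : DF S fun w : Unit → ℝ => f (w ())) {g : ℝ → ℝ}
    (hg : DF S fun w : Unit → ℝ => g (w ())) : DF S fun w : Unit → ℝ => f (g (w ())) :=
  DF.comp hf (e := fun w _ => g (w ())) fun _ => hg

theorem Dpath.trans {x y z : c} {γ : Path x y} {δ : Path y z} (hγ : Dpath S γ)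
    (hδ : Dpath S δ) : Dpath S (γ.trans δ) := by
  obtain ⟨h, hh, h1⟩ := hγ
  obtain ⟨k, hk, k1⟩ := hδ
  refine ⟨fun t => if t ≤ 1 / 2 then h (2 * t) else k (2 * t - 1), fun j => ?_, fun t => ?_⟩
  · have e1 : DF S fun w : Unit → ℝ => 2 * w () := (DF.const 2).mul (DF.coord ())
    have a1 := DF.unit_comp (f := fun t => h t j) (g := fun t => 2 * t) (hh j) e1
    have a2 := DF.unit_comp (f := fun t => k t j) (g := fun t => 2 * t - 1) (hk j)
      (e1.sub (DF.const 1))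
    have a3 : DP S fun w : Unit → ℝ => w () ≤ 1 / 2 := DP.le (DF.coord ()) (DF.const _)
    refine DF.congr (DF.ite a3 a1 a2) fun w => ?_
    beta_reduce
    split_ifs <;> rfl
  · rw [Path.trans_apply]
    beta_reduce
    split_ifs with ht
    · exact h1 _
    · exact k1 _

theorem Dpath.symm {x y : c} {γ : Path x y} (hγ : Dpath S γ) : Dpath S γ.symm := by
  obtain ⟨h, hh, h1⟩ := hγ
  refine ⟨fun t => h (1 - t), fun j => ?_, fun t => ?_⟩
  · exact DF.unit_comp (f := fun t => h t j) (g := fun t => 1 - t) (hh j)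
      ((DF.const 1).sub (DF.coord ()))
  · exact h1 _

theorem Dpath.cast {x y x' y' : c} {γ : Path x y} (hγ : Dpath S γ) (hx : x' = x) (hy : y' = y) :
    Dpath S (γ.cast hx hy) := hγ

theorem local_path {V : Set (Fin n → ℝ)} {p : c} {H : (Fin n → ℝ) → ℝ → (Fin n → ℝ)}
    (hH : ContinuousOn (fun q : (Fin n → ℝ) × ℝ => H q.1 q.2) (V ×ˢ Icc 0 1))
    (hx : ∀ x ∈ V, x ∈ c → H x 0 = x ∧ H x 1 = p ∧ (∀ t ∈ Icc (0:ℝ) 1, H x t ∈ c) ∧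
        ∀ i, DF S fun w : Unit → ℝ => H x (w ()) i)
    {x y : c} (γ : Path x y) (hγ : ∀ t, (γ t : Fin n → ℝ) ∈ V) :
    ∃ δ : Path x y, γ.Homotopic δ ∧ Dpath S δ := by
  have : ContractibleSpace unitInterval :=
    Convex.contractibleSpace (convex_Icc (0:ℝ) 1) ⟨0, by simp⟩
  let G : unitInterval × unitInterval → c := fun q =>
    ⟨H (γ q.1) q.2, (hx _ (hγ q.1) (γ q.1).2).2.2.1 _ q.2.2⟩
  have hG : Continuous G := by
    refine Continuous.subtype_mk ?_ _
    exact hH.comp_continuous (f := fun q : unitInterval × unitInterval =>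
      ((γ q.1 : Fin n → ℝ), (q.2 : ℝ))) (by fun_prop) fun q => ⟨hγ _, q.2.2⟩
  let top : Path ((0, 0) : unitInterval × unitInterval) (1, 0) :=
    ⟨⟨fun t => (t, 0), by fun_prop⟩, rfl, rfl⟩
  let bot : Path ((0, 1) : unitInterval × unitInterval) (1, 1) :=
    ⟨⟨fun t => (t, 1), by fun_prop⟩, rfl, rfl⟩
  let ver : ∀ s : unitInterval, Path ((s, 0) : unitInterval × unitInterval) (s, 1) := fun s =>
    ⟨⟨fun t => (s, t), by fun_prop⟩, rfl, rfl⟩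
  have hom : top.Homotopic ((ver 0).trans (bot.trans (ver 1).symm)) :=
    SimplyConnectedSpace.paths_homotopic _ _
  have hom2 := hom.map ⟨G, hG⟩
  have ex : x = G (0, 0) := by
    apply Subtype.ext
    have := (hx _ (hγ 0) (γ 0).2).1
    simp only [G]
    simpa using this.symm
  have ey : y = G (1, 0) := by
    apply Subtype.ext
    have := (hx _ (hγ 1) (γ 1).2).1
    simp only [G]
    simpa using this.symm
  have hver : ∀ s, Dpath S ((ver s).map hG) := fun s =>
    ⟨H (γ s), (hx _ (hγ s) (γ s).2).2.2.2, fun t => rfl⟩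
  have hbot : Dpath S (bot.map hG) := Dpath.of_const (p : Fin n → ℝ) fun t =>
    (hx _ (hγ t) (γ t).2).2.1
  refine ⟨(((ver 0).trans (bot.trans (ver 1).symm)).map hG).cast ex ey, ?_, ?_⟩
  · have h3 := Path.Homotopic.pathCast hom2 ex ey
    have e : (top.map hG).cast ex ey = γ := by
      ext1
      funext t
      exact Subtype.ext (hx _ (hγ t) (γ t).2).1
    have h4 : ((top.map hG).cast ex ey).Homotopic
      ((((ver 0).trans (bot.trans (ver 1).symm)).map hG).cast ex ey) := h3
    rwa [e] at h4
  · refine Dpath.cast ?_ ex ey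
    rw [Path.map_trans, Path.map_trans]
    exact (hver 0).trans (hbot.trans (hver 1).symm)

theorem global_path (hc : S.DefSet c) {x y : c} (σ : Path x y) :
    ∃ δ : Path x y, σ.Homotopic δ ∧ Dpath S δ := by
  choose V hV H hH hx using fun p : c => loc_contr hc p
  obtain ⟨t, t0, tm, ⟨N, hN⟩, tc⟩ := exists_monotone_Icc_subset_open_cover_unitInterval
    (c := fun p : c => {s : unitInterval | (σ s : Fin n → ℝ) ∈ interior (V p)})
    (fun p => isOpen_interior.preimage (by fun_prop : Continuous fun s => (σ s : Fin n → ℝ)))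
    (fun s _ => mem_iUnion.2 ⟨σ s, mem_interior_iff_mem_nhds.2 (hV _)⟩)
  have key : ∀ m, ∃ q : Path (σ (t 0)) (σ (t m)),
      (σ.subpath (t 0) (t m)).Homotopic q ∧ Dpath S q := by
    intro m
    induction m with
    | zero =>
      exact ⟨Path.refl _, by rw [Path.subpath_self], Dpath.of_const (σ (t 0)) fun _ => rfl⟩
    | succ m ih =>
      obtain ⟨q, hq, hqd⟩ := ih
      obtain ⟨p, hp⟩ := tc m
      obtain ⟨r, hr, hrd⟩ := local_path (hH p) (hx p) (σ.subpath (t m) (t (m + 1))) (fun s => by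
        have h1 : (σ.subpath (t m) (t (m + 1))) s ∈ range (σ.subpath (t m) (t (m + 1))) :=
          mem_range_self s
        rw [Path.range_subpath_of_le _ _ _ (tm m.le_succ)] at h1
        obtain ⟨u, hu, hu2⟩ := h1
        rw [← hu2]
        exact interior_subset (hp hu))
      refine ⟨q.trans r, ?_, hqd.trans hrd⟩
      exact Path.Homotopic.trans
        (Path.Homotopic.symm ⟨Path.Homotopy.subpathTransSubpath σ (t 0) (t m) (t (m + 1))⟩)
        (hq.hcomp hr)
  obtain ⟨q, hq, hqd⟩ := key N
  have tN := hN N le_rfl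
  have ex : x = σ (t 0) := by rw [t0]; simp
  have ey : y = σ (t N) := by rw [tN]; simp
  refine ⟨q.cast ex ey, ?_, hqd.cast ex ey⟩
  have h3 := Path.Homotopic.pathCast hq ex ey
  have e : (σ.subpath (t 0) (t N)).cast ex ey = σ := by
    ext1
    funext s
    have h5 : σ.subpath (t 0) (t N) s = σ.subpath 0 1 s := by rw [← tN, ← t0]
    have h6 : σ.subpath 0 1 s = σ s := by rw [Path.subpath_zero_one]; rfl
    exact h5.trans h6
  rwa [e] at h3

theorem Dpath.graph {x y : c} {σ : Path x y} (h : Dpath S σ) :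
    S.DefSet {v : Unit ⊕ Fin n → ℝ | ∃ t : unitInterval,
        v (Sum.inl ()) = (t : ℝ) ∧ ∀ j, ((σ t : Fin n → ℝ) j = v (Sum.inr j))} := by
  obtain ⟨h, hh, h1⟩ := h
  have a : DP S fun v : Unit ⊕ Fin n → ℝ => (0 ≤ v (Sum.inl ()) ∧ v (Sum.inl ()) ≤ 1) ∧
      ∀ j, h (v (Sum.inl ())) j = v (Sum.inr j) :=
    DP.and (DP.and (DP.le (DF.const _) (DF.coord _)) (DP.le (DF.coord _) (DF.const _)))
      (DP.allFin fun j => DP.eq ((hh j).reindex fun _ => Sum.inl ()) (DF.coord _))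
  refine DP.congr a fun v => ⟨fun ⟨hv, h2⟩ => ⟨⟨_, hv⟩, rfl, fun j => ?_⟩, ?_⟩
  · rw [h1]; exact h2 j
  · rintro ⟨t, ht, h2⟩
    rw [ht]
    exact ⟨t.2, fun j => by rw [← h2 j, h1]⟩

end OM
end paths

/-- In a connected definable group `G ⊆ ℝⁿ` (with its subspace topology),
every continuous path is homotopic relative to its endpoints to a continuous path whose graph
is definable. -/
theorem path_homotopic_to_definable_path
    (St : OMinimalRealExpansion) {n : ℕ} (c : Set (Fin n → ℝ)) [Group c]
    (hdef : IsDefinableGroup St c) [ConnectedSpace c]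
    (x y : c) (σ : Path x y) :
    ∃ σ' : Path x y, σ.Homotopic σ' ∧
      St.DefSet {v : Unit ⊕ Fin n → ℝ | ∃ t : unitInterval,
        v (Sum.inl ()) = (t : ℝ) ∧ ∀ j, ((σ' t : Fin n → ℝ) j = v (Sum.inr j))} := by
  obtain ⟨σ', h1, h2⟩ := OM.global_path hdef.1 σ
  exact ⟨σ', h1, h2.graph⟩
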